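/- arXiv:1509.02141 — 2 statements merged into one kernel-verified Lean document; each statement's English description precedes it below -/
import Mathlib

section
/- Let u be a subharmonic function on the open unit disc 𝔻 that is bounded from above, admitting the representation u(z) = ∫_𝔻 log(|z−ζ|/|1−z·conj(ζ)|) dμ(ζ) − (1/2π)∫₀^{2π} ((1−|z|²)/|e^{iθ}−z|²) dψ(θ) + C, where μ is a positive Borel measure on 𝔻 with ∫_𝔻 (1−|ζ|) dμ(ζ) < ∞, ψ is a finite positive Borel measure on [0,2π), and C ∈ ℝ. Let λ be the complete measure of u, i.e. λ(M) = ∫_{𝔻∩M} (1−|ζ|) dμ(ζ) + ψ(M ∩ ∂𝔻) for Borel sets M ⊆ closure(𝔻). Let γ ∈ (0,1] and p ∈ (1,∞). Then m_p(r,u) = O((1−r)^{γ−1}) as r ↑ 1 if and only if (∫₀^{2π} λ(C(φ,δ))^p dφ)^{1/p} = O(δ^γ) as δ ↓ 0 (for 0 < δ < 1). -/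
open MeasureTheory Complex

/-- The Carleson box `C(φ,δ) = {ζ ∈ closure 𝔻 : |ζ| ≥ 1-δ, |arg ζ - φ| ≤ πδ}`
(the angular condition is expressed via a representative `θ` of the argument,
so that it is `2π`-periodic in `φ`). -/
noncomputable def carlesonBox (φ δ : ℝ) : Set ℂ :=
  {ζ : ℂ | ‖ζ‖ ≤ 1 ∧ 1 - δ ≤ ‖ζ‖ ∧
    ∃ θ : ℝ, |θ - φ| ≤ Real.pi * δ ∧
      ζ = (‖ζ‖ : ℂ) * Complex.exp (θ * Complex.I)}

/-- The `p`-th integral mean `m_p(r,u) = ((1/2π) ∫₀^{2π} |u(re^{iθ})|^p dθ)^{1/p}`. -/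
noncomputable def mpMean (p r : ℝ) (u : ℂ → ℝ) : ℝ :=
  ((1 / (2 * Real.pi)) *
      ∫ θ in (0 : ℝ)..(2 * Real.pi),
        |u ((r : ℂ) * Complex.exp (θ * Complex.I))| ^ p) ^ (1 / p)

namespace CB

lemma norm_id (z ζ : ℂ) : ‖1 - z * (starRingEnd ℂ) ζ‖ ^ 2 =
    ‖z - ζ‖ ^ 2 + (1 - ‖z‖ ^ 2) * (1 - ‖ζ‖ ^ 2) := by
  simp only [← Complex.normSq_eq_norm_sq, Complex.normSq_apply]
  simp
  ring

lemma neglog {z ζ : ℂ} (hz : ‖z‖ < 1) (hζ : ‖ζ‖ < 1) (h : z ≠ ζ) :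
    -Real.log (‖z - ζ‖ / ‖1 - z * (starRingEnd ℂ) ζ‖) =
      (1/2) * Real.log (1 + (1 - ‖z‖ ^ 2) * (1 - ‖ζ‖ ^ 2) / ‖z - ζ‖ ^ 2) := by
  have h1 : 0 < ‖z - ζ‖ := norm_pos_iff.2 (sub_ne_zero.2 h)
  have ha : 0 < 1 - ‖z‖ ^ 2 := by nlinarith [norm_nonneg z]
  have hb : 0 < 1 - ‖ζ‖ ^ 2 := by nlinarith [norm_nonneg ζ]
  have hid := norm_id z ζ
  have h2 : 0 < ‖1 - z * (starRingEnd ℂ) ζ‖ := by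
    rcases (norm_nonneg (1 - z * (starRingEnd ℂ) ζ)).lt_or_eq with h | h
    · exact h
    · rw [← h] at hid
      nlinarith [mul_pos ha hb, sq_nonneg ‖z-ζ‖]
  have : 1 + (1 - ‖z‖ ^ 2) * (1 - ‖ζ‖ ^ 2) / ‖z - ζ‖ ^ 2 =
      ((‖z - ζ‖ / ‖1 - z * (starRingEnd ℂ) ζ‖)⁻¹) ^ 2 := by
    rw [inv_div, div_pow, hid]
    field_simp
  rw [this, Real.log_pow, Real.log_inv]
  push_cast; ring

/-- the unified kernel -/
noncomputable def kR (z ζ : ℂ) : ℝ :=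
  if ‖ζ‖ < 1 then -Real.log (‖z - ζ‖ / ‖1 - z * (starRingEnd ℂ) ζ‖) / (1 - ‖ζ‖)
  else (1 / (2 * Real.pi)) * ((1 - ‖z‖ ^ 2) / ‖ζ - z‖ ^ 2)

lemma neglog_nonneg {z ζ : ℂ} (hz : ‖z‖ < 1) (hζ : ‖ζ‖ < 1) :
    0 ≤ -Real.log (‖z - ζ‖ / ‖1 - z * (starRingEnd ℂ) ζ‖) := by
  by_cases h : z = ζ
  · simp [h]
  rw [neglog hz hζ h]
  have ha : 0 < 1 - ‖z‖ ^ 2 := by nlinarith [norm_nonneg z]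
  have hb : 0 < 1 - ‖ζ‖ ^ 2 := by nlinarith [norm_nonneg ζ]
  have : 0 ≤ (1 - ‖z‖ ^ 2) * (1 - ‖ζ‖ ^ 2) / ‖z - ζ‖ ^ 2 := by positivity
  have := Real.log_nonneg (x := 1 + (1 - ‖z‖ ^ 2) * (1 - ‖ζ‖ ^ 2) / ‖z - ζ‖ ^ 2) (by linarith)
  linarith

lemma kR_nonneg {z ζ : ℂ} (hz : ‖z‖ < 1) : 0 ≤ kR z ζ := by
  unfold kR
  split_ifs with h
  · exact div_nonneg (neglog_nonneg hz h) (by linarith)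
  · have ha : 0 < 1 - ‖z‖ ^ 2 := by nlinarith [norm_nonneg z]
    positivity

lemma kR_upper {z ζ : ℂ} (hz : ‖z‖ < 1) (d : ℝ) (hd : 0 < d) (h : d ≤ ‖z - ζ‖) :
    kR z ζ ≤ 2 * (1 - ‖z‖) / d ^ 2 := by
  have hne : z ≠ ζ := by
    rintro rfl
    simp at h; linarith
  have hpos : 0 < ‖z - ζ‖ := by linarith
  have key : kR z ζ ≤ 2 * (1 - ‖z‖) / ‖z - ζ‖ ^ 2 := by
    unfold kR
    have hz0 := norm_nonneg z
    have hζ0 := norm_nonneg ζ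
    have ha : 0 < 1 - ‖z‖ ^ 2 := by nlinarith [norm_nonneg z]
    split_ifs with hh
    · have hb : 0 < 1 - ‖ζ‖ ^ 2 := by nlinarith [norm_nonneg ζ]
      rw [neglog hz hh hne, div_le_iff₀ (by linarith)]
      have hx : 0 < (1 - ‖z‖ ^ 2) * (1 - ‖ζ‖ ^ 2) / ‖z - ζ‖ ^ 2 := by positivity
      have := Real.log_le_sub_one_of_pos (x := 1 + (1 - ‖z‖ ^ 2) * (1 - ‖ζ‖ ^ 2) / ‖z - ζ‖ ^ 2)
        (by linarith)
      have h3 : (1/2) * ((1 - ‖z‖ ^ 2) * (1 - ‖ζ‖ ^ 2) / ‖z - ζ‖ ^ 2) ≤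
         2 * (1 - ‖z‖) / ‖z - ζ‖ ^ 2 * (1 - ‖ζ‖) := by
        rw [← mul_div_assoc, div_mul_eq_mul_div (2 * (1 - ‖z‖))]
        refine div_le_div_of_nonneg_right ?_ (by positivity)
        have e1 : 1 - ‖z‖ ^ 2 ≤ 2 * (1 - ‖z‖) := by nlinarith
        have e2 : 1 - ‖ζ‖ ^ 2 ≤ 2 * (1 - ‖ζ‖) := by nlinarith
        nlinarith [mul_le_mul e1 e2 hb.le (by linarith)]
      linarith
    · rw [norm_sub_rev ζ z, ← mul_div_assoc]
      gcongr ?_ / _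
      have hpi : 1 / (2 * Real.pi) ≤ 1 := by
        rw [div_le_one (by positivity)]
        linarith [Real.pi_gt_three]
      nlinarith
  refine key.trans ?_
  gcongr

lemma kR_log {z ζ : ℂ} {δ : ℝ} (hδ : 0 < δ) (hz : ‖z‖ = 1 - δ) (h1 : δ / 2 ≤ 1 - ‖ζ‖)
    (h2 : 1 - ‖ζ‖ ≤ 2 * δ) (d : ℝ) (hd : 0 < d) (h : d ≤ ‖z - ζ‖) :
    kR z ζ ≤ (1 / δ) * Real.log (1 + 8 * δ ^ 2 / d ^ 2) := by
  have hne : z ≠ ζ := by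
    rintro rfl
    simp at h; linarith
  have hh : ‖ζ‖ < 1 := by linarith
  have hz1 : ‖z‖ < 1 := by linarith
  have hz0 := norm_nonneg z
  have hζ0 := norm_nonneg ζ
  have ha : 0 < 1 - ‖z‖ ^ 2 := by nlinarith [norm_nonneg z]
  have hb : 0 < 1 - ‖ζ‖ ^ 2 := by nlinarith [norm_nonneg ζ]
  unfold kR
  rw [if_pos hh, neglog hz1 hh hne]
  have hl : Real.log (1 + (1 - ‖z‖ ^ 2) * (1 - ‖ζ‖ ^ 2) / ‖z - ζ‖ ^ 2) ≤
      Real.log (1 + 8 * δ ^ 2 / d ^ 2) := by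
    apply Real.log_le_log (by positivity)
    refine add_le_add le_rfl (div_le_div₀ (by positivity) ?_ (by positivity) (by gcongr))
    have e1 : 1 - ‖z‖ ^ 2 ≤ 2 * δ := by nlinarith
    have e2 : 1 - ‖ζ‖ ^ 2 ≤ 4 * δ := by nlinarith
    nlinarith [mul_le_mul e1 e2 hb.le (by linarith)]
  have hl0 : 0 ≤ Real.log (1 + 8 * δ ^ 2 / d ^ 2) := by
    apply Real.log_nonneg
    have : 0 ≤ 8 * δ ^ 2 / d ^ 2 := by positivity
    linarith
  rw [div_le_iff₀ (by linarith)]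
  calc _ ≤ 1 / 2 * Real.log (1 + 8 * δ ^ 2 / d ^ 2) := by gcongr
    _ = 1 / δ * Real.log (1 + 8 * δ ^ 2 / d ^ 2) * (δ / 2) := by field_simp
    _ ≤ _ := by gcongr

lemma polar (ζ : ℂ) (φ : ℝ) : ∃ θ : ℝ, |θ - φ| ≤ Real.pi ∧
    ζ = (‖ζ‖ : ℂ) * Complex.exp (θ * Complex.I) := by
  refine ⟨toIocMod Real.two_pi_pos (φ - Real.pi) (arg ζ), ?_, ?_⟩
  · have := toIocMod_mem_Ioc Real.two_pi_pos (φ - Real.pi) (arg ζ)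
    rw [abs_le]
    constructor <;> linarith [this.1, this.2]
  · conv_lhs => rw [← Complex.norm_mul_exp_arg_mul_I ζ]
    congr 1
    have := self_sub_toIocDiv_zsmul Real.two_pi_pos (φ - Real.pi) (arg ζ)
    rw [← this]
    push_cast
    rw [zsmul_eq_mul]
    push_cast
    rw [Complex.exp_eq_exp_iff_exists_int]
    exact ⟨toIocDiv Real.two_pi_pos (φ - Real.pi) (arg ζ), by ring⟩

lemma dist_sq (r ρ a b : ℝ) : ‖(r : ℂ) * Complex.exp (a * Complex.I) - ρ * Complex.exp (b * Complex.I)‖ ^ 2 =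
    (r - ρ) ^ 2 + 4 * r * ρ * Real.sin ((a - b) / 2) ^ 2 := by
  rw [← Complex.normSq_eq_norm_sq, Complex.normSq_apply]
  simp only [Complex.sub_re, Complex.sub_im, Complex.re_ofReal_mul, Complex.im_ofReal_mul,
    Complex.exp_ofReal_mul_I_re, Complex.exp_ofReal_mul_I_im]
  have h1 : Real.sin ((a - b) / 2) ^ 2 = (1 - Real.cos (a - b)) / 2 := by
    rw [Real.sin_sq_eq_half_sub]
    ring_nf
  rw [h1, Real.cos_sub]
  linear_combination r ^ 2 * Real.sin_sq_add_cos_sq a + ρ ^ 2 * Real.sin_sq_add_cos_sq b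

lemma dist_lower {r ρ a b : ℝ} (hr : 1/2 ≤ r) (hρ : 1/2 ≤ ρ) (hab : |a - b| ≤ Real.pi) :
    |a - b| / Real.pi ≤ ‖(r : ℂ) * Complex.exp (a * Complex.I) - ρ * Complex.exp (b * Complex.I)‖ := by
  apply le_of_sq_le_sq _ (norm_nonneg _)
  rw [dist_sq]
  have h1 : 2 / Real.pi * (|a - b| / 2) ≤ Real.sin (|a - b| / 2) :=
    Real.mul_le_sin (by positivity) (by linarith)
  have h2 : Real.sin ((a - b) / 2) ^ 2 = Real.sin (|a - b| / 2) ^ 2 := by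
    rcases abs_cases (a - b) with h | h <;> rw [h.1]
    rw [neg_div, Real.sin_neg]; ring
  have h3 : 2 / Real.pi * (|a - b| / 2) = |a - b| / Real.pi := by ring
  rw [h3] at h1
  rw [h2]
  have h4 : (|a - b| / Real.pi) ^ 2 ≤ Real.sin (|a - b| / 2) ^ 2 := by gcongr
  have h5 : 1 ≤ 4 * r * ρ := by nlinarith
  nlinarith [sq_nonneg (r - ρ), sq_nonneg (Real.sin (|a - b| / 2))]

lemma dist_upper {r ρ a b : ℝ} (hr : 0 ≤ r) (hr1 : r ≤ 1) (hρ : 0 ≤ ρ) (hρ1 : ρ ≤ 1) :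
    ‖(r : ℂ) * Complex.exp (a * Complex.I) - ρ * Complex.exp (b * Complex.I)‖ ≤ |r - ρ| + |a - b| := by
  apply le_of_sq_le_sq _ (by positivity)
  rw [dist_sq]
  have h1 : Real.sin ((a - b) / 2) ^ 2 ≤ ((a - b) / 2) ^ 2 := sq_le_sq.2 Real.abs_sin_le_abs
  have h5 : r * ρ ≤ 1 := by nlinarith
  have h6 : 4 * r * ρ * Real.sin ((a - b) / 2) ^ 2 ≤ (a - b) ^ 2 := by
    nlinarith [mul_nonneg hr hρ, sq_nonneg (Real.sin ((a - b) / 2))]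
  nlinarith [sq_abs (r - ρ), sq_abs (a - b), abs_nonneg (r - ρ), abs_nonneg (a - b),
    mul_nonneg (abs_nonneg (r - ρ)) (abs_nonneg (a - b))]

lemma norm_circ {r a : ℝ} (hr : 0 ≤ r) : ‖(r : ℂ) * Complex.exp (a * Complex.I)‖ = r := by
  rw [norm_mul, Complex.norm_exp_ofReal_mul_I]
  simp [abs_of_nonneg hr]

lemma outside {δ t φ s : ℝ} {ζ : ℂ} (hδ : 0 < δ) (hδ1 : δ ≤ 1/8) (ht : 2 * δ ≤ t) (ht1 : t < 1)
    (hs : |s| ≤ δ) (hζ : ‖ζ‖ ≤ 1) (h : ζ ∉ carlesonBox φ t) :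
    t / 4 ≤ ‖((1 - δ : ℝ) : ℂ) * Complex.exp ((φ + s : ℝ) * Complex.I) - ζ‖ := by
  have hn := norm_circ (r := 1 - δ) (a := φ + s) (by linarith)
  have htri := norm_sub_norm_le (((1 - δ : ℝ) : ℂ) * Complex.exp ((φ + s : ℝ) * Complex.I)) ζ
  rw [hn] at htri
  by_cases h1 : ‖ζ‖ < 1 - t
  · linarith
  by_cases h2 : ‖ζ‖ < 1/2
  · linarith
  push Not at h1 h2
  obtain ⟨b, hb, hb'⟩ := polar ζ (φ + s)
  have hb2 : Real.pi * t < |b - φ| := by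
    by_contra hcon
    push Not at hcon
    exact h ⟨hζ, h1, b, hcon, hb'⟩
  have h3 := dist_lower (r := 1 - δ) (ρ := ‖ζ‖) (a := φ + s) (b := b) (by linarith) h2
    (by rwa [abs_sub_comm])
  rw [← hb'] at h3
  refine le_trans ?_ h3
  rw [le_div_iff₀ Real.pi_pos]
  have h4 : |b - φ| ≤ |φ + s - b| + |s| := by
    have := abs_add_le (-(φ + s - b)) s
    rw [abs_neg] at this
    have e : -(φ + s - b) + s = b - φ := by ring
    rwa [e] at this
  nlinarith [Real.pi_gt_three]

lemma kR_lower {δ φ : ℝ} {ζ : ℂ} (hδ : 0 < δ) (hδ1 : δ < 1) (h : ζ ∈ carlesonBox φ δ)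
    (hne : ((1 - δ : ℝ) : ℂ) * Complex.exp (φ * Complex.I) ≠ ζ) :
    1 / (200 * δ) ≤ kR (((1 - δ : ℝ) : ℂ) * Complex.exp (φ * Complex.I)) ζ := by
  obtain ⟨h1, h2, θ, h3, h4⟩ := h
  have hn := norm_circ (r := 1 - δ) (a := φ) (by linarith)
  have hd := dist_upper (r := 1 - δ) (ρ := ‖ζ‖) (a := φ) (b := θ) (by linarith) (by linarith)
    (norm_nonneg _) h1
  rw [← h4] at hd
  set z := ((1 - δ : ℝ) : ℂ) * Complex.exp (φ * Complex.I) with hz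
  have hd5 : ‖z - ζ‖ ≤ 5 * δ := by
    have : |1 - δ - ‖ζ‖| ≤ δ := by
      rw [abs_le]; constructor <;> linarith
    rw [abs_sub_comm] at h3
    have := Real.pi_lt_four
    nlinarith
  have hpos : 0 < ‖z - ζ‖ := norm_pos_iff.2 (sub_ne_zero.2 hne)
  have hsq : ‖z - ζ‖ ^ 2 ≤ 25 * δ ^ 2 := by nlinarith
  have hz1 : ‖z‖ < 1 := by linarith
  have ha : δ ≤ 1 - ‖z‖ ^ 2 := by rw [hn]; nlinarith
  have ha2 : 1 - ‖z‖ ^ 2 ≤ 2 * δ := by rw [hn]; nlinarith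
  unfold kR
  split_ifs with hh
  · have hζ0 := norm_nonneg ζ
    have hb : 1 - ‖ζ‖ ≤ 1 - ‖ζ‖ ^ 2 := by nlinarith
    have hb2 : 1 - ‖ζ‖ ^ 2 ≤ 2 * δ := by nlinarith
    rw [neglog hz1 hh hne, le_div_iff₀ (by linarith)]
    set x := (1 - ‖z‖ ^ 2) * (1 - ‖ζ‖ ^ 2) with hx
    have hxl : δ * (1 - ‖ζ‖) ≤ x := mul_le_mul ha hb (by linarith) (by linarith)
    have hw : 0 < 1 - ‖ζ‖ := by linarith
    have hx0 : 0 < x := lt_of_lt_of_le (by positivity) hxl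
    have hxu : x ≤ 4 * δ ^ 2 := by
      have := mul_le_mul ha2 hb2 (by linarith) (by linarith)
      nlinarith
    have hlog : 1 - (1 + x / ‖z - ζ‖ ^ 2)⁻¹ ≤ Real.log (1 + x / ‖z - ζ‖ ^ 2) :=
      Real.one_sub_inv_le_log_of_pos (by positivity)
    have heq : 1 - (1 + x / ‖z - ζ‖ ^ 2)⁻¹ = x / (‖z - ζ‖ ^ 2 + x) := by
      field_simp
      ring
    have h5 : x / (29 * δ ^ 2) ≤ x / (‖z - ζ‖ ^ 2 + x) := by
      gcongr
      linarith
    have h6 : δ * (1 - ‖ζ‖) / (29 * δ ^ 2) ≤ x / (29 * δ ^ 2) := by gcongr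
    have h7 : 1 / (200 * δ) * (1 - ‖ζ‖) ≤ 1 / 2 * (δ * (1 - ‖ζ‖) / (29 * δ ^ 2)) := by
      have : 1 / 2 * (δ * (1 - ‖ζ‖) / (29 * δ ^ 2)) = 1 / (58 * δ) * (1 - ‖ζ‖) := by
        field_simp; ring
      rw [this]
      gcongr
      norm_num
    linarith
  · rw [norm_sub_rev]
    have h5 : δ / (25 * δ ^ 2) ≤ (1 - ‖z‖ ^ 2) / ‖z - ζ‖ ^ 2 :=
      div_le_div₀ (by linarith) ha (by positivity) hsq
    have h6 : 1 / (2 * 4) ≤ 1 / (2 * Real.pi) := by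
      gcongr
      exact Real.pi_lt_four.le
    calc 1 / (200 * δ) = 1 / (2 * 4) * (δ / (25 * δ ^ 2)) := by field_simp; norm_num
      _ ≤ _ := by gcongr

lemma box_iff {φ t : ℝ} (ht : 0 < t) (ht1 : t < 1) (ζ : ℂ) : ζ ∈ carlesonBox φ t ↔
    ‖ζ‖ ≤ 1 ∧ 1 - t ≤ ‖ζ‖ ∧ ‖ζ‖ * Real.cos (Real.pi * t) ≤ ζ.re * Real.cos φ + ζ.im * Real.sin φ := by
  have aux : ∀ θ : ℝ, ζ = (‖ζ‖ : ℂ) * Complex.exp (θ * Complex.I) →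
      ζ.re * Real.cos φ + ζ.im * Real.sin φ = ‖ζ‖ * Real.cos |θ - φ| := by
    intro θ h
    have hre : ζ.re = ‖ζ‖ * Real.cos θ := by
      conv_lhs => rw [h]
      rw [Complex.re_ofReal_mul, Complex.exp_ofReal_mul_I_re]
    have him : ζ.im = ‖ζ‖ * Real.sin θ := by
      conv_lhs => rw [h]
      rw [Complex.im_ofReal_mul, Complex.exp_ofReal_mul_I_im]
    rw [Real.cos_abs, Real.cos_sub, hre, him]
    ring
  constructor
  · rintro ⟨h1, h2, θ, h3, h4⟩
    refine ⟨h1, h2, ?_⟩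
    rw [aux θ h4]
    gcongr
    exact Real.cos_le_cos_of_nonneg_of_le_pi (abs_nonneg _) (by nlinarith [Real.pi_pos]) h3
  · rintro ⟨h1, h2, h3⟩
    obtain ⟨θ, h4, h5⟩ := polar ζ φ
    refine ⟨h1, h2, θ, ?_, h5⟩
    rw [aux θ h5] at h3
    have h6 : Real.cos (Real.pi * t) ≤ Real.cos |θ - φ| := le_of_mul_le_mul_left h3 (by linarith)
    by_contra hcon
    push Not at hcon
    have := Real.cos_lt_cos_of_nonneg_of_le_pi (by positivity) h4 hcon
    linarith

lemma box_meas {t : ℝ} (ht : 0 < t) (ht1 : t < 1) :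
    MeasurableSet {q : ℝ × ℂ | q.2 ∈ carlesonBox q.1 t} := by
  simp only [box_iff ht ht1]
  have h1 : MeasurableSet {q : ℝ × ℂ | ‖q.2‖ ≤ 1} := measurableSet_le (by fun_prop) (by fun_prop)
  have h2 : MeasurableSet {q : ℝ × ℂ | 1 - t ≤ ‖q.2‖} := measurableSet_le (by fun_prop) (by fun_prop)
  have h3 : MeasurableSet {q : ℝ × ℂ | ‖q.2‖ * Real.cos (Real.pi * t) ≤
      q.2.re * Real.cos q.1 + q.2.im * Real.sin q.1} :=
    measurableSet_le (by fun_prop) (by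
      refine Continuous.measurable ?_
      fun_prop)
  exact h1.inter (h2.inter h3)

end CB
namespace CB
open scoped ENNReal

noncomputable def cA (p : ℝ) : ℝ := 8 ^ p + 4 * (4 * p) ^ p

lemma cA_pos {p : ℝ} (hp : 1 < p) : 0 < cA p := by
  unfold cA; positivity

lemma near_pt {p δ φ s α : ℝ} {ζ : ℂ} (hp : 1 < p) (hδ : 0 < δ) (hδ1 : δ ≤ 1/8)
    (hs : |s| ≤ δ) (hα : |α - φ| ≤ Real.pi * (2 * δ)) (h1 : ‖ζ‖ ≤ 1) (h2 : 1 - 2 * δ ≤ ‖ζ‖)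
    (hζ : ζ = (‖ζ‖ : ℂ) * Complex.exp (α * Complex.I)) (hne : s ≠ α - φ) :
    kR (((1 - δ : ℝ) : ℂ) * Complex.exp ((φ + s : ℝ) * Complex.I)) ζ ^ p ≤
      cA p * δ ^ (-p) * (1 + (δ / |s - (α - φ)|) ^ (1/2 : ℝ)) := by
  have hn := norm_circ (r := 1 - δ) (a := φ + s) (by linarith)
  have hy0 : 0 < |s - (α - φ)| := abs_pos.2 (sub_ne_zero.2 hne)
  have hyb : |s - (α - φ)| ≤ Real.pi := by
    have := abs_sub s (α - φ)
    nlinarith [Real.pi_gt_three]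
  have hyy : φ + s - α = s - (α - φ) := by ring
  have hdl := dist_lower (r := 1 - δ) (ρ := ‖ζ‖) (a := φ + s) (b := α) (by linarith) (by linarith)
    (by rwa [hyy])
  rw [← hζ, hyy] at hdl
  set z := ((1 - δ : ℝ) : ℂ) * Complex.exp ((φ + s : ℝ) * Complex.I) with hz
  set y := |s - (α - φ)| with hy
  have hz1 : ‖z‖ < 1 := by linarith
  have hk0 : 0 ≤ kR z ζ := kR_nonneg hz1
  have hY : 0 ≤ (δ / y) ^ (1/2 : ℝ) := by positivity
  have hδp : 0 < δ ^ (-p) := by positivity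
  by_cases hw : 1 - ‖ζ‖ < δ / 2
  · have htri := norm_sub_norm_le ζ z
    rw [norm_sub_rev] at htri
    have hk := kR_upper (ζ := ζ) hz1 (δ / 2) (by linarith) (by linarith)
    have hk2 : kR z ζ ≤ 8 / δ := by
      refine hk.trans (le_of_eq ?_)
      rw [hn]; field_simp; ring
    calc kR z ζ ^ p ≤ (8 / δ) ^ p := by gcongr
      _ = 8 ^ p * δ ^ (-p) * 1 := by
        rw [Real.div_rpow (by norm_num) hδ.le, Real.rpow_neg hδ.le]; ring
      _ ≤ cA p * δ ^ (-p) * (1 + (δ / y) ^ (1/2 : ℝ)) := by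
        unfold cA
        gcongr
        · have : 0 ≤ 4 * (4 * p) ^ p := by positivity
          linarith
        · linarith
  · push Not at hw
    have hk := kR_log hδ hn hw (by linarith) (y / Real.pi) (by positivity) hdl
    set x := 8 * δ ^ 2 / (y / Real.pi) ^ 2 with hx
    have hx0 : 0 ≤ x := by positivity
    have hp0 : 0 < p := by linarith
    have hxl := Real.log_le_rpow_div (x := 1 + x) (ε := 1 / (4 * p)) (by linarith) (by positivity)
    have hk2 : kR z ζ ≤ (1 / δ) * (4 * p * (1 + x) ^ (1 / (4 * p))) := by
      refine hk.trans ?_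
      gcongr
      refine hxl.trans (le_of_eq ?_)
      field_simp
    have hxy : x ≤ 128 * (δ / y) ^ 2 := by
      have : x = 8 * Real.pi ^ 2 * (δ / y) ^ 2 := by
        rw [hx]; field_simp
      rw [this]
      gcongr
      nlinarith [Real.pi_lt_four, Real.pi_pos]
    have hx4 : (1 + x) ^ (1/4 : ℝ) ≤ 4 * (1 + (δ / y) ^ (1/2 : ℝ)) := by
      have e1 : (1 + x) ^ (1/4 : ℝ) ≤ 1 ^ (1/4 : ℝ) + x ^ (1/4 : ℝ) :=
        Real.rpow_add_le_add_rpow (by norm_num) hx0 (by norm_num) (by norm_num)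
      have e2 : x ^ (1/4 : ℝ) ≤ 4 * (δ / y) ^ (1/2 : ℝ) := by
        calc x ^ (1/4 : ℝ) ≤ (4 ^ 4 * (δ / y) ^ 2) ^ (1/4 : ℝ) := by
              gcongr
              refine hxy.trans ?_
              gcongr
              norm_num
          _ = 4 * (δ / y) ^ (1/2 : ℝ) := by
              rw [Real.mul_rpow (by positivity) (by positivity), ← Real.rpow_natCast,
                ← Real.rpow_mul (by norm_num), ← Real.rpow_natCast, ← Real.rpow_mul (by positivity)]
              norm_num
      rw [Real.one_rpow] at e1
      linarith
    calc kR z ζ ^ p ≤ ((1 / δ) * (4 * p * (1 + x) ^ (1 / (4 * p)))) ^ p := by gcongr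
      _ = δ ^ (-p) * ((4 * p) ^ p * (1 + x) ^ (1/4 : ℝ)) := by
        rw [Real.mul_rpow (by positivity) (by positivity), Real.mul_rpow (by positivity) (by positivity),
          ← Real.rpow_mul (by positivity), one_div, Real.inv_rpow hδ.le, Real.rpow_neg hδ.le]
        congr 3
        field_simp
      _ ≤ δ ^ (-p) * ((4 * p) ^ p * (4 * (1 + (δ / y) ^ (1/2 : ℝ)))) := by gcongr
      _ = 4 * (4 * p) ^ p * δ ^ (-p) * (1 + (δ / y) ^ (1/2 : ℝ)) := by ring
      _ ≤ _ := by
        unfold cA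
        gcongr
        have : (0:ℝ) ≤ 8 ^ p := by positivity
        linarith

lemma sing0 {δ : ℝ} (hδ : 0 < δ) :
    ∫⁻ s in Set.Icc 0 δ, ENNReal.ofReal ((δ / |s|) ^ (1/2 : ℝ)) ≤ ENNReal.ofReal (2 * δ) := by
  rw [setLIntegral_congr Ioc_ae_eq_Icc.symm]
  have hint : IntervalIntegrable (fun s : ℝ => δ ^ (1/2 : ℝ) * s ^ (-(1/2) : ℝ)) volume 0 δ :=
    (intervalIntegral.intervalIntegrable_rpow' (by norm_num)).const_mul _
  have h1 : ∫⁻ s in Set.Ioc 0 δ, ENNReal.ofReal ((δ / |s|) ^ (1/2 : ℝ)) =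
      ∫⁻ s in Set.Ioc 0 δ, ENNReal.ofReal (δ ^ (1/2 : ℝ) * s ^ (-(1/2) : ℝ)) := by
    apply setLIntegral_congr_fun measurableSet_Ioc
    intro s hs
    simp only
    rw [abs_of_pos hs.1, Real.div_rpow hδ.le hs.1.le, Real.rpow_neg hs.1.le]
    rfl
  rw [h1, ← ofReal_integral_eq_lintegral_ofReal]
  · apply ENNReal.ofReal_le_ofReal
    rw [← intervalIntegral.integral_of_le hδ.le, intervalIntegral.integral_const_mul,
      integral_rpow (by left; norm_num)]
    norm_num
    have : δ ^ (1/2 : ℝ) * δ ^ (1/2 : ℝ) = δ := by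
      rw [← Real.rpow_add hδ]; norm_num
    nlinarith
  · exact (intervalIntegrable_iff_integrableOn_Ioc_of_le hδ.le).1 hint
  · filter_upwards [ae_restrict_mem measurableSet_Ioc] with s hs
    have := hs.1
    simp only [Pi.zero_apply]
    positivity

lemma sing1 {δ : ℝ} (hδ : 0 < δ) :
    ∫⁻ s in Set.Icc (-δ) δ, ENNReal.ofReal ((δ / |s|) ^ (1/2 : ℝ)) ≤ ENNReal.ofReal (4 * δ) := by
  have hsub : Set.Icc (-δ) δ ⊆ Set.Icc (-δ) 0 ∪ Set.Icc 0 δ := by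
    intro x hx
    rcases le_total x 0 with h | h
    · exact Or.inl ⟨hx.1, h⟩
    · exact Or.inr ⟨h, hx.2⟩
  refine (lintegral_mono_set hsub).trans ((lintegral_union_le _ _ _).trans ?_)
  have hneg : ∫⁻ s in Set.Icc (-δ) 0, ENNReal.ofReal ((δ / |s|) ^ (1/2 : ℝ)) =
      ∫⁻ s in Set.Icc 0 δ, ENNReal.ofReal ((δ / |s|) ^ (1/2 : ℝ)) := by
    have := (Measure.measurePreserving_neg (volume : Measure ℝ)).setLIntegral_comp_preimage_emb
      (MeasurableEquiv.neg ℝ).measurableEmbedding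
      (fun s => ENNReal.ofReal ((δ / |s|) ^ (1/2 : ℝ))) (Set.Icc 0 δ)
    rw [← this]
    simp [abs_neg]
  rw [hneg]
  have := sing0 hδ
  calc _ ≤ ENNReal.ofReal (2 * δ) + ENNReal.ofReal (2 * δ) := add_le_add this this
    _ = _ := by rw [← ENNReal.ofReal_add (by positivity) (by positivity)]; ring_nf

lemma sing2 {δ : ℝ} (β : ℝ) (hδ : 0 < δ) :
    ∫⁻ s in Set.Icc (-δ) δ, ENNReal.ofReal (1 + (δ / |s - β|) ^ (1/2 : ℝ)) ≤ ENNReal.ofReal (8 * δ) := by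
  set g : ℝ → ℝ≥0∞ := (Set.Icc (-δ) δ).indicator (fun s => ENNReal.ofReal ((δ / |s|) ^ (1/2 : ℝ))) with hg
  have hgm : Measurable g := by
    apply Measurable.indicator _ measurableSet_Icc
    fun_prop
  have h1 : ∀ s, ENNReal.ofReal (1 + (δ / |s - β|) ^ (1/2 : ℝ)) ≤ 2 + g (s - β) := by
    intro s
    by_cases h : s - β ∈ Set.Icc (-δ) δ
    · rw [hg, Set.indicator_of_mem h, ENNReal.ofReal_add (by norm_num) (by positivity)]
      gcongr
      norm_num
    · rw [hg, Set.indicator_of_notMem h, add_zero]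
      have h2 : δ < |s - β| := by
        by_contra hcon
        push Not at hcon
        exact h (abs_le.1 hcon)
      have h3 : (δ / |s - β|) ^ (1/2 : ℝ) ≤ 1 := by
        apply Real.rpow_le_one (by positivity) _ (by norm_num)
        rw [div_le_one (by linarith)]
        exact h2.le
      have : ENNReal.ofReal 2 = 2 := by norm_num
      rw [← this]
      apply ENNReal.ofReal_le_ofReal
      linarith
  calc _ ≤ ∫⁻ s in Set.Icc (-δ) δ, (2 + g (s - β)) := lintegral_mono h1
    _ = 2 * ENNReal.ofReal (2 * δ) + ∫⁻ s in Set.Icc (-δ) δ, g (s - β) := by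
      rw [lintegral_add_left measurable_const, setLIntegral_const, Real.volume_Icc]
      congr 3
      ring
    _ ≤ 2 * ENNReal.ofReal (2 * δ) + ∫⁻ s, g (s - β) := by
      gcongr
      exact Measure.restrict_le_self
    _ = 2 * ENNReal.ofReal (2 * δ) + ∫⁻ s, g s := by rw [lintegral_sub_right_eq_self]
    _ ≤ 2 * ENNReal.ofReal (2 * δ) + ENNReal.ofReal (4 * δ) := by
      gcongr
      rw [hg, lintegral_indicator measurableSet_Icc]
      exact sing1 hδ
    _ = _ := by
      rw [show (2 : ℝ≥0∞) = ENNReal.ofReal 2 by norm_num, ← ENNReal.ofReal_mul (by norm_num),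
        ← ENNReal.ofReal_add (by positivity) (by positivity)]
      ring_nf

/-- kernel on the circle of radius `1 - δ` -/
noncomputable def KK (δ φ : ℝ) (ζ : ℂ) : ℝ≥0∞ :=
  ENNReal.ofReal (kR (((1 - δ : ℝ) : ℂ) * Complex.exp ((φ : ℝ) * Complex.I)) ζ)

lemma kR_meas : Measurable (fun q : ℂ × ℂ => kR q.1 q.2) := by
  unfold kR
  apply Measurable.ite
  · exact measurableSet_lt (by fun_prop) (by fun_prop)
  · have : Measurable (fun q : ℂ × ℂ => ‖1 - q.1 * (starRingEnd ℂ) q.2‖) := by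
      apply Continuous.measurable
      fun_prop
    fun_prop
  · fun_prop

lemma KK_meas (δ : ℝ) : Measurable (fun q : ℝ × ℂ => KK δ q.1 q.2) := by
  unfold KK
  apply Measurable.ennreal_ofReal
  have h : Measurable (fun q : ℝ × ℂ =>
      ((((1 - δ : ℝ) : ℂ) * Complex.exp ((q.1 : ℝ) * Complex.I), q.2) : ℂ × ℂ)) := by
    apply Continuous.measurable
    fun_prop
  exact kR_meas.comp h

lemma near_int {p δ φ : ℝ} {ζ : ℂ} (hp : 1 < p) (hδ : 0 < δ) (hδ1 : δ ≤ 1/8)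
    (hζ : ζ ∈ carlesonBox φ (2 * δ)) :
    ∫⁻ s in Set.Icc (-δ) δ, (KK δ (φ + s) ζ) ^ p ≤ ENNReal.ofReal (8 * cA p * δ ^ (1 - p)) := by
  obtain ⟨h1, h2, α, h3, h4⟩ := hζ
  have hc := cA_pos hp
  calc _ ≤ ∫⁻ s in Set.Icc (-δ) δ, ENNReal.ofReal (cA p * δ ^ (-p)) *
        ENNReal.ofReal (1 + (δ / |s - (α - φ)|) ^ (1/2 : ℝ)) := by
        apply lintegral_mono_ae
        have hnull : ∀ᵐ s ∂(volume.restrict (Set.Icc (-δ) δ)), s ≠ α - φ :=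
          ae_restrict_of_ae (by
            rw [ae_iff]
            simp)
        filter_upwards [ae_restrict_mem measurableSet_Icc, hnull] with s hs hne
        unfold KK
        have hn := norm_circ (r := 1 - δ) (a := φ + s) (by linarith)
        rw [ENNReal.ofReal_rpow_of_nonneg (kR_nonneg (by rw [hn]; linarith)) (by linarith),
          ← ENNReal.ofReal_mul (by positivity)]
        apply ENNReal.ofReal_le_ofReal
        exact near_pt hp hδ hδ1 (abs_le.2 hs) h3 h1 h2 h4 hne
    _ ≤ ENNReal.ofReal (cA p * δ ^ (-p)) * ENNReal.ofReal (8 * δ) := by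
        rw [lintegral_const_mul' _ _ ENNReal.ofReal_ne_top]
        gcongr
        exact sing2 _ hδ
    _ = _ := by
        rw [← ENNReal.ofReal_mul (by positivity)]
        congr 1
        rw [sub_eq_add_neg, Real.rpow_add hδ, Real.rpow_one]
        ring

lemma jensen {α : Type*} [MeasurableSpace α] (ν : Measure α) {p : ℝ} (hp : 1 < p)
    {f : α → ℝ≥0∞} (hf : AEMeasurable f ν) :
    (∫⁻ a, f a ∂ν) ^ p ≤ ν Set.univ ^ (p - 1) * ∫⁻ a, f a ^ p ∂ν := by
  have hpq := Real.HolderConjugate.conjExponent hp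
  have h := ENNReal.lintegral_mul_le_Lp_mul_Lq ν hpq hf (aemeasurable_const (b := (1 : ℝ≥0∞)))
  simp only [Pi.mul_apply, mul_one, ENNReal.one_rpow, lintegral_one] at h
  have hp0 : 0 < p := by linarith
  calc _ ≤ ((∫⁻ a, f a ^ p ∂ν) ^ (1 / p) * ν Set.univ ^ (1 / p.conjExponent)) ^ p := by gcongr
    _ = _ := by
      rw [ENNReal.mul_rpow_of_nonneg _ _ hp0.le, ← ENNReal.rpow_mul, ← ENNReal.rpow_mul, mul_comm]
      congr 2
      · rw [Real.conjExponent]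
        have : p - 1 ≠ 0 := by linarith
        field_simp
      · rw [one_div_mul_cancel hp0.ne', ENNReal.rpow_one]

lemma jensen_sum {p : ℝ} (hp : 1 < p) (b : ℕ → ℝ≥0∞) :
    (∑' n, (2⁻¹ : ℝ≥0∞) ^ n * b n) ^ p ≤ 2 ^ (p - 1) * ∑' n, (2⁻¹ : ℝ≥0∞) ^ n * b n ^ p := by
  have h := jensen ((Measure.count : Measure ℕ).withDensity (fun n => (2⁻¹ : ℝ≥0∞) ^ n)) hp
    (f := b) (Measurable.of_discrete).aemeasurable
  simp only [lintegral_withDensity_eq_lintegral_mul _ (Measurable.of_discrete (f := fun n : ℕ => (2⁻¹ : ℝ≥0∞) ^ n))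
    (Measurable.of_discrete), withDensity_apply _ MeasurableSet.univ, Measure.restrict_univ,
    lintegral_count, Pi.mul_apply] at h
  convert h using 3
  rw [ENNReal.tsum_geometric]
  simp

end CB
namespace CB
open scoped ENNReal

attribute [irreducible] KK

/-- Carleson box, replaced by everything for `t ≥ 1` -/
noncomputable def D (φ t : ℝ) : Set ℂ := if t < 1 then carlesonBox φ t else Set.univ

lemma D_meas {t : ℝ} (ht : 0 < t) : MeasurableSet {q : ℝ × ℂ | q.2 ∈ D q.1 t} := by
  unfold D
  split_ifs with h
  · exact box_meas ht h
  · simp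

lemma D_meas1 {t : ℝ} (ht : 0 < t) (φ : ℝ) : MeasurableSet (D φ t) :=
  measurable_prodMk_left (x := φ) (D_meas ht)

lemma lamD_meas (lam : Measure ℂ) [IsFiniteMeasure lam] {t : ℝ} (ht : 0 < t) :
    Measurable (fun φ => lam (D φ t)) :=
  measurable_measure_prodMk_left (D_meas ht)

noncomputable def FF (lam : Measure ℂ) (δ φ : ℝ) : ℝ≥0∞ := ∫⁻ ζ, KK δ φ ζ ∂lam

lemma FF_meas (lam : Measure ℂ) [IsFiniteMeasure lam] (δ : ℝ) : Measurable (FF lam δ) :=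
  (KK_meas δ).lintegral_prod_right

lemma FF_per (lam : Measure ℂ) (δ : ℝ) : Function.Periodic (FF lam δ) (2 * Real.pi) := by
  intro φ
  unfold FF
  congr 1
  ext ζ
  unfold KK
  congr 3
  push_cast
  rw [add_mul, Complex.exp_periodic]

lemma KK_meas1 (δ φ : ℝ) : Measurable (fun ζ : ℂ => KK δ φ ζ) := by
  have h : Measurable (fun ζ : ℂ => (φ, ζ)) := by fun_prop
  exact Measurable.comp (g := fun q : ℝ × ℂ => KK δ q.1 q.2) (KK_meas δ) h

lemma KK_meas2 (δ φ : ℝ) : Measurable (fun q : ℝ × ℂ => KK δ (φ + q.1) q.2) := by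
  have h : Measurable (fun q : ℝ × ℂ => (φ + q.1, q.2)) := by fun_prop
  exact Measurable.comp (g := fun q : ℝ × ℂ => KK δ q.1 q.2) (KK_meas δ) h

lemma KK_out {δ t φ s : ℝ} {ζ : ℂ} (hδ : 0 < δ) (hδ1 : δ ≤ 1/8) (ht : 2 * δ ≤ t)
    (hs : |s| ≤ δ) (hζ : ‖ζ‖ ≤ 1) (h : ζ ∉ D φ t) :
    KK δ (φ + s) ζ ≤ ENNReal.ofReal (32 * δ / t ^ 2) := by
  unfold D at h
  split_ifs at h with h1
  · unfold KK
    apply ENNReal.ofReal_le_ofReal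
    have hn := norm_circ (r := 1 - δ) (a := φ + s) (by linarith)
    have ht0 : 0 < t := by linarith
    refine (kR_upper (by rw [hn]; linarith) (t / 4) (by linarith)
      (outside hδ hδ1 ht h1 hs hζ h)).trans (le_of_eq ?_)
    rw [hn]; field_simp; ring
  · exact absurd (Set.mem_univ _) h

lemma KK_split {δ φ s : ℝ} {ζ : ℂ} (hδ : 0 < δ) (hδ1 : δ ≤ 1/8)
    (hs : |s| ≤ δ) (hζ : ‖ζ‖ ≤ 1) :
    KK δ (φ + s) ζ ≤ (D φ (2 * δ)).indicator (fun ζ => KK δ (φ + s) ζ) ζ +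
      ∑' n : ℕ, (D φ (2 ^ (n + 2) * δ)).indicator
        (fun _ => ENNReal.ofReal (8 / δ) * ((2⁻¹ : ℝ≥0∞) ^ n * (2⁻¹ : ℝ≥0∞) ^ n)) ζ := by
  classical
  by_cases h0 : ζ ∈ D φ (2 * δ)
  · rw [Set.indicator_of_mem h0]
    exact le_self_add
  have hex : ∃ n : ℕ, ζ ∈ D φ (2 ^ (n + 1) * δ) := by
    obtain ⟨n, hn⟩ := pow_unbounded_of_one_lt (1 / δ) (one_lt_two)
    refine ⟨n, ?_⟩
    unfold D
    rw [if_neg]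
    · trivial
    · push Not
      rw [div_lt_iff₀ hδ] at hn
      rw [pow_succ]
      nlinarith
  have hfind := Nat.find_spec hex
  have hmin := fun m => Nat.find_min hex (m := m)
  obtain ⟨m, hm⟩ : ∃ m, Nat.find hex = m + 1 := by
    apply Nat.exists_eq_succ_of_ne_zero
    intro h
    rw [h] at hfind
    apply h0
    simpa using hfind
  rw [hm] at hfind hmin
  have hout := hmin m (Nat.lt_succ_self m)
  have h2 : (1:ℝ) ≤ 2 ^ m := one_le_pow₀ (by norm_num)
  have hk := KK_out hδ hδ1 (by rw [pow_succ]; nlinarith) hs hζ hout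
  refine le_trans ?_ le_add_self
  refine le_trans ?_ (ENNReal.le_tsum m)
  rw [Set.indicator_of_mem hfind]
  refine hk.trans (le_of_eq ?_)
  have e : (2⁻¹ : ℝ≥0∞) = ENNReal.ofReal (2⁻¹) := by
    rw [ENNReal.ofReal_inv_of_pos (by norm_num)]; norm_num
  rw [e, ← ENNReal.ofReal_pow (by norm_num), ← ENNReal.ofReal_mul (by positivity),
    ← ENNReal.ofReal_mul (by positivity)]
  congr 1
  rw [inv_pow]
  field_simp
  ring

lemma FF_split (lam : Measure ℂ) [IsFiniteMeasure lam] (hsupp : ∀ᵐ ζ ∂lam, ‖ζ‖ ≤ 1)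
    {δ φ s : ℝ} (hδ : 0 < δ) (hδ1 : δ ≤ 1/8) (hs : |s| ≤ δ) :
    FF lam δ (φ + s) ≤ (∫⁻ ζ in D φ (2 * δ), KK δ (φ + s) ζ ∂lam) +
      ENNReal.ofReal (8 / δ) * ∑' n : ℕ, (2⁻¹ : ℝ≥0∞) ^ n *
        ((2⁻¹ : ℝ≥0∞) ^ n * lam (D φ (2 ^ (n + 2) * δ))) := by
  have hm : Measurable (fun ζ => KK δ (φ + s) ζ) := KK_meas1 δ (φ + s)
  have hD : ∀ n : ℕ, MeasurableSet (D φ (2 ^ (n + 2) * δ)) := fun n => D_meas1 (by positivity) φ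
  unfold FF
  refine (lintegral_mono_ae (hsupp.mono fun ζ hζ => KK_split hδ hδ1 hs hζ)).trans (le_of_eq ?_)
  rw [lintegral_add_left (hm.indicator (D_meas1 (by positivity) φ)),
    lintegral_indicator (D_meas1 (by positivity) φ), lintegral_tsum
      (fun n => (measurable_const.indicator (hD n)).aemeasurable), ← ENNReal.tsum_mul_left]
  congr 2
  ext n
  rw [lintegral_indicator (hD n), setLIntegral_const]
  ring

lemma near_F (lam : Measure ℂ) [IsFiniteMeasure lam]
    {p δ φ : ℝ} (hp : 1 < p) (hδ : 0 < δ) (hδ1 : δ ≤ 1/8) :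
    ∫⁻ s in Set.Icc (-δ) δ, (∫⁻ ζ in D φ (2 * δ), KK δ (φ + s) ζ ∂lam) ^ p ≤
      ENNReal.ofReal (8 * cA p * δ ^ (1 - p)) * lam (D φ (2 * δ)) ^ p := by
  have hm : Measurable (fun q : ℝ × ℂ => KK δ (φ + q.1) q.2) :=
    KK_meas2 δ φ
  have hD := D_meas1 (t := 2 * δ) (by positivity) φ
  have hbox : D φ (2 * δ) = carlesonBox φ (2 * δ) := by
    unfold D; rw [if_pos (by linarith)]
  calc _ ≤ ∫⁻ s in Set.Icc (-δ) δ, lam (D φ (2 * δ)) ^ (p - 1) *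
        ∫⁻ ζ in D φ (2 * δ), KK δ (φ + s) ζ ^ p ∂lam := by
        apply lintegral_mono
        intro s
        have := jensen (lam.restrict (D φ (2 * δ))) hp (f := fun ζ => KK δ (φ + s) ζ)
          (KK_meas1 δ (φ + s)).aemeasurable
        simpa using this
    _ = lam (D φ (2 * δ)) ^ (p - 1) * ∫⁻ ζ in D φ (2 * δ), (∫⁻ s in Set.Icc (-δ) δ,
          KK δ (φ + s) ζ ^ p) ∂lam := by
        rw [lintegral_const_mul' _ _ (ENNReal.rpow_ne_top_of_nonneg (by linarith) (measure_ne_top _ _)),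
          lintegral_lintegral_swap]
        exact (hm.pow_const p).aemeasurable
    _ ≤ lam (D φ (2 * δ)) ^ (p - 1) * ∫⁻ ζ in D φ (2 * δ),
          ENNReal.ofReal (8 * cA p * δ ^ (1 - p)) ∂lam := by
        refine mul_le_mul_right ?_ _
        apply setLIntegral_mono' hD
        intro ζ hζ
        rw [hbox] at hζ
        exact near_int hp hδ hδ1 hζ
    _ = _ := by
        rw [setLIntegral_const]
        have : lam (D φ (2 * δ)) ^ p = lam (D φ (2 * δ)) ^ (p - 1) * lam (D φ (2 * δ)) := by
          conv_rhs => rw [← ENNReal.rpow_one (lam (D φ (2 * δ))), ← ENNReal.rpow_mul]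
          rw [← ENNReal.rpow_add_of_nonneg _ _ (by linarith) (by norm_num)]
          congr 1; ring
        rw [this]
        ring

lemma local_F (lam : Measure ℂ) [IsFiniteMeasure lam] (hsupp : ∀ᵐ ζ ∂lam, ‖ζ‖ ≤ 1)
    {p δ φ : ℝ} (hp : 1 < p) (hδ : 0 < δ) (hδ1 : δ ≤ 1/8) :
    ∫⁻ s in Set.Icc (-δ) δ, FF lam δ (φ + s) ^ p ≤
      2 ^ (p - 1) * (ENNReal.ofReal (8 * cA p * δ ^ (1 - p)) * lam (D φ (2 * δ)) ^ p +
        ENNReal.ofReal (2 * 8 ^ p * δ ^ (1 - p)) * (2 ^ (p - 1) * ∑' n : ℕ, (2⁻¹ : ℝ≥0∞) ^ n *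
        ((2⁻¹ : ℝ≥0∞) ^ n * lam (D φ (2 ^ (n + 2) * δ))) ^ p)) := by
  have hm : Measurable (fun q : ℝ × ℂ => KK δ (φ + q.1) q.2) :=
    KK_meas2 δ φ
  have hm2 : Measurable (fun s => ∫⁻ ζ in D φ (2 * δ), KK δ (φ + s) ζ ∂lam) :=
    hm.lintegral_prod_right
  set S := ∑' n : ℕ, (2⁻¹ : ℝ≥0∞) ^ n * ((2⁻¹ : ℝ≥0∞) ^ n * lam (D φ (2 ^ (n + 2) * δ))) with hS
  have h2top : (2 : ℝ≥0∞) ^ (p - 1) ≠ ⊤ := ENNReal.rpow_ne_top_of_nonneg (by linarith) (by norm_num)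
  calc _ ≤ ∫⁻ s in Set.Icc (-δ) δ, 2 ^ (p - 1) * ((∫⁻ ζ in D φ (2 * δ), KK δ (φ + s) ζ ∂lam) ^ p +
        (ENNReal.ofReal (8 / δ) * S) ^ p) := by
        apply setLIntegral_mono' measurableSet_Icc
        intro s hs
        refine le_trans ?_ (ENNReal.rpow_add_le_mul_rpow_add_rpow _ _ hp.le)
        gcongr
        exact FF_split lam hsupp hδ hδ1 (abs_le.2 hs)
    _ = 2 ^ (p - 1) * ((∫⁻ s in Set.Icc (-δ) δ, (∫⁻ ζ in D φ (2 * δ), KK δ (φ + s) ζ ∂lam) ^ p) +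
        (ENNReal.ofReal (8 / δ) * S) ^ p * ENNReal.ofReal (2 * δ)) := by
        rw [lintegral_const_mul' _ _ h2top, lintegral_add_left (hm2.pow_const p), setLIntegral_const,
          Real.volume_Icc]
        congr 5
        ring
    _ ≤ _ := by
        refine mul_le_mul_right (add_le_add ?_ ?_) _
        · exact near_F lam hp hδ hδ1
        · rw [ENNReal.mul_rpow_of_nonneg _ _ (by linarith),
            ENNReal.ofReal_rpow_of_nonneg (by positivity) (by linarith), mul_right_comm,
            ← ENNReal.ofReal_mul (by positivity)]
          refine mul_le_mul' (le_of_eq (congrArg _ ?_)) (jensen_sum hp _)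
          rw [Real.div_rpow (by norm_num) hδ.le, sub_eq_add_neg, Real.rpow_add hδ, Real.rpow_neg hδ.le,
              Real.rpow_one]
          ring

lemma period_avg {f : ℝ → ℝ≥0∞} (hf : Measurable f) (hper : Function.Periodic f (2 * Real.pi)) (δ : ℝ) :
    ∫⁻ φ in Set.Ioc 0 (2 * Real.pi), ∫⁻ s in Set.Icc (-δ) δ, f (φ + s) =
      ENNReal.ofReal (2 * δ) * ∫⁻ φ in Set.Ioc 0 (2 * Real.pi), f φ := by
  rw [lintegral_lintegral_swap]
  · have : ∀ s : ℝ, ∫⁻ φ in Set.Ioc 0 (2 * Real.pi), f (φ + s) = ∫⁻ φ in Set.Ioc 0 (2 * Real.pi), f φ := by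
      intro s
      have h1 := (measurePreserving_add_right (volume : Measure ℝ) s).setLIntegral_comp_preimage_emb
        (measurableEmbedding_addRight s) f (Set.Ioc s (s + 2 * Real.pi))
      have h2 : (fun x => x + s) ⁻¹' (Set.Ioc s (s + 2 * Real.pi)) = Set.Ioc 0 (2 * Real.pi) := by
        ext x
        simp only [Set.mem_preimage, Set.mem_Ioc]
        constructor <;> rintro ⟨a, b⟩ <;> constructor <;> linarith
      rw [h2] at h1
      rw [h1]
      have h3 := (isAddFundamentalDomain_Ioc Real.two_pi_pos s).setLIntegral_eq
        (isAddFundamentalDomain_Ioc Real.two_pi_pos 0) f hper.map_vadd_zmultiples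
      rw [h3, zero_add]
    simp_rw [this]
    rw [setLIntegral_const, Real.volume_Icc, mul_comm]
    congr 2
    ring
  · exact (hf.comp (measurable_fst.add measurable_snd)).aemeasurable

noncomputable def cB (p : ℝ) : ℝ≥0∞ :=
  2 ^ (p - 1) * (4 ^ p * (ENNReal.ofReal (8 * cA p) + ENNReal.ofReal (2 * 8 ^ p) * (2 ^ (p - 1) * 2)))

lemma cB_ne_top {p : ℝ} (hp : 1 < p) : cB p ≠ ⊤ := by
  have h2top : (2 : ℝ≥0∞) ^ (p - 1) ≠ ⊤ := ENNReal.rpow_ne_top_of_nonneg (by linarith) (by norm_num)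
  have h4top : (4 : ℝ≥0∞) ^ p ≠ ⊤ := ENNReal.rpow_ne_top_of_nonneg (by linarith) (by norm_num)
  unfold cB
  finiteness

lemma main_est (lam : Measure ℂ) [IsFiniteMeasure lam] (hsupp : ∀ᵐ ζ ∂lam, ‖ζ‖ ≤ 1)
    {p γ δ : ℝ} (hp : 1 < p) (hγ : 0 < γ) (hγ1 : γ ≤ 1) (hδ : 0 < δ) (hδ1 : δ ≤ 1/8) (K : ℝ≥0∞)
    (hK : ∀ t, 2 * δ ≤ t → ∫⁻ φ in Set.Ioc 0 (2 * Real.pi), lam (D φ t) ^ p ≤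
      K * ENNReal.ofReal (t ^ (γ * p))) :
    ∫⁻ φ in Set.Ioc 0 (2 * Real.pi), FF lam δ φ ^ p ≤
      cB p * K * ENNReal.ofReal (δ ^ ((γ - 1) * p)) := by
  have hp0 : 0 < p := by linarith
  have h2top : (2 : ℝ≥0∞) ^ (p - 1) ≠ ⊤ := ENNReal.rpow_ne_top_of_nonneg (by linarith) (by norm_num)
  set E := ENNReal.ofReal (δ ^ (γ * p)) with hE
  set d := ENNReal.ofReal (δ ^ (1 - p)) with hd
  have hL : ∀ t, 0 < t → Measurable (fun φ => lam (D φ t)) := fun t ht => lamD_meas lam ht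
  have hn : ∀ n : ℕ, ∫⁻ φ in Set.Ioc 0 (2 * Real.pi), ((2⁻¹ : ℝ≥0∞) ^ n * lam (D φ (2 ^ (n + 2) * δ))) ^ p
      ≤ 4 ^ p * (K * E) := by
    intro n
    have h1 : ((2⁻¹ : ℝ≥0∞) ^ n) ^ p = ENNReal.ofReal (((2⁻¹ : ℝ) ^ n) ^ p) := by
      rw [← ENNReal.ofReal_rpow_of_nonneg (by positivity) hp0.le, ENNReal.ofReal_pow (by norm_num),
        ENNReal.ofReal_inv_of_pos (by norm_num)]
      norm_num
    have h2 : (1:ℝ) ≤ 2 ^ n := one_le_pow₀ (by norm_num)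
    calc _ = ENNReal.ofReal (((2⁻¹ : ℝ) ^ n) ^ p) *
          ∫⁻ φ in Set.Ioc 0 (2 * Real.pi), lam (D φ (2 ^ (n + 2) * δ)) ^ p := by
          simp_rw [ENNReal.mul_rpow_of_nonneg _ _ hp0.le]
          rw [h1, lintegral_const_mul' _ _ ENNReal.ofReal_ne_top]
      _ ≤ ENNReal.ofReal (((2⁻¹ : ℝ) ^ n) ^ p) * (K * ENNReal.ofReal ((2 ^ (n + 2) * δ) ^ (γ * p))) := by
          gcongr
          apply hK
          rw [pow_add]
          nlinarith
      _ = K * ENNReal.ofReal (((2⁻¹ : ℝ) ^ n) ^ p * (2 ^ (n + 2) * δ) ^ (γ * p)) := by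
          rw [ENNReal.ofReal_mul (by positivity)]
          ring
      _ ≤ K * ENNReal.ofReal (4 ^ p * δ ^ (γ * p)) := by
          refine mul_le_mul_right (ENNReal.ofReal_le_ofReal ?_) K
          rw [Real.mul_rpow (by positivity) hδ.le, ← mul_assoc]
          refine mul_le_mul_of_nonneg_right ?_ (by positivity)
          have h3 : ((2:ℝ) ^ (n + 2)) ^ (γ * p) ≤ ((2:ℝ) ^ (n + 2)) ^ p := by
            apply Real.rpow_le_rpow_of_exponent_le
            · exact one_le_pow₀ (by norm_num)
            · nlinarith
          calc ((2⁻¹ : ℝ) ^ n) ^ p * ((2:ℝ) ^ (n + 2)) ^ (γ * p)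
              ≤ ((2⁻¹ : ℝ) ^ n) ^ p * ((2:ℝ) ^ (n + 2)) ^ p := by gcongr
            _ = 4 ^ p := by
              rw [← Real.mul_rpow (by positivity) (by positivity)]
              congr 1
              rw [inv_pow]
              field_simp
              ring
      _ = _ := by
          rw [ENNReal.ofReal_mul (by positivity), ← ENNReal.ofReal_rpow_of_nonneg (by norm_num) hp0.le]
          norm_num
          ring
  have h0 : ∫⁻ φ in Set.Ioc 0 (2 * Real.pi), lam (D φ (2 * δ)) ^ p ≤ 4 ^ p * (K * E) := by
    calc _ ≤ K * ENNReal.ofReal ((2 * δ) ^ (γ * p)) := hK _ le_rfl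
      _ ≤ K * ENNReal.ofReal (4 ^ p * δ ^ (γ * p)) := by
          gcongr
          rw [Real.mul_rpow (by positivity) hδ.le]
          gcongr
          calc (2:ℝ) ^ (γ * p) ≤ 2 ^ p := by
                apply Real.rpow_le_rpow_of_exponent_le
                · norm_num
                · nlinarith
            _ ≤ 4 ^ p := by gcongr; norm_num
      _ = _ := by
          rw [ENNReal.ofReal_mul (by positivity), ← ENNReal.ofReal_rpow_of_nonneg (by norm_num) hp0.le]
          norm_num
          ring
  have hcA := cA_pos hp
  have key : ENNReal.ofReal (2 * δ) * ∫⁻ φ in Set.Ioc 0 (2 * Real.pi), FF lam δ φ ^ p ≤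
      cB p * K * (d * E) := by
    have hFm : Measurable (fun φ => FF lam δ φ ^ p) := (FF_meas lam δ).pow_const p
    have hFp : Function.Periodic (fun φ => FF lam δ φ ^ p) (2 * Real.pi) := by
      intro φ
      simp only
      rw [FF_per lam δ φ]
    rw [← period_avg hFm hFp δ]
    calc _ ≤ ∫⁻ φ in Set.Ioc 0 (2 * Real.pi),
        2 ^ (p - 1) * (ENNReal.ofReal (8 * cA p * δ ^ (1 - p)) * lam (D φ (2 * δ)) ^ p +
        ENNReal.ofReal (2 * 8 ^ p * δ ^ (1 - p)) * (2 ^ (p - 1) * ∑' n : ℕ, (2⁻¹ : ℝ≥0∞) ^ n *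
        ((2⁻¹ : ℝ≥0∞) ^ n * lam (D φ (2 ^ (n + 2) * δ))) ^ p)) :=
          lintegral_mono fun φ => local_F lam hsupp hp hδ hδ1
      _ = 2 ^ (p - 1) * (ENNReal.ofReal (8 * cA p * δ ^ (1 - p)) *
          (∫⁻ φ in Set.Ioc 0 (2 * Real.pi), lam (D φ (2 * δ)) ^ p) +
        ENNReal.ofReal (2 * 8 ^ p * δ ^ (1 - p)) * (2 ^ (p - 1) * ∑' n : ℕ, (2⁻¹ : ℝ≥0∞) ^ n *
          ∫⁻ φ in Set.Ioc 0 (2 * Real.pi),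
            ((2⁻¹ : ℝ≥0∞) ^ n * lam (D φ (2 ^ (n + 2) * δ))) ^ p)) := by
          rw [lintegral_const_mul' _ _ h2top, lintegral_add_left, lintegral_const_mul' _ _ ENNReal.ofReal_ne_top,
            lintegral_const_mul' _ _ ENNReal.ofReal_ne_top, lintegral_const_mul' _ _ h2top, lintegral_tsum]
          · congr 5
            ext n
            rw [lintegral_const_mul']
            finiteness
          · intro n
            exact (((hL _ (by positivity)).const_mul _).pow_const p |>.const_mul _).aemeasurable
          · exact ((hL _ (by positivity)).pow_const p).const_mul _
      _ ≤ 2 ^ (p - 1) * (ENNReal.ofReal (8 * cA p * δ ^ (1 - p)) * (4 ^ p * (K * E)) +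
        ENNReal.ofReal (2 * 8 ^ p * δ ^ (1 - p)) * (2 ^ (p - 1) * ∑' n : ℕ, (2⁻¹ : ℝ≥0∞) ^ n *
          (4 ^ p * (K * E)))) := by
          gcongr with n
          exact hn n
      _ = _ := by
          rw [ENNReal.tsum_mul_right, ENNReal.tsum_geometric, ENNReal.one_sub_inv_two, inv_inv,
            ENNReal.ofReal_mul (by positivity), ENNReal.ofReal_mul (p := 2 * 8 ^ p) (by positivity), ← hd, cB]
          ring
  have hδE : ENNReal.ofReal δ * ∫⁻ φ in Set.Ioc 0 (2 * Real.pi), FF lam δ φ ^ p ≤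
      cB p * K * (d * E) := by
    refine le_trans ?_ key
    gcongr
    linarith
  have hfin : d * E = ENNReal.ofReal δ * ENNReal.ofReal (δ ^ ((γ - 1) * p)) := by
    rw [hd, hE, ← ENNReal.ofReal_mul (by positivity), ← ENNReal.ofReal_mul (by positivity)]
    congr 1
    conv_rhs => rw [← Real.rpow_one δ, ← Real.rpow_mul hδ.le]
    rw [← Real.rpow_add hδ, ← Real.rpow_add hδ]
    congr 1
    ring
  rw [hfin, mul_left_comm] at hδE
  exact (ENNReal.mul_le_mul_iff_right (by simpa using hδ) ENNReal.ofReal_ne_top).1 hδE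

end CB
namespace CB
open scoped ENNReal

noncomputable def Gp (μ : Measure ℂ) (z : ℂ) : ℝ≥0∞ :=
  ∫⁻ ζ in Metric.ball (0 : ℂ) 1, ENNReal.ofReal (-Real.log (‖z - ζ‖ / ‖1 - z * (starRingEnd ℂ) ζ‖)) ∂μ

noncomputable def Pp (ψ : Measure ℝ) (z : ℂ) : ℝ≥0∞ :=
  ∫⁻ θ : ℝ, ENNReal.ofReal ((1 / (2 * Real.pi)) *
    ((1 - ‖z‖ ^ 2) / ‖Complex.exp (θ * Complex.I) - z‖ ^ 2)) ∂ψ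

lemma lam_eq (μ : Measure ℂ) (ψ : Measure ℝ) (lam : Measure ℂ)
    (hlam : ∀ M : Set ℂ, MeasurableSet M →
      lam M = (∫⁻ ζ in Metric.ball (0 : ℂ) 1 ∩ M, ENNReal.ofReal (1 - ‖ζ‖) ∂μ) +
        ψ ((fun θ : ℝ => Complex.exp (θ * Complex.I)) ⁻¹' (M ∩ Metric.sphere (0 : ℂ) 1))) :
    lam = (μ.restrict (Metric.ball (0 : ℂ) 1)).withDensity (fun ζ => ENNReal.ofReal (1 - ‖ζ‖)) +
      ψ.map (fun θ : ℝ => Complex.exp (θ * Complex.I)) := by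
  ext M hM
  have he : Measurable (fun θ : ℝ => Complex.exp (θ * Complex.I)) := by
    apply Continuous.measurable
    fun_prop
  rw [hlam M hM, Measure.add_apply, withDensity_apply _ hM, Measure.map_apply he hM,
    Measure.restrict_restrict hM, Set.inter_comm M (Metric.ball (0 : ℂ) 1)]
  have hset : (fun θ : ℝ => Complex.exp (θ * Complex.I)) ⁻¹' (M ∩ Metric.sphere (0 : ℂ) 1) =
      (fun θ : ℝ => Complex.exp (θ * Complex.I)) ⁻¹' M := by
    ext θ
    simp [Complex.norm_exp_ofReal_mul_I]
  rw [hset]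

lemma lam_fin (μ : Measure ℂ) (ψ : Measure ℝ) [IsFiniteMeasure ψ] (lam : Measure ℂ)
    (hμfin : ∫⁻ ζ in Metric.ball (0 : ℂ) 1, ENNReal.ofReal (1 - ‖ζ‖) ∂μ < ⊤)
    (hlam : ∀ M : Set ℂ, MeasurableSet M →
      lam M = (∫⁻ ζ in Metric.ball (0 : ℂ) 1 ∩ M, ENNReal.ofReal (1 - ‖ζ‖) ∂μ) +
        ψ ((fun θ : ℝ => Complex.exp (θ * Complex.I)) ⁻¹' (M ∩ Metric.sphere (0 : ℂ) 1))) :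
    IsFiniteMeasure lam := by
  constructor
  rw [hlam _ MeasurableSet.univ, Set.inter_univ]
  exact ENNReal.add_lt_top.2 ⟨hμfin, measure_lt_top _ _⟩

lemma lam_supp (μ : Measure ℂ) (ψ : Measure ℝ) (lam : Measure ℂ)
    (hlam : ∀ M : Set ℂ, MeasurableSet M →
      lam M = (∫⁻ ζ in Metric.ball (0 : ℂ) 1 ∩ M, ENNReal.ofReal (1 - ‖ζ‖) ∂μ) +
        ψ ((fun θ : ℝ => Complex.exp (θ * Complex.I)) ⁻¹' (M ∩ Metric.sphere (0 : ℂ) 1))) :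
    ∀ᵐ ζ ∂lam, ‖ζ‖ ≤ 1 := by
  rw [ae_iff, hlam _ (by
    simp only [not_le]
    exact measurableSet_lt (by fun_prop) (by fun_prop))]
  have h1 : Metric.ball (0 : ℂ) 1 ∩ {a | ¬‖a‖ ≤ 1} = ∅ := by
    ext x
    simp
    intro h; exact h.le
  have h2 : {a : ℂ | ¬‖a‖ ≤ 1} ∩ Metric.sphere (0 : ℂ) 1 = ∅ := by
    ext x
    simp
    intro h h'; linarith
  rw [h1, h2]
  simp

lemma kRint (μ : Measure ℂ) (ψ : Measure ℝ) (lam : Measure ℂ)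
    (hlam : ∀ M : Set ℂ, MeasurableSet M →
      lam M = (∫⁻ ζ in Metric.ball (0 : ℂ) 1 ∩ M, ENNReal.ofReal (1 - ‖ζ‖) ∂μ) +
        ψ ((fun θ : ℝ => Complex.exp (θ * Complex.I)) ⁻¹' (M ∩ Metric.sphere (0 : ℂ) 1))) (z : ℂ) :
    ∫⁻ ζ, ENNReal.ofReal (kR z ζ) ∂lam = Gp μ z + Pp ψ z := by
  have hk : Measurable (fun ζ => ENNReal.ofReal (kR z ζ)) := by
    have h : Measurable (fun ζ : ℂ => (z, ζ)) := by fun_prop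
    exact (kR_meas.comp h).ennreal_ofReal
  have he : Measurable (fun θ : ℝ => Complex.exp (θ * Complex.I)) := by
    apply Continuous.measurable
    fun_prop
  rw [lam_eq μ ψ lam hlam, lintegral_add_measure, lintegral_withDensity_eq_lintegral_mul _ (by fun_prop) hk,
    lintegral_map hk he]
  congr 1
  · apply setLIntegral_congr_fun Metric.isOpen_ball.measurableSet
    intro ζ hζ
    have hζ1 : ‖ζ‖ < 1 := by simpa using hζ
    simp only [Pi.mul_apply]
    rw [← ENNReal.ofReal_mul (by linarith)]
    congr 1
    unfold kR
    rw [if_pos hζ1]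
    have : 1 - ‖ζ‖ ≠ 0 := by linarith
    field_simp
  · apply lintegral_congr
    intro θ
    unfold kR
    rw [if_neg (by rw [Complex.norm_exp_ofReal_mul_I]; norm_num)]

lemma u_eq (u : ℂ → ℝ) (μ : Measure ℂ) (ψ : Measure ℝ) (C : ℝ) (z : ℂ) (hz : ‖z‖ < 1)
    (hrep : u z = (∫ ζ in Metric.ball (0 : ℂ) 1,
          Real.log (‖z - ζ‖ / ‖1 - z * (starRingEnd ℂ) ζ‖) ∂μ) -
        (1 / (2 * Real.pi)) *
          (∫ θ, (1 - ‖z‖ ^ 2) / ‖Complex.exp (θ * Complex.I) - z‖ ^ 2 ∂ψ)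
        + C) : u z = C - (Gp μ z).toReal - (Pp ψ z).toReal := by
  rw [hrep, ← integral_const_mul]
  have h1 : ∫ ζ in Metric.ball (0 : ℂ) 1, Real.log (‖z - ζ‖ / ‖1 - z * (starRingEnd ℂ) ζ‖) ∂μ =
      -(Gp μ z).toReal := by
    have := integral_neg (μ := μ.restrict (Metric.ball (0 : ℂ) 1))
      (fun ζ => Real.log (‖z - ζ‖ / ‖1 - z * (starRingEnd ℂ) ζ‖))
    rw [eq_neg_iff_add_eq_zero, ← neg_eq_iff_add_eq_zero, ← this, Gp]
    apply integral_eq_lintegral_of_nonneg_ae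
    · filter_upwards [ae_restrict_mem Metric.isOpen_ball.measurableSet] with ζ hζ
      exact neglog_nonneg hz (by simpa using hζ)
    · apply Measurable.aestronglyMeasurable
      have : Measurable (fun ζ : ℂ => ‖1 - z * (starRingEnd ℂ) ζ‖) := by
        apply Continuous.measurable
        fun_prop
      fun_prop
  have h2 : ∫ θ : ℝ, (1 / (2 * Real.pi)) * ((1 - ‖z‖ ^ 2) / ‖Complex.exp (θ * Complex.I) - z‖ ^ 2) ∂ψ =
      (Pp ψ z).toReal := by
    rw [Pp]
    apply integral_eq_lintegral_of_nonneg_ae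
    · filter_upwards with θ
      have ha : 0 < 1 - ‖z‖ ^ 2 := by nlinarith [norm_nonneg z]
      simp only [Pi.zero_apply]
      positivity
    · apply Measurable.aestronglyMeasurable
      have : Measurable (fun θ : ℝ => ‖Complex.exp (θ * Complex.I) - z‖) := by
        apply Continuous.measurable
        fun_prop
      fun_prop
  rw [h1, h2]
  ring

/-- no mass at the points of the circle, almost everywhere -/
lemma ae_noatom (lam : Measure ℂ) [IsFiniteMeasure lam] {δ : ℝ} (hδ1 : δ < 1) :
    ∀ᵐ φ : ℝ, lam {((1 - δ : ℝ) : ℂ) * Complex.exp (φ * Complex.I)} = 0 := by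
  have hms : MeasurableSet {q : ℝ × ℂ | ((1 - δ : ℝ) : ℂ) * Complex.exp (q.1 * Complex.I) = q.2} := by
    apply IsClosed.measurableSet
    exact isClosed_eq (by fun_prop) (by fun_prop)
  have h0 : ((volume : Measure ℝ).prod lam)
      {q : ℝ × ℂ | ((1 - δ : ℝ) : ℂ) * Complex.exp (q.1 * Complex.I) = q.2} = 0 := by
    rw [Measure.prod_apply_symm hms]
    rw [lintegral_eq_zero_iff' (measurable_measure_prodMk_right hms).aemeasurable]
    filter_upwards with ζ
    apply Set.Countable.measure_zero
    by_cases hex : ∃ φ₀ : ℝ, ((1 - δ : ℝ) : ℂ) * Complex.exp (φ₀ * Complex.I) = ζ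
    · obtain ⟨φ₀, h₀⟩ := hex
      refine (Set.countable_range (fun n : ℤ => φ₀ + n * (2 * Real.pi))).mono ?_
      intro φ hφ
      have hφ' : ((1 - δ : ℝ) : ℂ) * Complex.exp (φ * Complex.I) = ζ := hφ
      rw [← h₀] at hφ'
      have hne : ((1 - δ : ℝ) : ℂ) ≠ 0 := by
        rw [Complex.ofReal_ne_zero]; linarith
      have h2 := mul_left_cancel₀ hne hφ'
      rw [Complex.exp_eq_exp_iff_exists_int] at h2
      obtain ⟨n, hn⟩ := h2
      refine ⟨n, ?_⟩
      have h3 : (φ : ℂ) = φ₀ + n * (2 * Real.pi) := by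
        apply mul_right_cancel₀ Complex.I_ne_zero
        rw [hn]; ring
      simp only
      exact_mod_cast h3.symm
    · have : ((fun x : ℝ => (x, ζ)) ⁻¹'
          {q : ℝ × ℂ | ((1 - δ : ℝ) : ℂ) * Complex.exp (q.1 * Complex.I) = q.2}) = ∅ := by
        ext φ
        simp only [Set.mem_preimage, Set.mem_ofPred_eq, Set.mem_empty_iff_false, iff_false]
        intro h
        exact hex ⟨φ, h⟩
      rw [this]
      exact Set.countable_empty
  have h1 := Measure.measure_ae_null_of_prod_null h0
  filter_upwards [h1] with φ hφ
  have hset : {((1 - δ : ℝ) : ℂ) * Complex.exp (φ * Complex.I)} = (Prod.mk φ ⁻¹'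
      {q : ℝ × ℂ | ((1 - δ : ℝ) : ℂ) * Complex.exp (q.1 * Complex.I) = q.2}) := by
    ext ζ
    simp [eq_comm]
  rw [hset]
  exact hφ

lemma FF_lower (lam : Measure ℂ) [IsFiniteMeasure lam] {δ : ℝ} (hδ : 0 < δ) (hδ1 : δ < 1) :
    ∀ᵐ φ : ℝ, lam (carlesonBox φ δ) ≤ ENNReal.ofReal (200 * δ) * FF lam δ φ := by
  filter_upwards [ae_noatom lam hδ1] with φ hφ
  have hbm : MeasurableSet (carlesonBox φ δ) := by
    have := D_meas1 hδ φ
    unfold D at this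
    rwa [if_pos hδ1] at this
  have h1 : ENNReal.ofReal (1 / (200 * δ)) * lam (carlesonBox φ δ) ≤ FF lam δ φ := by
    unfold FF
    rw [← setLIntegral_const]
    refine le_trans ?_ (setLIntegral_le_lintegral (carlesonBox φ δ) _)
    apply lintegral_mono_ae
    have hne : ∀ᵐ ζ ∂(lam.restrict (carlesonBox φ δ)),
        ζ ≠ ((1 - δ : ℝ) : ℂ) * Complex.exp (φ * Complex.I) := by
      apply ae_restrict_of_ae
      rw [ae_iff]
      simpa using hφ
    filter_upwards [hne, ae_restrict_mem hbm] with ζ hζ hζ2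
    unfold KK
    exact ENNReal.ofReal_le_ofReal (kR_lower hδ hδ1 hζ2 hζ.symm)
  calc lam (carlesonBox φ δ) = ENNReal.ofReal (200 * δ) * (ENNReal.ofReal (1 / (200 * δ)) * lam (carlesonBox φ δ)) := by
        rw [← mul_assoc, ← ENNReal.ofReal_mul (by positivity), mul_one_div_cancel (by positivity)]
        simp
    _ ≤ _ := by gcongr

end CB
namespace CB
open scoped ENNReal

lemma lam_box_int (lam : Measure ℂ) [IsFiniteMeasure lam] {p δ : ℝ} (hp : 1 < p) (hδ : 0 < δ) (hδ1 : δ < 1) :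
    ∫ φ in (0 : ℝ)..(2 * Real.pi), (lam (carlesonBox φ δ)).toReal ^ p =
      (∫⁻ φ in Set.Ioc 0 (2 * Real.pi), lam (carlesonBox φ δ) ^ p).toReal := by
  have hm : Measurable (fun φ => lam (carlesonBox φ δ)) := measurable_measure_prodMk_left (box_meas hδ hδ1)
  rw [intervalIntegral.integral_of_le Real.two_pi_pos.le, integral_eq_lintegral_of_nonneg_ae]
  · congr 1
    apply lintegral_congr
    intro φ
    rw [← ENNReal.ofReal_rpow_of_nonneg ENNReal.toReal_nonneg (by linarith),
      ENNReal.ofReal_toReal (measure_ne_top _ _)]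
  · filter_upwards with φ
    simp only [Pi.zero_apply]
    positivity
  · exact (hm.ennreal_toReal.pow_const p).aestronglyMeasurable

lemma lam_box_fin (lam : Measure ℂ) [IsFiniteMeasure lam] {p : ℝ} (hp : 1 < p) (S : ℝ → Set ℂ) :
    ∫⁻ φ in Set.Ioc 0 (2 * Real.pi), lam (S φ) ^ p ≤ lam Set.univ ^ p * ENNReal.ofReal (2 * Real.pi) := by
  calc _ ≤ ∫⁻ φ in Set.Ioc 0 (2 * Real.pi), lam Set.univ ^ p := by
        apply lintegral_mono
        intro φ
        simp only
        gcongr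
        exact Set.subset_univ _
    _ = _ := by
        rw [setLIntegral_const, Real.volume_Ioc, sub_zero]

lemma rpow_root {A M δ γ p : ℝ} (hp : 1 < p) (hδ : 0 < δ) (hA : 0 ≤ A) (hM : 0 ≤ M)
    (h : A ≤ M * δ ^ (γ * p)) : A ^ (1 / p) ≤ M ^ (1 / p) * δ ^ γ := by
  have hp0 : 0 < p := by linarith
  calc A ^ (1 / p) ≤ (M * δ ^ (γ * p)) ^ (1 / p) := by gcongr
    _ = _ := by
      rw [Real.mul_rpow hM (by positivity), ← Real.rpow_mul hδ.le]
      congr 2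
      field_simp

lemma rpow_unroot {A M δ γ p : ℝ} (hp : 1 < p) (hδ : 0 < δ) (hA : 0 ≤ A)
    (h : A ^ (1 / p) ≤ M * δ ^ γ) : A ≤ |M| ^ p * δ ^ (γ * p) := by
  have hp0 : 0 < p := by linarith
  have h1 : A ^ (1 / p) ≤ |M| * δ ^ γ := by
    refine h.trans ?_
    gcongr
    exact le_abs_self M
  calc A = (A ^ (1 / p)) ^ p := by
        rw [← Real.rpow_mul hA, one_div_mul_cancel hp0.ne', Real.rpow_one]
    _ ≤ (|M| * δ ^ γ) ^ p := by gcongr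
    _ = _ := by
      rw [Real.mul_rpow (by positivity) (by positivity), ← Real.rpow_mul hδ.le]

lemma sum_pow_int {f g : ℝ → ℝ≥0∞} {c p : ℝ} (hp : 1 < p) (hc : 0 ≤ c)
    (h : ∀ᵐ φ ∂(volume.restrict (Set.Ioc 0 (2 * Real.pi))), f φ ≤ ENNReal.ofReal c + g φ) :
    ∫⁻ φ in Set.Ioc 0 (2 * Real.pi), f φ ^ p ≤ 2 ^ (p - 1) * (ENNReal.ofReal (c ^ p * (2 * Real.pi)) +
      ∫⁻ φ in Set.Ioc 0 (2 * Real.pi), g φ ^ p) := by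
  have hp0 : 0 < p := by linarith
  have h2top : (2 : ℝ≥0∞) ^ (p - 1) ≠ ⊤ := ENNReal.rpow_ne_top_of_nonneg (by linarith) (by norm_num)
  calc _ ≤ ∫⁻ φ in Set.Ioc 0 (2 * Real.pi), 2 ^ (p - 1) * (ENNReal.ofReal c ^ p + g φ ^ p) := by
        apply lintegral_mono_ae
        filter_upwards [h] with φ hφ
        refine le_trans ?_ (ENNReal.rpow_add_le_mul_rpow_add_rpow _ _ hp.le)
        gcongr
    _ = _ := by
        rw [lintegral_const_mul' _ _ h2top, lintegral_add_left measurable_const, setLIntegral_const,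
          Real.volume_Ioc, sub_zero, ENNReal.ofReal_rpow_of_nonneg hc hp0.le,
          ← ENNReal.ofReal_mul (by positivity)]

lemma one_le_pow {δ γ p : ℝ} (hp : 1 < p) (hγ1 : γ ≤ 1) (hδ : 0 < δ) (hδ1 : δ < 1) :
    1 ≤ δ ^ ((γ - 1) * p) :=
  Real.one_le_rpow_of_pos_of_le_one_of_nonpos hδ hδ1.le (by nlinarith)

lemma forward (v : ℝ → ℝ → ℝ) (lam : Measure ℂ) [IsFiniteMeasure lam] (hsupp : ∀ᵐ ζ ∂lam, ‖ζ‖ ≤ 1)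
    {C γ p : ℝ} (hγ : 0 < γ) (hγ1 : γ ≤ 1) (hp : 1 < p)
    (H1 : ∀ δ ∈ Set.Ioo (0:ℝ) 1, ∀ φ, ENNReal.ofReal |v δ φ| ≤ ENNReal.ofReal |C| + FF lam δ φ)
    (H2 : ∀ δ ∈ Set.Ioo (0:ℝ) 1, ∀ φ, FF lam δ φ ≠ ⊤ → v δ φ = C - (FF lam δ φ).toReal)
    (C₁ δ₁ : ℝ) (hδ₁ : 0 < δ₁)
    (h : ∀ δ, 0 < δ → δ < 1 → δ < δ₁ →
      ∫ φ in (0 : ℝ)..(2 * Real.pi), |v δ φ| ^ p ≤ C₁ * δ ^ ((γ - 1) * p)) :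
    ∃ M : ℝ, 0 ≤ M ∧ ∀ δ ∈ Set.Ioo (0:ℝ) 1,
      (∫⁻ φ in Set.Ioc 0 (2 * Real.pi), lam (carlesonBox φ δ) ^ p).toReal ≤ M * δ ^ (γ * p) := by
  have hp0 : 0 < p := by linarith
  have h2top : (2 : ℝ≥0∞) ^ (p - 1) ≠ ⊤ := ENNReal.rpow_ne_top_of_nonneg (by linarith) (by norm_num)
  set δ₀ := min δ₁ (1/8) with hδ₀
  have hδ₀0 : 0 < δ₀ := lt_min hδ₁ (by norm_num)
  set T := lam Set.univ ^ p * ENNReal.ofReal (2 * Real.pi) with hT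
  have hTtop : T ≠ ⊤ := ENNReal.mul_ne_top (ENNReal.rpow_ne_top_of_nonneg hp0.le (measure_ne_top _ _))
    ENNReal.ofReal_ne_top
  set M₁ := 200 ^ p * (2 ^ (p - 1) * (|C| ^ p * (2 * Real.pi) + |C₁|)) with hM₁
  set M₂ := T.toReal * (δ₀ ^ (γ * p))⁻¹ with hM₂
  have hM₁0 : 0 ≤ M₁ := by positivity
  have hM₂0 : 0 ≤ M₂ := by positivity
  refine ⟨M₁ + M₂, by positivity, ?_⟩
  rintro δ ⟨hδ, hδ1⟩
  have hE : 0 < δ ^ (γ * p) := by positivity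
  by_cases hcase : δ < δ₀
  · have hδ8 : δ ≤ 1/8 := (hcase.trans_le (min_le_right _ _)).le
    have hI := h δ hδ hδ1 (hcase.trans_le (min_le_left _ _))
    -- finiteness of the integral of FF
    have hFfin : ∫⁻ φ in Set.Ioc 0 (2 * Real.pi), FF lam δ φ ^ p < ⊤ := by
      refine lt_of_le_of_lt (main_est lam hsupp hp hγ hγ1 hδ hδ8
        (T * ENNReal.ofReal (((2 * δ) ^ (γ * p))⁻¹)) ?_) ?_
      · intro t ht
        refine (lam_box_fin lam hp _).trans ?_
        rw [← hT, mul_assoc, ← ENNReal.ofReal_mul (by positivity)]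
        have : 1 ≤ ((2 * δ) ^ (γ * p))⁻¹ * t ^ (γ * p) := by
          rw [inv_mul_eq_div, one_le_div (by positivity)]
          gcongr
        calc T = T * ENNReal.ofReal 1 := by simp
          _ ≤ _ := by gcongr
      · have := cB_ne_top hp
        apply lt_top_iff_ne_top.2
        finiteness
    have hFae : ∀ᵐ φ ∂(volume.restrict (Set.Ioc 0 (2 * Real.pi))), FF lam δ φ ≠ ⊤ := by
      filter_upwards [ae_lt_top ((FF_meas lam δ).pow_const p) hFfin.ne] with φ hφ hcon
      rw [hcon, ENNReal.top_rpow_of_pos hp0] at hφ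
      exact lt_irrefl _ hφ
    have hvm : AEMeasurable (v δ) (volume.restrict (Set.Ioc 0 (2 * Real.pi))) := by
      refine ⟨fun φ => C - (FF lam δ φ).toReal, measurable_const.sub (FF_meas lam δ).ennreal_toReal, ?_⟩
      filter_upwards [hFae] with φ hφ
      exact H2 δ ⟨hδ, hδ1⟩ φ hφ
    have hJ : (∫⁻ φ in Set.Ioc 0 (2 * Real.pi), ENNReal.ofReal |v δ φ| ^ p) ≤
        ENNReal.ofReal (C₁ * δ ^ ((γ - 1) * p)) := by
      have hfin : (∫⁻ φ in Set.Ioc 0 (2 * Real.pi), ENNReal.ofReal |v δ φ| ^ p) ≠ ⊤ := by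
        apply ne_top_of_le_ne_top _ (sum_pow_int hp (abs_nonneg C)
          (Filter.Eventually.of_forall (H1 δ ⟨hδ, hδ1⟩)))
        have := hFfin.ne
        finiteness
      have heq : ∫ φ in (0 : ℝ)..(2 * Real.pi), |v δ φ| ^ p =
          (∫⁻ φ in Set.Ioc 0 (2 * Real.pi), ENNReal.ofReal |v δ φ| ^ p).toReal := by
        rw [intervalIntegral.integral_of_le Real.two_pi_pos.le, integral_eq_lintegral_of_nonneg_ae]
        · congr 1
          apply lintegral_congr
          intro φ
          rw [ENNReal.ofReal_rpow_of_nonneg (abs_nonneg _) hp0.le]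
        · filter_upwards with φ
          simp only [Pi.zero_apply]
          positivity
        · exact (hvm.abs.pow_const p).aestronglyMeasurable
      rw [heq] at hI
      rw [← ENNReal.ofReal_toReal hfin]
      exact ENNReal.ofReal_le_ofReal hI
    have hF2 : ∫⁻ φ in Set.Ioc 0 (2 * Real.pi), FF lam δ φ ^ p ≤ 2 ^ (p - 1) *
        (ENNReal.ofReal (|C| ^ p * (2 * Real.pi)) + ENNReal.ofReal (C₁ * δ ^ ((γ - 1) * p))) := by
      refine (sum_pow_int (g := fun φ => ENNReal.ofReal |v δ φ|) hp (abs_nonneg C) ?_).trans ?_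
      · filter_upwards [hFae] with φ hφ
        rw [← ENNReal.ofReal_toReal hφ, ← ENNReal.ofReal_add (abs_nonneg _) (abs_nonneg _)]
        apply ENNReal.ofReal_le_ofReal
        have := H2 δ ⟨hδ, hδ1⟩ φ hφ
        have e : (FF lam δ φ).toReal = C - v δ φ := by linarith
        rw [e]
        linarith [le_abs_self C, neg_abs_le (v δ φ)]
      · gcongr
    have hlam2 : ∫⁻ φ in Set.Ioc 0 (2 * Real.pi), lam (carlesonBox φ δ) ^ p ≤
        ENNReal.ofReal (M₁ * δ ^ (γ * p)) := by
      calc _ ≤ ∫⁻ φ in Set.Ioc 0 (2 * Real.pi), ENNReal.ofReal ((200 * δ) ^ p) * FF lam δ φ ^ p := by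
            apply lintegral_mono_ae
            filter_upwards [ae_restrict_of_ae (FF_lower lam hδ hδ1)] with φ hφ
            rw [← ENNReal.ofReal_rpow_of_nonneg (by positivity) hp0.le, ← ENNReal.mul_rpow_of_nonneg _ _ hp0.le]
            gcongr
        _ ≤ ENNReal.ofReal ((200 * δ) ^ p) * (2 ^ (p - 1) *
            (ENNReal.ofReal (|C| ^ p * (2 * Real.pi)) + ENNReal.ofReal (C₁ * δ ^ ((γ - 1) * p)))) := by
            rw [lintegral_const_mul' _ _ ENNReal.ofReal_ne_top]
            gcongr
        _ ≤ ENNReal.ofReal ((200 * δ) ^ p) * (ENNReal.ofReal (2 ^ (p - 1)) *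
            (ENNReal.ofReal (|C| ^ p * (2 * Real.pi) * δ ^ ((γ - 1) * p)) +
              ENNReal.ofReal (|C₁| * δ ^ ((γ - 1) * p)))) := by
            refine mul_le_mul_right (mul_le_mul' ?_ (add_le_add (ENNReal.ofReal_le_ofReal ?_)
              (ENNReal.ofReal_le_ofReal ?_))) _
            · rw [← ENNReal.ofReal_rpow_of_pos (by norm_num)]
              norm_num
            · exact le_mul_of_one_le_right (by positivity) (one_le_pow hp hγ1 hδ hδ1)
            · exact mul_le_mul_of_nonneg_right (le_abs_self _) (by positivity)
        _ = _ := by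
            rw [← ENNReal.ofReal_add (by positivity) (by positivity), ← ENNReal.ofReal_mul (by positivity),
              ← ENNReal.ofReal_mul (by positivity)]
            congr 1
            have e : δ ^ (γ * p) = δ ^ p * δ ^ ((γ - 1) * p) := by
              rw [← Real.rpow_add hδ]; congr 1; ring
            rw [Real.mul_rpow (by norm_num) hδ.le, hM₁, e]
            ring
    refine (ENNReal.toReal_le_of_le_ofReal (by positivity) hlam2).trans ?_
    gcongr
    linarith
  · push Not at hcase
    have h1 := ENNReal.toReal_mono hTtop (lam_box_fin lam hp (fun φ => carlesonBox φ δ))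
    refine h1.trans ?_
    have h2 : T.toReal ≤ M₂ * δ ^ (γ * p) := by
      rw [hM₂, mul_assoc]
      apply le_mul_of_one_le_right ENNReal.toReal_nonneg
      rw [inv_mul_eq_div, one_le_div (by positivity)]
      gcongr
    refine h2.trans ?_
    gcongr
    linarith

lemma backward (v : ℝ → ℝ → ℝ) (lam : Measure ℂ) [IsFiniteMeasure lam] (hsupp : ∀ᵐ ζ ∂lam, ‖ζ‖ ≤ 1)
    {C γ p : ℝ} (hγ : 0 < γ) (hγ1 : γ ≤ 1) (hp : 1 < p)
    (H1 : ∀ δ ∈ Set.Ioo (0:ℝ) 1, ∀ φ, ENNReal.ofReal |v δ φ| ≤ ENNReal.ofReal |C| + FF lam δ φ)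
    (M : ℝ) (h : ∀ δ ∈ Set.Ioo (0:ℝ) 1,
      (∫⁻ φ in Set.Ioc 0 (2 * Real.pi), lam (carlesonBox φ δ) ^ p).toReal ≤ M * δ ^ (γ * p)) :
    ∃ N : ℝ, 0 ≤ N ∧ ∀ δ, 0 < δ → δ < 1/8 →
      ∫ φ in (0 : ℝ)..(2 * Real.pi), |v δ φ| ^ p ≤ N * δ ^ ((γ - 1) * p) := by
  have hp0 : 0 < p := by linarith
  have h2top : (2 : ℝ≥0∞) ^ (p - 1) ≠ ⊤ := ENNReal.rpow_ne_top_of_nonneg (by linarith) (by norm_num)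
  set T := lam Set.univ ^ p * ENNReal.ofReal (2 * Real.pi) with hT
  have hTtop : T ≠ ⊤ := ENNReal.mul_ne_top (ENNReal.rpow_ne_top_of_nonneg hp0.le (measure_ne_top _ _))
    ENNReal.ofReal_ne_top
  set K := ENNReal.ofReal M + T with hK
  have hKtop : K ≠ ⊤ := by finiteness
  set Q := 2 ^ (p - 1) * (ENNReal.ofReal (|C| ^ p * (2 * Real.pi)) + cB p * K) with hQ
  have hQtop : Q ≠ ⊤ := by
    have := cB_ne_top hp
    finiteness
  refine ⟨Q.toReal, ENNReal.toReal_nonneg, ?_⟩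
  intro δ hδ hδ8
  have hδ1 : δ < 1 := by linarith
  have hest := main_est lam hsupp hp hγ hγ1 hδ hδ8.le K (by
    intro t ht
    have ht0 : 0 < t := by linarith
    by_cases ht1 : t < 1
    · have hD : ∀ φ, D φ t = carlesonBox φ t := fun φ => by unfold D; rw [if_pos ht1]
      simp_rw [hD]
      have hfin : (∫⁻ φ in Set.Ioc 0 (2 * Real.pi), lam (carlesonBox φ t) ^ p) ≠ ⊤ :=
        ne_top_of_le_ne_top hTtop (lam_box_fin lam hp _)
      rw [← ENNReal.ofReal_toReal hfin]
      refine (ENNReal.ofReal_le_ofReal (h t ⟨ht0, ht1⟩)).trans ?_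
      rw [ENNReal.ofReal_mul' (by positivity)]
      gcongr
      exact le_self_add
    · push Not at ht1
      refine (lam_box_fin lam hp _).trans ?_
      rw [← hT]
      calc T = T * ENNReal.ofReal 1 := by simp
        _ ≤ K * ENNReal.ofReal (t ^ (γ * p)) := by
          gcongr
          · exact le_add_self
          · exact Real.one_le_rpow ht1 (by positivity))
  have hJ : (∫⁻ φ in Set.Ioc 0 (2 * Real.pi), ENNReal.ofReal |v δ φ| ^ p) ≤
      Q * ENNReal.ofReal (δ ^ ((γ - 1) * p)) := by
    refine (sum_pow_int hp (abs_nonneg C) (Filter.Eventually.of_forall (H1 δ ⟨hδ, hδ1⟩))).trans ?_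
    rw [hQ, mul_assoc, add_mul]
    gcongr
    calc ENNReal.ofReal (|C| ^ p * (2 * Real.pi)) = ENNReal.ofReal (|C| ^ p * (2 * Real.pi)) * ENNReal.ofReal 1 := by
          simp
      _ ≤ _ := by
          gcongr
          exact one_le_pow hp hγ1 hδ hδ1
  rw [intervalIntegral.integral_of_le Real.two_pi_pos.le]
  have hnorm := norm_integral_le_lintegral_norm (μ := volume.restrict (Set.Ioc 0 (2 * Real.pi)))
    (fun φ => |v δ φ| ^ p)
  refine (le_abs_self _).trans (hnorm.trans ?_)
  apply ENNReal.toReal_le_of_le_ofReal (by positivity)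
  rw [ENNReal.ofReal_mul ENNReal.toReal_nonneg, ENNReal.ofReal_toReal hQtop]
  refine le_trans (le_of_eq ?_) hJ
  apply lintegral_congr
  intro φ
  rw [ENNReal.ofReal_rpow_of_nonneg (abs_nonneg _) hp0.le, Real.norm_of_nonneg (by positivity)]

end CB

/-- For a subharmonic `u` bounded above on `𝔻` with representation
`u(z) = ∫_𝔻 log(|z-ζ|/|1-z·conj ζ|) dμ(ζ) - (1/2π)∫₀^{2π} (1-|z|²)/|e^{iθ}-z|² dψ(θ) + C`
and complete measure `λ`, one has `m_p(r,u) = O((1-r)^{γ-1})` as `r ↑ 1` iff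
`(∫₀^{2π} λ(C(φ,δ))^p dφ)^{1/p} = O(δ^γ)` for `0 < δ < 1`. -/
theorem stmt0 (u : ℂ → ℝ) (μ : Measure ℂ) (ψ : Measure ℝ) [IsFiniteMeasure ψ]
    (lam : Measure ℂ) (C : ℝ) (γ p : ℝ) (hγ : 0 < γ) (hγ1 : γ ≤ 1) (hp : 1 < p)
    -- `u` is bounded from above on `𝔻`
    (hbdd : ∃ B : ℝ, ∀ z ∈ Metric.ball (0 : ℂ) 1, u z ≤ B)
    -- `μ` is a positive Borel measure on `𝔻` with `∫_𝔻 (1-|ζ|) dμ(ζ) < ∞`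
    (hμD : μ (Metric.ball (0 : ℂ) 1)ᶜ = 0)
    (hμfin : ∫⁻ ζ in Metric.ball (0 : ℂ) 1, ENNReal.ofReal (1 - ‖ζ‖) ∂μ < ⊤)
    -- `ψ` is a finite positive Borel measure on `[0,2π)`
    (hψ : ψ (Set.Ico (0 : ℝ) (2 * Real.pi))ᶜ = 0)
    -- representation of `u`
    (hrep : ∀ z ∈ Metric.ball (0 : ℂ) 1,
      u z = (∫ ζ in Metric.ball (0 : ℂ) 1,
          Real.log (‖z - ζ‖ / ‖1 - z * (starRingEnd ℂ) ζ‖) ∂μ) -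
        (1 / (2 * Real.pi)) *
          (∫ θ, (1 - ‖z‖ ^ 2) / ‖Complex.exp (θ * Complex.I) - z‖ ^ 2 ∂ψ)
        + C)
    -- `λ` is the complete measure of `u`
    (hlam : ∀ M : Set ℂ, MeasurableSet M →
      lam M = (∫⁻ ζ in Metric.ball (0 : ℂ) 1 ∩ M, ENNReal.ofReal (1 - ‖ζ‖) ∂μ) +
        ψ ((fun θ : ℝ => Complex.exp (θ * Complex.I)) ⁻¹' (M ∩ Metric.sphere (0 : ℂ) 1))) :
    (∃ C₁ : ℝ, ∃ r₀ ∈ Set.Ico (0 : ℝ) 1, ∀ r ∈ Set.Ioo r₀ 1,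
        mpMean p r u ≤ C₁ * (1 - r) ^ (γ - 1)) ↔
      (∃ C₂ : ℝ, ∀ δ ∈ Set.Ioo (0 : ℝ) 1,
        (∫ φ in (0 : ℝ)..(2 * Real.pi), (lam (carlesonBox φ δ)).toReal ^ p) ^ (1 / p) ≤
          C₂ * δ ^ γ) := by
  have hfin : IsFiniteMeasure lam := CB.lam_fin μ ψ lam hμfin hlam
  have hsupp := CB.lam_supp μ ψ lam hlam
  have hp0 : 0 < p := by linarith
  have hpi := Real.two_pi_pos
  set v : ℝ → ℝ → ℝ := fun δ φ => u (((1 - δ : ℝ) : ℂ) * Complex.exp (φ * Complex.I)) with hv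
  have hF : ∀ δ φ, CB.FF lam δ φ = CB.Gp μ (((1 - δ : ℝ) : ℂ) * Complex.exp (φ * Complex.I)) +
      CB.Pp ψ (((1 - δ : ℝ) : ℂ) * Complex.exp (φ * Complex.I)) := by
    intro δ φ
    rw [← CB.kRint μ ψ lam hlam]
    unfold CB.FF CB.KK
    rfl
  have hU : ∀ δ ∈ Set.Ioo (0:ℝ) 1, ∀ φ, v δ φ = C -
      (CB.Gp μ (((1 - δ : ℝ) : ℂ) * Complex.exp (φ * Complex.I))).toReal -
      (CB.Pp ψ (((1 - δ : ℝ) : ℂ) * Complex.exp (φ * Complex.I))).toReal := by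
    intro δ hδ φ
    have hn := CB.norm_circ (r := 1 - δ) (a := φ) (by linarith [hδ.2])
    have hz : ‖((1 - δ : ℝ) : ℂ) * Complex.exp (φ * Complex.I)‖ < 1 := by
      rw [hn]; linarith [hδ.1]
    exact CB.u_eq u μ ψ C _ hz (hrep _ (by simpa using hz))
  have H1 : ∀ δ ∈ Set.Ioo (0:ℝ) 1, ∀ φ,
      ENNReal.ofReal |v δ φ| ≤ ENNReal.ofReal |C| + CB.FF lam δ φ := by
    intro δ hδ φ
    rw [hU δ hδ φ, hF]
    set G := CB.Gp μ (((1 - δ : ℝ) : ℂ) * Complex.exp (φ * Complex.I))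
    set P := CB.Pp ψ (((1 - δ : ℝ) : ℂ) * Complex.exp (φ * Complex.I))
    have h1 : |C - G.toReal - P.toReal| ≤ |C| + (G.toReal + P.toReal) := by
      have hG : 0 ≤ G.toReal := ENNReal.toReal_nonneg
      have hP : 0 ≤ P.toReal := ENNReal.toReal_nonneg
      rw [abs_le]
      constructor <;> linarith [le_abs_self C, neg_abs_le C]
    refine (ENNReal.ofReal_le_ofReal h1).trans ?_
    rw [ENNReal.ofReal_add (abs_nonneg _) (by positivity), ENNReal.ofReal_add (by positivity) (by positivity)]
    gcongr
    · exact ENNReal.ofReal_toReal_le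
    · exact ENNReal.ofReal_toReal_le
  have H2 : ∀ δ ∈ Set.Ioo (0:ℝ) 1, ∀ φ, CB.FF lam δ φ ≠ ⊤ → v δ φ = C - (CB.FF lam δ φ).toReal := by
    intro δ hδ φ hne
    rw [hF] at hne
    rw [hU δ hδ φ, hF, ENNReal.toReal_add (ENNReal.add_ne_top.1 hne).1 (ENNReal.add_ne_top.1 hne).2]
    ring
  have hmp : ∀ r, mpMean p r u =
      ((1 / (2 * Real.pi)) * ∫ φ in (0 : ℝ)..(2 * Real.pi), |v (1 - r) φ| ^ p) ^ (1 / p) := by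
    intro r
    unfold mpMean
    simp only [hv, sub_sub_cancel]
  have hI0 : ∀ δ, 0 ≤ ∫ φ in (0 : ℝ)..(2 * Real.pi), |v δ φ| ^ p := by
    intro δ
    apply intervalIntegral.integral_nonneg hpi.le
    intro φ _
    positivity
  constructor
  · rintro ⟨C₁, r₀, hr₀, h⟩
    obtain ⟨M, hM0, hM⟩ := CB.forward v lam hsupp hγ hγ1 hp H1 H2 (2 * Real.pi * |C₁| ^ p) (1 - r₀)
      (by linarith [hr₀.2]) (by
        intro δ hδ hδ1 hδ2
        have h1 := h (1 - δ) ⟨by linarith, by linarith⟩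
        rw [hmp, sub_sub_cancel] at h1
        have h2 := CB.rpow_unroot hp hδ (mul_nonneg (by positivity) (hI0 δ)) h1
        rw [one_div, inv_mul_le_iff₀ hpi] at h2
        linarith)
    refine ⟨M ^ (1 / p), ?_⟩
    intro δ hδ
    rw [CB.lam_box_int lam hp hδ.1 hδ.2]
    exact CB.rpow_root hp hδ.1 ENNReal.toReal_nonneg hM0 (hM δ hδ)
  · rintro ⟨C₂, h⟩
    obtain ⟨N, hN0, hN⟩ := CB.backward v lam hsupp hγ hγ1 hp H1 (|C₂| ^ p) (by
      intro δ hδ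
      have h1 := h δ hδ
      rw [CB.lam_box_int lam hp hδ.1 hδ.2] at h1
      exact CB.rpow_unroot hp hδ.1 ENNReal.toReal_nonneg h1)
    refine ⟨(1 / (2 * Real.pi) * N) ^ (1 / p), 7/8, ⟨by norm_num, by norm_num⟩, ?_⟩
    intro r hr
    have hδ : 0 < 1 - r := by linarith [hr.2]
    rw [hmp]
    apply CB.rpow_root hp hδ (mul_nonneg (by positivity) (hI0 _)) (by positivity)
    rw [mul_assoc]
    gcongr
    exact hN (1 - r) hδ (by linarith [hr.1])
end

section
/- Let f be a bounded analytic function on the open unit disc 𝔻, not identically zero, such that log|f| admits the representation log|f(z)| = ∫_𝔻 log(|z−ζ|/|1−z·conj(ζ)|) dμ(ζ) − (1/2π)∫₀^{2π} ((1−|z|²)/|e^{iθ}−z|²) dψ(θ) + C for all z outside the zero set of f, where μ is the Riesz measure of log|f| (the sum of unit point masses at the zeros of f counted with multiplicity, satisfying ∫_𝔻 (1−|ζ|) dμ(ζ) < ∞), ψ is a finite positive Borel measure on [0,2π), and C ∈ ℝ. Let λ be the complete measure of log|f|, i.e. λ(M) = ∫_{𝔻∩M} (1−|ζ|) dμ(ζ)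 + ψ(M ∩ ∂𝔻). Let γ ∈ (0,1] and p ∈ (1,∞). Then m_p(r, log|f|) = O((1−r)^{γ−1}) as r ↑ 1 if and only if (∫₀^{2π} λ(C(φ,δ))^p dφ)^{1/p} = O(δ^γ) as δ ↓ 0 (for 0 < δ < 1). -/
open MeasureTheory Complex

open scoped ENNReal

lemma box_mono {φ φ' s s' : ℝ} (hs : s ≤ s') (h : |φ - φ'| ≤ Real.pi * (s' - s)) :
    carlesonBox φ s ⊆ carlesonBox φ' s' := by
  rintro ζ ⟨h1, h2, θ, h3, h4⟩
  refine ⟨h1, by linarith, θ, ?_, h4⟩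
  have := abs_sub_le θ φ φ'
  linarith

/-- rotation reduces a box to the one centred at angle zero -/
lemma mem_box_iff_rot (φ s : ℝ) (ζ : ℂ) :
    ζ ∈ carlesonBox φ s ↔ ζ * Complex.exp (-(φ * I)) ∈ carlesonBox 0 s := by
  have hn : ‖ζ * Complex.exp (-(φ * I))‖ = ‖ζ‖ := by
    rw [norm_mul, ← neg_mul, ← ofReal_neg, norm_exp_ofReal_mul_I, mul_one]
  have he : Complex.exp (-(φ * I)) * Complex.exp (φ * I) = 1 := by
    rw [← Complex.exp_add]; simp
  simp only [carlesonBox, Set.mem_setOf_eq, hn]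
  refine and_congr_right fun _ => and_congr_right fun _ => ?_
  constructor
  · rintro ⟨θ, h1, h2⟩
    refine ⟨θ - φ, by simpa using h1, ?_⟩
    conv_lhs => rw [h2]
    rw [mul_assoc, ← Complex.exp_add]
    congr 2; push_cast; ring
  · rintro ⟨θ, h1, h2⟩
    refine ⟨θ + φ, by simpa using h1, ?_⟩
    have : ζ = (ζ * Complex.exp (-(φ * I))) * Complex.exp (φ * I) := by
      rw [mul_assoc, he, mul_one]
    conv_lhs => rw [this, h2]
    rw [mul_assoc, ← Complex.exp_add]
    congr 2; push_cast; ring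

lemma box_zero_closed (s : ℝ) : IsClosed (carlesonBox 0 s) := by
  have : carlesonBox 0 s = (fun q : ℝ × ℝ => (q.1 : ℂ) * Complex.exp (q.2 * I)) ''
      ((Set.Icc (max 0 (1 - s)) 1) ×ˢ (Set.Icc (-(Real.pi * s)) (Real.pi * s))) := by
    ext ζ
    simp only [carlesonBox, Set.mem_setOf_eq, Set.mem_image, Set.mem_prod, Set.mem_Icc, Prod.exists,
      sub_zero, abs_le, max_le_iff]
    constructor
    · rintro ⟨h1, h2, θ, h3, h4⟩
      exact ⟨‖ζ‖, θ, ⟨⟨⟨norm_nonneg _, h2⟩, h1⟩, h3⟩, h4.symm⟩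
    · rintro ⟨a, θ, ⟨⟨⟨h0, h2⟩, h1⟩, h3⟩, h4⟩
      have : ‖ζ‖ = a := by
        rw [← h4, norm_mul, norm_exp_ofReal_mul_I, mul_one, norm_real, Real.norm_of_nonneg h0]
      rw [this]
      exact ⟨h1, h2, θ, h3, h4.symm⟩
  rw [this]
  apply IsCompact.isClosed
  apply (isCompact_Icc.prod isCompact_Icc).image
  fun_prop

lemma measurable_lam_box (lam : Measure ℂ) [SFinite lam] (s : ℝ) :
    Measurable fun φ : ℝ => lam (carlesonBox φ s) := by
  have hm : MeasurableSet {q : ℝ × ℂ | q.2 * Complex.exp (-(q.1 * I)) ∈ carlesonBox 0 s} := by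
    apply IsClosed.measurableSet
    apply (box_zero_closed s).preimage
    fun_prop
  have := measurable_measure_prodMk_left (ν := lam) hm
  convert this using 3 with φ
  ext ζ
  exact mem_box_iff_rot φ s ζ

lemma measurableSet_box (φ s : ℝ) : MeasurableSet (carlesonBox φ s) := by
  have : carlesonBox φ s = (fun ζ : ℂ => ζ * Complex.exp (-(φ * I))) ⁻¹' carlesonBox 0 s := by
    ext ζ; exact mem_box_iff_rot φ s ζ
  rw [this]
  exact ((box_zero_closed s).preimage (by fun_prop)).measurableSet

lemma polar_exists (ζ : ℂ) (φ : ℝ) :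
    ζ = (‖ζ‖ : ℂ) * Complex.exp ((φ + arg (ζ * Complex.exp (-(φ * I))) : ℝ) * I) := by
  have hn : ‖ζ * Complex.exp (-(φ * I))‖ = ‖ζ‖ := by
    rw [norm_mul, ← neg_mul, ← ofReal_neg, norm_exp_ofReal_mul_I, mul_one]
  have he : Complex.exp (-(φ * I)) * Complex.exp (φ * I) = 1 := by
    rw [← Complex.exp_add]; simp
  have h := norm_mul_exp_arg_mul_I (ζ * Complex.exp (-(φ * I)))
  rw [hn] at h
  calc ζ = (ζ * Complex.exp (-(φ * I))) * Complex.exp (φ * I) := by rw [mul_assoc, he, mul_one]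
    _ = _ := by
      rw [← h, mul_assoc, ← Complex.exp_add, h]
      congr 2; push_cast; ring

lemma box_of_one_le {φ s : ℝ} (hs : 1 ≤ s) {ζ : ℂ} (hζ : ‖ζ‖ ≤ 1) : ζ ∈ carlesonBox φ s := by
  refine ⟨hζ, by linarith [norm_nonneg ζ], _, ?_, polar_exists ζ φ⟩
  rw [add_sub_cancel_left]
  have := abs_arg_le_pi (ζ * Complex.exp (-(φ * I)))
  nlinarith [Real.pi_pos]

lemma abs_arg_le_of_norm_one_sub {w : ℂ} {s : ℝ} (hs : s ≤ 1 / 2) (h : ‖1 - w‖ ≤ s) :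
    |arg w| ≤ Real.pi * s := by
  have h1 : |(1 - w).re| ≤ s := (abs_re_le_norm _).trans h
  have h2 : |(1 - w).im| ≤ s := (abs_im_le_norm _).trans h
  simp only [sub_re, one_re, sub_im, one_im, zero_sub, abs_neg] at h1 h2
  have hre : 1 / 2 ≤ w.re := by have := (abs_le.1 h1).2; linarith
  have ha : |arg w| ≤ Real.pi / 2 := abs_arg_le_pi_div_two_iff.2 (by linarith)
  have hn : 1 / 2 ≤ ‖w‖ := hre.trans (re_le_norm w)
  have hj := Real.mul_abs_le_abs_sin ha
  rw [sin_arg, abs_div, abs_norm] at hj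
  have : |w.im| / ‖w‖ ≤ 2 * s := by
    rw [div_le_iff₀ (by linarith)]
    nlinarith [abs_nonneg w.im]
  have h3 : 2 / Real.pi * |arg w| ≤ 2 * s := hj.trans this
  have hp := Real.pi_pos
  rw [div_mul_eq_mul_div, div_le_iff₀ hp] at h3
  linarith

lemma norm_one_sub_mul_conj (r φ : ℝ) (ζ : ℂ) :
    ‖1 - (r * Complex.exp (φ * I)) * (starRingEnd ℂ) ζ‖
      = ‖1 - r * (ζ * Complex.exp (-(φ * I)))‖ := by
  rw [← norm_conj]
  congr 1
  simp only [map_sub, map_one, map_mul, conj_ofReal, conj_conj, ← exp_conj, conj_I]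
  ring_nf

/-- points where the kernel is large belong to a Carleson box -/
lemma mem_box_of_kernel {r φ s : ℝ} (hr0 : 0 < r) (hr1 : r < 1) {ζ : ℂ} (hζ : ‖ζ‖ ≤ 1)
    (h : ‖1 - (r * Complex.exp (φ * I)) * (starRingEnd ℂ) ζ‖ ≤ s) :
    ζ ∈ carlesonBox φ (2 * s) := by
  rcases le_or_gt s (1 / 2) with hs | hs
  swap
  · exact box_of_one_le (by linarith) hζ
  have hs0 : 0 ≤ s := (norm_nonneg _).trans h
  have hn : ‖(r * Complex.exp (φ * I)) * (starRingEnd ℂ) ζ‖ = r * ‖ζ‖ := by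
    rw [norm_mul, norm_mul, norm_exp_ofReal_mul_I, mul_one, norm_conj, norm_real,
      Real.norm_of_nonneg hr0.le]
  have h1 : 1 - r * ‖ζ‖ ≤ s := by
    have := norm_sub_norm_le (1 : ℂ) ((r * Complex.exp (φ * I)) * (starRingEnd ℂ) ζ)
    rw [hn, norm_one] at this
    linarith
  refine ⟨hζ, by nlinarith [norm_nonneg ζ], _, ?_, polar_exists ζ φ⟩
  rw [add_sub_cancel_left]
  rw [norm_one_sub_mul_conj] at h
  have := abs_arg_le_of_norm_one_sub hs h
  rw [arg_real_mul _ hr0] at this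
  nlinarith [Real.pi_pos]

/-- conversely, in the box the kernel denominator is small -/
lemma kernel_le_of_mem_box {δ φ : ℝ} (h0 : 0 < δ) (h1 : δ < 1) {ζ : ℂ}
    (h : ζ ∈ carlesonBox φ δ) :
    ‖1 - ((1 - δ : ℝ) * Complex.exp (φ * I)) * (starRingEnd ℂ) ζ‖ ≤ 6 * δ := by
  obtain ⟨hz1, hz2, θ, h3, h4⟩ := h
  rw [norm_one_sub_mul_conj]
  have : ζ * Complex.exp (-(φ * I)) = ‖ζ‖ * Complex.exp ((θ - φ : ℝ) * I) := by
    conv_lhs => rw [h4]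
    rw [mul_assoc, ← Complex.exp_add]
    congr 2; push_cast; ring
  rw [this]
  have e : (1 : ℂ) - (1 - δ : ℝ) * (‖ζ‖ * Complex.exp ((θ - φ : ℝ) * I))
      = ((1 - (1 - δ) * ‖ζ‖ : ℝ) : ℂ)
        - (((1 - δ) * ‖ζ‖ : ℝ) : ℂ) * (Complex.exp ((θ - φ : ℝ) * I) - 1) := by
    push_cast; ring
  rw [e]
  refine (norm_sub_le _ _).trans ?_
  have ha : ‖Complex.exp ((θ - φ : ℝ) * I) - 1‖ ≤ |θ - φ| := by
    have := Real.norm_exp_I_mul_ofReal_sub_one_le (x := θ - φ)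
    rwa [mul_comm, Real.norm_eq_abs] at this
  rw [norm_mul, norm_real, norm_real, Real.norm_of_nonneg, Real.norm_of_nonneg]
  · have h5 : (1 - δ) * ‖ζ‖ ≤ 1 := by nlinarith [norm_nonneg ζ]
    have h6 : 0 ≤ (1 - δ) * ‖ζ‖ := mul_nonneg (by linarith) (norm_nonneg ζ)
    have h7 : (1 - δ) * ‖ζ‖ * ‖Complex.exp ((θ - φ : ℝ) * I) - 1‖ ≤ 1 * (Real.pi * δ) :=
      mul_le_mul h5 (ha.trans h3) (norm_nonneg _) (by norm_num)
    have h8 : Real.pi < 4 := by linarith [Real.pi_lt_four]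
    nlinarith
  · exact mul_nonneg (by linarith) (norm_nonneg ζ)
  · nlinarith [norm_nonneg ζ]

lemma blaschke_identity (z ζ : ℂ) :
    ‖1 - z * (starRingEnd ℂ) ζ‖ ^ 2 - ‖z - ζ‖ ^ 2 = (1 - ‖z‖ ^ 2) * (1 - ‖ζ‖ ^ 2) := by
  simp only [← normSq_eq_norm_sq, normSq_apply]
  simp
  ring

/-- the denominator `|1 - z ζ̄|` at `z = r e^{iφ}` -/
noncomputable def den (r φ : ℝ) (ζ : ℂ) : ℝ :=
  ‖1 - (r * Complex.exp (φ * I)) * (starRingEnd ℂ) ζ‖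

/-- the Poisson type kernel -/
noncomputable def Kk (r φ : ℝ) (ζ : ℂ) : ℝ≥0∞ :=
  ENNReal.ofReal ((1 - r ^ 2) / den r φ ζ ^ 2)

/-- logarithm of the Blaschke factor -/
noncomputable def lb (r φ : ℝ) (ζ : ℂ) : ℝ :=
  Real.log (‖r * Complex.exp (φ * I) - ζ‖ / den r φ ζ)

open scoped Classical in
/-- the near part of the logarithmic kernel -/
noncomputable def Nk (r φ : ℝ) (ζ : ℂ) : ℝ≥0∞ :=
  if ‖r * Complex.exp (φ * I) - ζ‖ < 1 / 2 * den r φ ζ then ENNReal.ofReal (-lb r φ ζ) else 0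

lemma norm_z {r : ℝ} (hr0 : 0 < r) (φ : ℝ) : ‖(r : ℂ) * Complex.exp (φ * I)‖ = r := by
  rw [norm_mul, norm_exp_ofReal_mul_I, mul_one, norm_real, Real.norm_of_nonneg hr0.le]

lemma den_ge {r : ℝ} (hr0 : 0 < r) (φ : ℝ) (ζ : ℂ) : 1 - r * ‖ζ‖ ≤ den r φ ζ := by
  have := norm_sub_norm_le (1 : ℂ) ((r * Complex.exp (φ * I)) * (starRingEnd ℂ) ζ)
  rw [norm_mul, norm_z hr0, norm_conj, norm_one] at this
  exact this

lemma den_ge1 {r : ℝ} (hr0 : 0 < r) (φ : ℝ) {ζ : ℂ} (hζ : ‖ζ‖ ≤ 1) :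
    1 - r ≤ den r φ ζ := (den_ge hr0 φ ζ).trans' (by nlinarith)

lemma den_ge2 {r : ℝ} (hr0 : 0 < r) (hr1 : r < 1) (φ : ℝ) (ζ : ℂ) :
    1 - ‖ζ‖ ≤ den r φ ζ := (den_ge hr0 φ ζ).trans' (by nlinarith [norm_nonneg ζ])

lemma den_identity {r : ℝ} (hr0 : 0 < r) (φ : ℝ) (ζ : ℂ) :
    den r φ ζ ^ 2 - ‖r * Complex.exp (φ * I) - ζ‖ ^ 2 = (1 - r ^ 2) * (1 - ‖ζ‖ ^ 2) := by
  have := blaschke_identity (r * Complex.exp (φ * I)) ζ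
  rw [norm_z hr0] at this
  exact this

lemma lb_nonpos {r : ℝ} (hr0 : 0 < r) (hr1 : r < 1) (φ : ℝ) {ζ : ℂ} (hζ : ‖ζ‖ < 1) :
    lb r φ ζ ≤ 0 := by
  have hd : 0 < den r φ ζ := by linarith [den_ge1 hr0 φ hζ.le]
  have hi := den_identity hr0 φ ζ
  apply Real.log_nonpos (by positivity)
  rw [div_le_one hd]
  apply abs_le_of_sq_le_sq' _ hd.le |>.2
  have : 0 ≤ (1 - r ^ 2) * (1 - ‖ζ‖ ^ 2) := by
    apply mul_nonneg <;> nlinarith [norm_nonneg ζ]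
  linarith

lemma lb_upper {r : ℝ} (hr0 : 0 < r) (hr1 : r < 1) (φ : ℝ) {ζ : ℂ} (hζ : ‖ζ‖ < 1) :
    ‖lb r φ ζ‖ₑ ≤ 4 * (ENNReal.ofReal (1 - ‖ζ‖) * Kk r φ ζ) + Nk r φ ζ := by
  have hd : 0 < den r φ ζ := by linarith [den_ge1 hr0 φ hζ.le]
  have hi := den_identity hr0 φ ζ
  have hl := lb_nonpos hr0 hr1 φ hζ
  have hn : ‖lb r φ ζ‖ₑ = ENNReal.ofReal (-lb r φ ζ) := by
    rw [Real.enorm_eq_ofReal_abs, abs_of_nonpos hl]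
  rw [hn]
  unfold Nk
  split_ifs with h
  · exact le_add_self
  · rw [add_zero, Kk, ← ENNReal.ofReal_mul (by linarith),
      show (4 : ℝ≥0∞) = ENNReal.ofReal 4 by simp, ← ENNReal.ofReal_mul (by norm_num)]
    apply ENNReal.ofReal_le_ofReal
    push Not at h
    set x := ‖r * Complex.exp (φ * I) - ζ‖ with hx
    set d := den r φ ζ with hd'
    have hx0 : 0 < x := by nlinarith
    have hb : 0 < (x / d) ^ 2 := by positivity
    have h1 := Real.one_sub_inv_le_log_of_pos hb
    rw [Real.log_pow] at h1
    have h2 : ((x / d) ^ 2)⁻¹ - 1 ≤ 4 * ((1 - r ^ 2) * (1 - ‖ζ‖ ^ 2)) / d ^ 2 := by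
      rw [← hi]
      have e : ((x / d) ^ 2)⁻¹ - 1 = (d ^ 2 - x ^ 2) / x ^ 2 := by field_simp
      rw [e, div_le_div_iff₀ (by positivity) (by positivity)]
      have h3 : 0 ≤ d ^ 2 - x ^ 2 := by
        rw [hi]; apply mul_nonneg <;> nlinarith [norm_nonneg ζ]
      have h4 : d ^ 2 ≤ 4 * x ^ 2 := by nlinarith
      nlinarith
    have h5 : 4 * ((1 - r ^ 2) * (1 - ‖ζ‖ ^ 2)) / d ^ 2 ≤
        8 * ((1 - ‖ζ‖) * ((1 - r ^ 2) / d ^ 2)) := by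
      rw [← mul_div_assoc, ← mul_div_assoc]
      apply div_le_div_of_nonneg_right _ (by positivity)
      have : 0 ≤ 1 - r ^ 2 := by nlinarith
      have h6 : 1 - ‖ζ‖ ^ 2 ≤ 2 * (1 - ‖ζ‖) := by nlinarith [norm_nonneg ζ]
      nlinarith
    have h7 : lb r φ ζ = Real.log (x / d) := rfl
    rw [h7]
    push_cast at h1
    linarith

lemma lb_lower {r : ℝ} (hr0 : 0 < r) (hr1 : r < 1) (φ : ℝ) {ζ : ℂ} (hζ : ‖ζ‖ < 1)
    (hne : ζ ≠ r * Complex.exp (φ * I)) :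
    ENNReal.ofReal (1 - ‖ζ‖) * Kk r φ ζ ≤ 2 * ENNReal.ofReal (-lb r φ ζ) := by
  have hd : 0 < den r φ ζ := by linarith [den_ge1 hr0 φ hζ.le]
  have hi := den_identity hr0 φ ζ
  rw [Kk, ← ENNReal.ofReal_mul (by linarith),
      show (2 : ℝ≥0∞) = ENNReal.ofReal 2 by simp, ← ENNReal.ofReal_mul (by norm_num)]
  apply ENNReal.ofReal_le_ofReal
  have hx0 : 0 < ‖r * Complex.exp (φ * I) - ζ‖ := norm_pos_iff.2 (sub_ne_zero.2 hne.symm)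
  unfold lb
  set x := ‖r * Complex.exp (φ * I) - ζ‖ with hx
  set d := den r φ ζ with hd'
  have hb : 0 < (x / d) ^ 2 := by positivity
  have h1 := Real.log_le_sub_one_of_pos hb
  rw [Real.log_pow] at h1
  push_cast at h1
  have e : (x / d) ^ 2 - 1 = - ((1 - r ^ 2) * (1 - ‖ζ‖ ^ 2) / d ^ 2) := by
    rw [← hi]; field_simp; ring
  have h5 : (1 - ‖ζ‖) * ((1 - r ^ 2) / d ^ 2) ≤ (1 - r ^ 2) * (1 - ‖ζ‖ ^ 2) / d ^ 2 := by
    rw [← mul_div_assoc]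
    apply div_le_div_of_nonneg_right _ (by positivity)
    have : 0 ≤ 1 - r ^ 2 := by nlinarith
    have h6 : 1 - ‖ζ‖ ≤ 1 - ‖ζ‖ ^ 2 := by nlinarith [norm_nonneg ζ]
    nlinarith
  linarith

lemma near_bounds {δ : ℝ} (h0 : 0 < δ) (h1 : δ < 1) (φ : ℝ) {ζ : ℂ} (hζ : ‖ζ‖ < 1)
    (h : ‖(1 - δ : ℝ) * Complex.exp (φ * I) - ζ‖ < 1 / 2 * den (1 - δ) φ ζ) :
    3 / 16 * δ ≤ 1 - ‖ζ‖ ∧ den (1 - δ) φ ζ ≤ 11 / 2 * δ := by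
  have hr0 : 0 < 1 - δ := by linarith
  have hr1 : 1 - δ < 1 := by linarith
  have hi := den_identity hr0 φ ζ
  have hd1 := den_ge1 hr0 φ hζ.le
  have hd2 := den_ge2 hr0 hr1 φ ζ
  set x := ‖(1 - δ : ℝ) * Complex.exp (φ * I) - ζ‖ with hx
  set d := den (1 - δ) φ ζ with hd'
  have hx0 : 0 ≤ x := norm_nonneg _
  set t := 1 - ‖ζ‖ with ht
  have ht0 : 0 < t := by linarith
  have hζ' : ‖ζ‖ = 1 - t := by linarith
  rw [hζ'] at hi
  have h3 : 3 / 4 * d ^ 2 ≤ 4 * δ * t := by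
    have : x ^ 2 ≤ 1 / 4 * d ^ 2 := by nlinarith
    have : (1 - (1 - δ) ^ 2) * (1 - (1 - t) ^ 2) ≤ (2 * δ) * (2 * t) := by
      have : t ≤ 1 := by linarith [norm_nonneg ζ]
      apply mul_le_mul <;> nlinarith
    linarith
  have hd0 : 0 < d := by linarith
  have h4 : d ≤ 16 / 3 * δ := by
    have : 3 / 4 * d * d ≤ 4 * δ * d := by nlinarith
    have := le_of_mul_le_mul_right this hd0
    linarith
  constructor
  · have : 3 / 4 * δ * δ ≤ 4 * t * δ := by nlinarith
    have := le_of_mul_le_mul_right this h0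
    linarith
  · linarith

lemma Nk_ne_zero {δ : ℝ} (h0 : 0 < δ) (h1 : δ < 1) (φ : ℝ) {ζ : ℂ} (hζ : ‖ζ‖ < 1)
    (h : Nk (1 - δ) φ ζ ≠ 0) :
    3 / 16 * δ ≤ 1 - ‖ζ‖ ∧ den (1 - δ) φ ζ ≤ 11 / 2 * δ ∧ ζ ∈ carlesonBox φ (11 * δ) := by
  unfold Nk at h
  split_ifs at h with h'
  · have := near_bounds h0 h1 φ hζ h'
    refine ⟨this.1, this.2, ?_⟩
    have h2 := mem_box_of_kernel (by linarith) (by linarith) hζ.le this.2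
    convert h2 using 1; ring
  · exact absurd rfl h

lemma Kk_dyadic {δ : ℝ} (h0 : 0 < δ) (h1 : δ < 1) (φ : ℝ) {ζ : ℂ} (hζ : ‖ζ‖ ≤ 1) :
    Kk (1 - δ) φ ζ ≤ ∑' k : ℕ, ENNReal.ofReal (8 / δ * (1 / 4) ^ k) *
      (carlesonBox φ (2 * (2 ^ k * δ))).indicator 1 ζ := by
  have hd1 := den_ge1 (show 0 < 1 - δ by linarith) φ hζ
  set d := den (1 - δ) φ ζ with hd'
  obtain ⟨k, hk⟩ : ∃ k : ℕ, d ≤ 2 ^ k * δ := by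
    obtain ⟨k, hk⟩ := pow_unbounded_of_one_lt (d / δ) (one_lt_two)
    exact ⟨k, by rw [div_lt_iff₀ h0] at hk; exact hk.le⟩
  classical
  have hex : ∃ k : ℕ, d ≤ 2 ^ k * δ := ⟨k, hk⟩
  have hs := Nat.find_spec hex
  have hmin : 2 ^ (Nat.find hex) * δ ≤ 2 * d := by
    rcases hj : Nat.find hex with _ | j
    · simp; linarith
    · have := Nat.find_min hex (m := j) (by omega)
      push Not at this
      rw [pow_succ]; linarith
  refine le_trans ?_ (ENNReal.le_tsum (Nat.find hex))
  set j := Nat.find hex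
  have hmem : ζ ∈ carlesonBox φ (2 * (2 ^ j * δ)) :=
    mem_box_of_kernel (by linarith) (by linarith) hζ hs
  rw [Set.indicator_of_mem hmem, Pi.one_apply, mul_one, Kk]
  apply ENNReal.ofReal_le_ofReal
  have hd0 : 0 < d := by linarith
  have : (1 / 4 : ℝ) ^ j = 1 / (2 ^ j) ^ 2 := by
    rw [← pow_mul, mul_comm j 2, pow_mul, one_div, inv_pow]; norm_num
  rw [this]
  set y : ℝ := 2 ^ j with hy
  have hy0 : 0 < y := by positivity
  have e : 8 / δ * (1 / y ^ 2) = 2 * δ * 4 / (y * δ) ^ 2 := by field_simp; ring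
  rw [e, ← hd', div_le_div_iff₀ (by positivity) (by positivity)]
  have h4 : (y * δ) ^ 2 ≤ 4 * d ^ 2 := by nlinarith [mul_pos hy0 h0]
  have h5 : 1 - (1 - δ) ^ 2 ≤ 2 * δ := by nlinarith
  have h6 : 0 ≤ 1 - (1 - δ) ^ 2 := by nlinarith
  nlinarith [mul_le_mul h5 h4 (by positivity) (by positivity)]

lemma measurable_den (r : ℝ) : Measurable fun q : ℝ × ℂ => den r q.1 q.2 := by
  unfold den; fun_prop

lemma measurable_Kk (r : ℝ) : Measurable fun q : ℝ × ℂ => Kk r q.1 q.2 := by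
  unfold Kk
  have := measurable_den r
  fun_prop

lemma measurable_lb (r : ℝ) : Measurable fun q : ℝ × ℂ => lb r q.1 q.2 := by
  unfold lb
  have := measurable_den r
  fun_prop

lemma measurable_Nk (r : ℝ) : Measurable fun q : ℝ × ℂ => Nk r q.1 q.2 := by
  unfold Nk
  have := measurable_den r
  have := measurable_lb r
  refine Measurable.ite (measurableSet_lt ?_ ?_) ?_ measurable_const <;> fun_prop


lemma jensen_lintegral {α : Type*} [MeasurableSpace α] (m : Measure α) {p : ℝ} (hp : 1 < p)
    {g : α → ℝ≥0∞} (hg : AEMeasurable g m) :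
    (∫⁻ a, g a ∂m) ^ p ≤ m Set.univ ^ (p - 1) * ∫⁻ a, g a ^ p ∂m := by
  have hq := Real.HolderConjugate.conjExponent hp
  have h := ENNReal.lintegral_mul_le_Lp_mul_Lq m hq hg (g := fun _ => 1) aemeasurable_const
  simp only [Pi.mul_apply, mul_one, ENNReal.one_rpow, lintegral_const, one_mul] at h
  have hp0 : 0 < p := by linarith
  calc (∫⁻ a, g a ∂m) ^ p
      ≤ ((∫⁻ a, g a ^ p ∂m) ^ (1 / p) * m Set.univ ^ (1 / p.conjExponent)) ^ p := by
        gcongr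
    _ = _ := by
        rw [ENNReal.mul_rpow_of_nonneg _ _ hp0.le, ← ENNReal.rpow_mul, ← ENNReal.rpow_mul,
          one_div_mul_cancel hp0.ne', ENNReal.rpow_one, mul_comm]
        congr 2
        rw [Real.conjExponent]
        field_simp

lemma jensen_tsum {p : ℝ} (hp : 1 < p) (X : ℕ → ℝ≥0∞) :
    (∑' k, (2⁻¹ : ℝ≥0∞) ^ k * X k) ^ p ≤ 2 ^ (p - 1) * ∑' k, (2⁻¹ : ℝ≥0∞) ^ k * X k ^ p := by
  set m : Measure ℕ := Measure.sum (fun k : ℕ => (2⁻¹ : ℝ≥0∞) ^ k • Measure.dirac k) with hm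
  have hi : ∀ Y : ℕ → ℝ≥0∞, ∫⁻ k, Y k ∂m = ∑' k, (2⁻¹ : ℝ≥0∞) ^ k * Y k := by
    intro Y
    rw [hm, lintegral_sum_measure]
    congr 1; ext k
    rw [lintegral_smul_measure, lintegral_dirac]; rfl
  have hu : m Set.univ = 2 := by
    rw [← lintegral_one, hi]
    simp only [mul_one]
    exact ENNReal.tsum_geometric_two
  have := jensen_lintegral m hp (g := X) (measurable_of_countable _).aemeasurable
  rwa [hi, hi, hu] at this

lemma add3_rpow {p : ℝ} (hp : 0 ≤ p) (a b c : ℝ≥0∞) :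
    (a + b + c) ^ p ≤ 3 ^ p * (a ^ p + b ^ p + c ^ p) := by
  have h : a + b + c ≤ 3 * max (max a b) c := by
    have : (3 : ℝ≥0∞) * max (max a b) c =
      max (max a b) c + max (max a b) c + max (max a b) c := by ring
    rw [this]
    gcongr
    · exact (le_max_left _ _).trans (le_max_left _ _)
    · exact (le_max_right _ _).trans (le_max_left _ _)
    · exact (le_max_right _ _)
  calc (a + b + c) ^ p ≤ (3 * max (max a b) c) ^ p := by gcongr
    _ = 3 ^ p * (max (max a b) c) ^ p := ENNReal.mul_rpow_of_nonneg _ _ hp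
    _ ≤ _ := by
      gcongr
      rcases max_choice (max a b) c with h | h <;> rw [h]
      · rcases max_choice a b with h | h <;> rw [h]
        · rw [add_assoc]; exact le_self_add
        · rw [add_comm (a ^ p), add_assoc]; exact le_self_add
      · exact le_add_self

lemma lintegral_abs_rpow (α : ℝ) {R : ℝ} (hR : 0 < R) :
    ∫⁻ φ in Set.Icc (α - R) (α + R), ENNReal.ofReal (|φ - α| ^ (-(1 / 2) : ℝ))
      ≤ ENNReal.ofReal (4 * R ^ (1 / 2 : ℝ)) := by
  have h1 : IntervalIntegrable (fun x : ℝ => x ^ (-(1 / 2) : ℝ)) volume 0 R :=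
    intervalIntegral.intervalIntegrable_rpow' (by norm_num)
  have hv : ∫ x in (0 : ℝ)..R, x ^ (-(1 / 2) : ℝ) = 2 * R ^ (1 / 2 : ℝ) := by
    rw [integral_rpow (Or.inl (by norm_num))]
    norm_num
    ring
  have hA : ∫⁻ x in Set.Ioc 0 R, ENNReal.ofReal (|x| ^ (-(1 / 2) : ℝ))
      = ENNReal.ofReal (2 * R ^ (1 / 2 : ℝ)) := by
    rw [← hv, intervalIntegral.integral_of_le hR.le, ofReal_integral_eq_lintegral_ofReal]
    · apply setLIntegral_congr_fun measurableSet_Ioc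
      intro x hx
      simp only [abs_of_pos hx.1]
    · exact (intervalIntegrable_iff_integrableOn_Ioc_of_le hR.le).1 h1
    · filter_upwards [ae_restrict_mem measurableSet_Ioc] with x hx
      exact Real.rpow_nonneg hx.1.le _
  have hB : ∫⁻ x in Set.Ico (-R) 0, ENNReal.ofReal (|x| ^ (-(1 / 2) : ℝ))
      = ENNReal.ofReal (2 * R ^ (1 / 2 : ℝ)) := by
    rw [← hA]
    have := (Measure.measurePreserving_neg (volume : Measure ℝ)).setLIntegral_comp_preimage
      (measurableSet_Ioc (a := (0 : ℝ)) (b := R))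
      (f := fun x => ENNReal.ofReal (|x| ^ (-(1 / 2) : ℝ))) (by fun_prop)
    rw [← this]
    simp
  have hC : ∫⁻ φ in Set.Icc (α - R) (α + R), ENNReal.ofReal (|φ - α| ^ (-(1 / 2) : ℝ))
      = ∫⁻ x in Set.Icc (-R) R, ENNReal.ofReal (|x| ^ (-(1 / 2) : ℝ)) := by
    have := (measurePreserving_sub_right (volume : Measure ℝ) α).setLIntegral_comp_preimage
      (measurableSet_Icc (a := -R) (b := R))
      (f := fun x => ENNReal.ofReal (|x| ^ (-(1 / 2) : ℝ))) (by fun_prop)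
    rw [← this]
    have e : (fun x => x - α) ⁻¹' Set.Icc (-R) R = Set.Icc (α - R) (α + R) := by
      ext x; simp only [Set.mem_preimage, Set.mem_Icc]
      constructor <;> rintro ⟨h1, h2⟩ <;> constructor <;> linarith
    rw [e]
  have hsub : (Set.Icc (-R) R : Set ℝ) ⊆ (Set.Ico (-R) 0 ∪ {0}) ∪ Set.Ioc 0 R := by
    intro x hx
    rcases lt_trichotomy x 0 with h | h | h
    · exact Or.inl (Or.inl ⟨hx.1, h⟩)
    · exact Or.inl (Or.inr h)
    · exact Or.inr ⟨h, hx.2⟩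
  rw [hC]
  calc _ ≤ ∫⁻ x in (Set.Ico (-R) 0 ∪ {0}) ∪ Set.Ioc 0 R, ENNReal.ofReal (|x| ^ (-(1 / 2) : ℝ)) :=
        lintegral_mono_set hsub
    _ ≤ (∫⁻ x in (Set.Ico (-R) 0 ∪ {0}), ENNReal.ofReal (|x| ^ (-(1 / 2) : ℝ)))
        + ∫⁻ x in Set.Ioc 0 R, ENNReal.ofReal (|x| ^ (-(1 / 2) : ℝ)) := lintegral_union_le _ _ _
    _ ≤ ((∫⁻ x in (Set.Ico (-R) 0), ENNReal.ofReal (|x| ^ (-(1 / 2) : ℝ)))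
         + ∫⁻ x in {0}, ENNReal.ofReal (|x| ^ (-(1 / 2) : ℝ)))
        + ∫⁻ x in Set.Ioc 0 R, ENNReal.ofReal (|x| ^ (-(1 / 2) : ℝ)) := by
        gcongr; exact lintegral_union_le _ _ _
    _ = _ := by
        rw [hA, hB, setLIntegral_measure_zero _ _ (by simp), add_zero,
          ← ENNReal.ofReal_add (by positivity) (by positivity)]
        congr 1; ring

/-- The `p`-th power of the near kernel is integrable in the angle, uniformly. -/
lemma kernel_integral {p : ℝ} (hp : 1 < p) {δ : ℝ} (h0 : 0 < δ) (h1 : δ ≤ 1 / 30) (a : ℝ) {h : ℝ}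
    (hh : h ≤ 2 * Real.pi * δ) {ζ : ℂ} (hζ : ‖ζ‖ < 1) :
    ∫⁻ φ in Set.Ioc a (a + h), Nk (1 - δ) φ ζ ^ p ≤
      ENNReal.ofReal ((2 * p) ^ p * 200 * δ) := by
  have hpi := Real.pi_pos
  have hp0 : 0 < p := by linarith
  by_cases hne : ∃ φ ∈ Set.Ioc a (a + h), Nk (1 - δ) φ ζ ≠ 0
  swap
  · push Not at hne
    rw [setLIntegral_congr_fun (g := fun _ => 0) measurableSet_Ioc]
    · simp
    · intro φ hφ
      simp [hne φ hφ, hp0]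
  obtain ⟨φ₀, hφ₀, hN⟩ := hne
  obtain ⟨-, -, -, -, α, hα, hζα⟩ := Nk_ne_zero h0 (by linarith) φ₀ hζ hN
  have hclose : ∀ φ ∈ Set.Ioc a (a + h), |φ - α| ≤ 13 * Real.pi * δ := by
    intro φ hφ
    have h2 : |φ - φ₀| ≤ 2 * Real.pi * δ := by
      rw [abs_le]; constructor <;> linarith [hφ.1, hφ.2, hφ₀.1, hφ₀.2]
    have := abs_sub_le φ φ₀ α
    rw [abs_sub_comm φ₀ α] at this
    linarith
  have hpt : ∀ φ ∈ Set.Ioc a (a + h), φ ≠ α → Nk (1 - δ) φ ζ ^ p ≤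
      ENNReal.ofReal ((2 * p) ^ p * (6 * Real.pi * δ) ^ (1 / 2 : ℝ)) *
        ENNReal.ofReal (|φ - α| ^ (-(1 / 2) : ℝ)) := by
    intro φ hφ hφα
    by_cases hz : Nk (1 - δ) φ ζ = 0
    · simp [hz, hp0]
    have hb := Nk_ne_zero h0 (by linarith) φ hζ hz
    have hlow : |φ - α| / Real.pi ≤ ‖(1 - δ : ℝ) * Complex.exp (φ * I) - ζ‖ := by
      have hc := hclose φ hφ
      have e : ((1 - δ : ℝ) * Complex.exp (φ * I) - ζ) * Complex.exp (-(α * I))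
          = (1 - δ : ℝ) * Complex.exp ((φ - α : ℝ) * I) - ‖ζ‖ := by
        conv_lhs => rw [hζα]
        rw [sub_mul, mul_assoc, mul_assoc, ← Complex.exp_add, ← Complex.exp_add]
        simp only [add_neg_cancel, Complex.exp_zero, mul_one]
        congr 3; push_cast; ring
      have hn : ‖(1 - δ : ℝ) * Complex.exp (φ * I) - ζ‖ =
          ‖((1 - δ : ℝ) * Complex.exp (φ * I) - ζ) * Complex.exp (-(α * I))‖ := by
        rw [norm_mul, ← neg_mul, ← ofReal_neg, norm_exp_ofReal_mul_I, mul_one]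
      rw [hn, e]
      refine le_trans ?_ (abs_im_le_norm _)
      rw [sub_im, ofReal_im, sub_zero, im_ofReal_mul, exp_ofReal_mul_I_im, abs_mul]
      have hs := Real.mul_abs_le_abs_sin (x := φ - α) (by nlinarith)
      rw [abs_of_pos (show 0 < 1 - δ by linarith)]
      have : |φ - α| / Real.pi = 1 / 2 * (2 / Real.pi * |φ - α|) := by field_simp
      rw [this]
      apply mul_le_mul (by linarith) hs (by positivity) (by linarith)
    have hpos : 0 < |φ - α| := abs_pos.2 (sub_ne_zero.2 hφα)
    unfold Nk at hz ⊢
    split_ifs at hz ⊢ with hnear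
    · have hx0 : 0 < ‖(1 - δ : ℝ) * Complex.exp (φ * I) - ζ‖ := lt_of_lt_of_le (by positivity) hlow
      unfold lb at hz ⊢
      set x := ‖(1 - δ : ℝ) * Complex.exp (φ * I) - ζ‖
      set d := den (1 - δ) φ ζ
      have hd0 : 0 < d := by nlinarith
      rw [← Real.log_inv, inv_div] at hz ⊢
      have hl0 : 0 ≤ Real.log (d / x) := by
        apply Real.log_nonneg
        rw [one_le_div hx0]; linarith
      rw [ENNReal.ofReal_rpow_of_nonneg hl0 hp0.le, ← ENNReal.ofReal_mul (by positivity)]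
      apply ENNReal.ofReal_le_ofReal
      have hlog := Real.log_le_rpow_div (show 0 ≤ d / x by positivity)
        (show 0 < 1 / (2 * p) by positivity)
      calc Real.log (d / x) ^ p ≤ ((d / x) ^ (1 / (2 * p)) / (1 / (2 * p))) ^ p := by gcongr
        _ = (2 * p) ^ p * (d / x) ^ (1 / 2 : ℝ) := by
          rw [div_div_eq_mul_div, div_one, Real.mul_rpow (by positivity) (by positivity),
            ← Real.rpow_mul (by positivity), mul_comm]
          congr 2; field_simp
        _ ≤ (2 * p) ^ p * (6 * Real.pi * δ * |φ - α|⁻¹) ^ (1 / 2 : ℝ) := by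
          gcongr
          calc d / x ≤ (6 * δ) / (|φ - α| / Real.pi) := by
                gcongr
                linarith [hb.2.1]
            _ = _ := by field_simp
        _ = _ := by
          rw [Real.mul_rpow (x := 6 * Real.pi * δ) (by positivity) (by positivity),
            Real.rpow_neg (by positivity), Real.inv_rpow (by positivity)]
          ring
    · exact absurd rfl hz
  have hR : 0 < 13 * Real.pi * δ := by positivity
  calc ∫⁻ φ in Set.Ioc a (a + h), Nk (1 - δ) φ ζ ^ p
      ≤ ∫⁻ φ in Set.Ioc a (a + h), ENNReal.ofReal ((2 * p) ^ p * (6 * Real.pi * δ) ^ (1 / 2 : ℝ)) *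
        ENNReal.ofReal (|φ - α| ^ (-(1 / 2) : ℝ)) := by
        apply lintegral_mono_ae
        have hα' : ∀ᵐ φ ∂(volume.restrict (Set.Ioc a (a + h))), φ ≠ α :=
          ae_restrict_of_ae (Measure.ae_ne _ α)
        filter_upwards [ae_restrict_mem measurableSet_Ioc, hα'] with φ hφ hφ'
        exact hpt φ hφ hφ'
    _ = ENNReal.ofReal ((2 * p) ^ p * (6 * Real.pi * δ) ^ (1 / 2 : ℝ)) *
        ∫⁻ φ in Set.Ioc a (a + h), ENNReal.ofReal (|φ - α| ^ (-(1 / 2) : ℝ)) := by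
        rw [lintegral_const_mul _ (by fun_prop)]
    _ ≤ ENNReal.ofReal ((2 * p) ^ p * (6 * Real.pi * δ) ^ (1 / 2 : ℝ)) *
        ENNReal.ofReal (4 * (13 * Real.pi * δ) ^ (1 / 2 : ℝ)) := by
        gcongr
        refine le_trans (lintegral_mono_set ?_) (lintegral_abs_rpow α hR)
        intro φ hφ
        have := abs_le.1 (hclose φ hφ)
        constructor <;> linarith [this.1, this.2]
    _ ≤ _ := by
        rw [← ENNReal.ofReal_mul (by positivity)]
        apply ENNReal.ofReal_le_ofReal
        have e : (2 * p) ^ p * (6 * Real.pi * δ) ^ (1 / 2 : ℝ) * (4 * (13 * Real.pi * δ) ^ (1 / 2 : ℝ))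
            = (2 * p) ^ p * (4 * ((6 * Real.pi * δ) * (13 * Real.pi * δ)) ^ (1 / 2 : ℝ)) := by
          rw [Real.mul_rpow (x := 6 * Real.pi * δ) (by positivity) (by positivity)]; ring
        rw [e, mul_assoc _ 200 δ]
        refine mul_le_mul_of_nonneg_left ?_ (by positivity)
        have h3 : ((6 * Real.pi * δ) * (13 * Real.pi * δ)) ^ (1 / 2 : ℝ) ≤ 50 * δ := by
          rw [← Real.sqrt_eq_rpow]
          apply Real.sqrt_le_iff.2 ⟨by positivity, ?_⟩
          have : Real.pi < 4 := Real.pi_lt_four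
          have h5 : Real.pi ^ 2 ≤ 16 := by nlinarith
          nlinarith [sq_nonneg δ]
        linarith


/-- Estimate of the near part over one arc. -/
lemma near_arc {p : ℝ} (hp : 1 < p) (m lam : Measure ℂ) [SFinite m] [IsFiniteMeasure lam]
    (hm : ∀ᵐ ζ ∂m, ‖ζ‖ < 1)
    (hml : m.withDensity (fun ζ => ENNReal.ofReal (1 - ‖ζ‖)) ≤ lam)
    {δ : ℝ} (h0 : 0 < δ) (h1 : δ ≤ 1 / 30) (a : ℝ) {h : ℝ}
    (hh1 : Real.pi * δ ≤ h) (hh : h ≤ 2 * Real.pi * δ) :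
    ∫⁻ φ in Set.Ioc a (a + h), (∫⁻ ζ, Nk (1 - δ) φ ζ ∂m) ^ p ≤
      ENNReal.ofReal ((2 * p) ^ p * 200 * (16 / (3 * δ)) ^ p) *
        ∫⁻ φ in Set.Ioc a (a + h), lam (carlesonBox φ (15 * δ)) ^ p := by
  have hpi := Real.pi_pos
  have hp0 : 0 < p := by linarith
  set Q : Set ℂ := {ζ | 3 / 16 * δ ≤ 1 - ‖ζ‖} ∩ carlesonBox a (13 * δ) with hQ
  have hQm : MeasurableSet Q :=
    (measurableSet_le measurable_const (by fun_prop)).inter (measurableSet_box _ _)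
  have hmN := measurable_Nk (1 - δ)
  -- step 1
  have s1 : ∀ φ ∈ Set.Ioc a (a + h), (∫⁻ ζ, Nk (1 - δ) φ ζ ∂m) ^ p ≤
      m Q ^ (p - 1) * ∫⁻ ζ in Q, Nk (1 - δ) φ ζ ^ p ∂m := by
    intro φ hφ
    have e : ∫⁻ ζ, Nk (1 - δ) φ ζ ∂m = ∫⁻ ζ in Q, Nk (1 - δ) φ ζ ∂m := by
      rw [← lintegral_indicator hQm]
      apply lintegral_congr_ae
      filter_upwards [hm] with ζ hζ
      by_cases hz : ζ ∈ Q
      · rw [Set.indicator_of_mem hz]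
      · rw [Set.indicator_of_notMem hz]
        by_contra hc
        have := Nk_ne_zero h0 (by linarith) φ hζ hc
        apply hz
        refine ⟨this.1, box_mono (by linarith) ?_ this.2.2⟩
        rw [abs_le]; constructor <;> nlinarith [hφ.1, hφ.2]
    rw [e]
    have := jensen_lintegral (m.restrict Q) hp (g := fun ζ => Nk (1 - δ) φ ζ)
      (hmN.comp (measurable_const.prodMk measurable_id)).aemeasurable
    rwa [Measure.restrict_apply_univ] at this
  -- mass comparison
  have s2 : ∀ φ ∈ Set.Ioc a (a + h),
      ENNReal.ofReal (3 / 16 * δ) * m Q ≤ lam (carlesonBox φ (15 * δ)) := by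
    intro φ hφ
    calc ENNReal.ofReal (3 / 16 * δ) * m Q = ∫⁻ ζ in Q, ENNReal.ofReal (3 / 16 * δ) ∂m := by
          rw [setLIntegral_const]
      _ ≤ ∫⁻ ζ in Q, ENNReal.ofReal (1 - ‖ζ‖) ∂m := by
          apply setLIntegral_mono' hQm
          intro ζ hζ
          exact ENNReal.ofReal_le_ofReal hζ.1
      _ = m.withDensity (fun ζ => ENNReal.ofReal (1 - ‖ζ‖)) Q := by rw [withDensity_apply _ hQm]
      _ ≤ lam Q := hml Q
      _ ≤ lam (carlesonBox φ (15 * δ)) := by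
          apply measure_mono
          refine Set.inter_subset_right.trans (box_mono (by linarith) ?_)
          rw [abs_le]; constructor <;> nlinarith [hφ.1, hφ.2]
  have hmQ : m Q ≠ ⊤ := by
    have := s2 (a + h) ⟨by nlinarith, le_rfl⟩
    intro htop
    rw [htop, ENNReal.mul_top] at this
    · exact (measure_lt_top lam _).ne (top_le_iff.1 this)
    · simp; positivity
  -- step 3
  have s3 : ∫⁻ φ in Set.Ioc a (a + h), (∫⁻ ζ, Nk (1 - δ) φ ζ ∂m) ^ p ≤
      m Q ^ p * ENNReal.ofReal ((2 * p) ^ p * 200 * δ) := by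
    calc _ ≤ ∫⁻ φ in Set.Ioc a (a + h), m Q ^ (p - 1) * ∫⁻ ζ in Q, Nk (1 - δ) φ ζ ^ p ∂m :=
          setLIntegral_mono' measurableSet_Ioc s1
      _ = m Q ^ (p - 1) * ∫⁻ φ in Set.Ioc a (a + h), ∫⁻ ζ in Q, Nk (1 - δ) φ ζ ^ p ∂m := by
          rw [lintegral_const_mul']
          exact ENNReal.rpow_ne_top_of_nonneg (by linarith) hmQ
      _ = m Q ^ (p - 1) * ∫⁻ ζ in Q, ∫⁻ φ in Set.Ioc a (a + h), Nk (1 - δ) φ ζ ^ p ∂volume ∂m := by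
          rw [lintegral_lintegral_swap]
          exact (hmN.pow_const p).aemeasurable
      _ ≤ m Q ^ (p - 1) * ∫⁻ ζ in Q, ENNReal.ofReal ((2 * p) ^ p * 200 * δ) ∂m := by
          gcongr 1
          apply lintegral_mono_ae
          filter_upwards [ae_restrict_of_ae hm] with ζ hζ
          exact kernel_integral hp h0 h1 a hh hζ
      _ = m Q ^ (p - 1) * m Q * ENNReal.ofReal ((2 * p) ^ p * 200 * δ) := by
          rw [setLIntegral_const]; ring
      _ = _ := by
          congr 1
          conv_lhs => rw [← ENNReal.rpow_one (m Q), ← ENNReal.rpow_mul]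
          rw [← ENNReal.rpow_add_of_nonneg _ _ (by linarith) (by norm_num)]
          congr 1; ring
  refine s3.trans ?_
  have hh0 : 0 ≤ h := by nlinarith
  have s4 : ENNReal.ofReal h * (ENNReal.ofReal (3 / 16 * δ) * m Q) ^ p ≤
      ∫⁻ φ in Set.Ioc a (a + h), lam (carlesonBox φ (15 * δ)) ^ p := by
    calc _ = ∫⁻ φ in Set.Ioc a (a + h), (ENNReal.ofReal (3 / 16 * δ) * m Q) ^ p := by
          rw [setLIntegral_const, Real.volume_Ioc, mul_comm]
          congr 2; ring
      _ ≤ _ := by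
          apply setLIntegral_mono' measurableSet_Ioc
          intro φ hφ
          gcongr
          exact s2 φ hφ
  refine le_trans ?_ (mul_le_mul_right s4 _)
  rw [ENNReal.mul_rpow_of_nonneg _ _ hp0.le, ENNReal.ofReal_rpow_of_pos (by positivity), mul_comm,
    ← mul_assoc, ← mul_assoc, ← ENNReal.ofReal_mul (by positivity),
    ← ENNReal.ofReal_mul (by positivity)]
  refine mul_le_mul_left (ENNReal.ofReal_le_ofReal ?_) _
  have e : (16 / (3 * δ)) ^ p * (3 / 16 * δ) ^ p = 1 := by
    rw [← Real.mul_rpow (by positivity) (by positivity)]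
    have : 16 / (3 * δ) * (3 / 16 * δ) = 1 := by field_simp
    rw [this, Real.one_rpow]
  calc (2 * p) ^ p * 200 * δ = (2 * p) ^ p * 200 * δ * 1 := by ring
    _ ≤ (2 * p) ^ p * 200 * h * 1 := by
      gcongr
      nlinarith [Real.pi_gt_three]
    _ = _ := by rw [← e]; ring

lemma Ioc_arcs (n : ℕ) {h : ℝ} (hh : 0 ≤ h) (F : ℝ → ℝ≥0∞) :
    ∫⁻ φ in Set.Ioc 0 (n * h), F φ =
      ∑ j ∈ Finset.range n, ∫⁻ φ in Set.Ioc (j * h) (j * h + h), F φ := by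
  induction n with
  | zero => simp
  | succ n ih =>
    rw [Finset.sum_range_succ, ← ih, ← lintegral_union measurableSet_Ioc]
    · rw [Set.Ioc_union_Ioc_eq_Ioc (by positivity) (by linarith)]
      congr 3; push_cast; ring
    · rw [Set.Ioc_disjoint_Ioc]
      simp

lemma near_total {p : ℝ} (hp : 1 < p) (m lam : Measure ℂ) [SFinite m] [IsFiniteMeasure lam]
    (hm : ∀ᵐ ζ ∂m, ‖ζ‖ < 1)
    (hml : m.withDensity (fun ζ => ENNReal.ofReal (1 - ‖ζ‖)) ≤ lam)
    {δ : ℝ} (h0 : 0 < δ) (h1 : δ ≤ 1 / 30) :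
    ∫⁻ φ in Set.Ioc 0 (2 * Real.pi), (∫⁻ ζ, Nk (1 - δ) φ ζ ∂m) ^ p ≤
      ENNReal.ofReal ((2 * p) ^ p * 200 * (16 / (3 * δ)) ^ p) *
        ∫⁻ φ in Set.Ioc 0 (2 * Real.pi), lam (carlesonBox φ (15 * δ)) ^ p := by
  have hpi := Real.pi_pos
  set n := ⌈1 / δ⌉₊ with hn
  have hn1 : 1 / δ ≤ n := Nat.le_ceil _
  have hn2 : (n : ℝ) < 1 / δ + 1 := Nat.ceil_lt_add_one (by positivity)
  have hd : 1 ≤ 1 / δ := by rw [one_le_div h0]; linarith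
  have hn0 : (0 : ℝ) < n := by linarith
  set h := 2 * Real.pi / n with hh
  have e : 2 * Real.pi = n * h := by rw [hh]; field_simp
  have a1 : 1 ≤ n * δ := by rwa [div_le_iff₀ h0] at hn1
  have a2 : n * δ ≤ 2 := by
    have : (n : ℝ) ≤ 2 * (1 / δ) := by linarith
    calc n * δ ≤ 2 * (1 / δ) * δ := by gcongr
      _ = 2 := by field_simp
  have b1 : Real.pi * δ ≤ h := by rw [hh, le_div_iff₀ hn0]; nlinarith
  have b2 : h ≤ 2 * Real.pi * δ := by rw [hh, div_le_iff₀ hn0]; nlinarith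
  have hh0 : 0 ≤ h := by positivity
  rw [e, Ioc_arcs n hh0, Ioc_arcs n hh0, Finset.mul_sum]
  apply Finset.sum_le_sum
  intro j _
  exact near_arc hp m lam hm hml h0 h1 _ b1 b2

lemma far_pointwise {p : ℝ} (hp : 1 < p) (lam : Measure ℂ) [IsFiniteMeasure lam]
    (hl : ∀ᵐ ζ ∂lam, ‖ζ‖ ≤ 1) {δ : ℝ} (h0 : 0 < δ) (h1 : δ < 1) (φ : ℝ) :
    (∫⁻ ζ, Kk (1 - δ) φ ζ ∂lam) ^ p ≤ ENNReal.ofReal (8 / δ) ^ p * (2 ^ (p - 1) *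
      ∑' k : ℕ, (2⁻¹ : ℝ≥0∞) ^ k * ((2⁻¹ : ℝ≥0∞) ^ k * lam (carlesonBox φ (2 * (2 ^ k * δ)))) ^ p) := by
  have hp0 : 0 < p := by linarith
  have key : ∫⁻ ζ, Kk (1 - δ) φ ζ ∂lam ≤ ENNReal.ofReal (8 / δ) *
      ∑' k : ℕ, (2⁻¹ : ℝ≥0∞) ^ k * ((2⁻¹ : ℝ≥0∞) ^ k * lam (carlesonBox φ (2 * (2 ^ k * δ)))) := by
    calc _ ≤ ∫⁻ ζ, ∑' k : ℕ, ENNReal.ofReal (8 / δ * (1 / 4) ^ k) *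
          (carlesonBox φ (2 * (2 ^ k * δ))).indicator 1 ζ ∂lam := by
          apply lintegral_mono_ae
          filter_upwards [hl] with ζ hζ
          exact Kk_dyadic h0 h1 φ hζ
      _ = ∑' k : ℕ, ENNReal.ofReal (8 / δ * (1 / 4) ^ k) * lam (carlesonBox φ (2 * (2 ^ k * δ))) := by
          rw [lintegral_tsum]
          · congr 1; ext k
            rw [lintegral_const_mul', lintegral_indicator_one (measurableSet_box _ _)]
            exact ENNReal.ofReal_ne_top
          · intro k
            exact ((measurable_one.indicator (measurableSet_box _ _)).const_mul _).aemeasurable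
      _ = _ := by
          rw [← ENNReal.tsum_mul_left]
          congr 1; ext k
          rw [ENNReal.ofReal_mul (by positivity), ENNReal.ofReal_pow (by norm_num), mul_assoc]
          congr 1
          rw [← mul_assoc ((2⁻¹ : ℝ≥0∞) ^ k), ← mul_pow]
          congr 2
          rw [show (1 / 4 : ℝ) = 2⁻¹ * 2⁻¹ by norm_num, ENNReal.ofReal_mul (by norm_num),
            ENNReal.ofReal_inv_of_pos (by norm_num)]
          simp
  calc _ ≤ _ := ENNReal.rpow_le_rpow key hp0.le
    _ = _ := ENNReal.mul_rpow_of_nonneg _ _ hp0.le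
    _ ≤ _ := by
      gcongr
      exact jensen_tsum hp _

lemma far_total {p γ : ℝ} (hp : 1 < p) (hγ1 : γ ≤ 1) (lam : Measure ℂ)
    [IsFiniteMeasure lam] (hl : ∀ᵐ ζ ∂lam, ‖ζ‖ ≤ 1) {D : ℝ} (hD : 0 ≤ D)
    (hL : ∀ s : ℝ, 0 < s → ∫⁻ φ in Set.Ioc 0 (2 * Real.pi), lam (carlesonBox φ s) ^ p
      ≤ ENNReal.ofReal (D * s ^ (γ * p)))
    {δ : ℝ} (h0 : 0 < δ) (h1 : δ < 1) :
    ∫⁻ φ in Set.Ioc 0 (2 * Real.pi), (∫⁻ ζ, Kk (1 - δ) φ ζ ∂lam) ^ p ≤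
      ENNReal.ofReal (32 ^ p * 2 * D * δ ^ ((γ - 1) * p)) := by
  have hp0 : 0 < p := by linarith
  have hmeas : ∀ s, Measurable fun φ : ℝ => lam (carlesonBox φ s) := measurable_lam_box lam
  calc _ ≤ ∫⁻ φ in Set.Ioc 0 (2 * Real.pi), ENNReal.ofReal (8 / δ) ^ p * (2 ^ (p - 1) *
      ∑' k : ℕ, (2⁻¹ : ℝ≥0∞) ^ k * ((2⁻¹ : ℝ≥0∞) ^ k * lam (carlesonBox φ (2 * (2 ^ k * δ)))) ^ p) :=
        lintegral_mono fun φ => far_pointwise hp lam hl h0 h1 φ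
    _ = ENNReal.ofReal (8 / δ) ^ p * (2 ^ (p - 1) * ∑' k : ℕ, (2⁻¹ : ℝ≥0∞) ^ k *
          (((2⁻¹ : ℝ≥0∞) ^ k) ^ p * ∫⁻ φ in Set.Ioc 0 (2 * Real.pi),
            lam (carlesonBox φ (2 * (2 ^ k * δ))) ^ p)) := by
        rw [lintegral_const_mul', lintegral_const_mul', lintegral_tsum]
        · congr 3; ext k
          rw [lintegral_const_mul' _ _ (by simp)]
          congr 1
          simp_rw [ENNReal.mul_rpow_of_nonneg _ _ hp0.le]
          rw [lintegral_const_mul']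
          exact ENNReal.rpow_ne_top_of_nonneg hp0.le (by simp)
        · intro k
          exact ((((hmeas _).const_mul _).pow_const p).const_mul _).aemeasurable
        · exact ENNReal.rpow_ne_top_of_nonneg (by linarith) (by simp)
        · exact ENNReal.rpow_ne_top_of_nonneg (by linarith) (by simp)
    _ ≤ ENNReal.ofReal (8 / δ) ^ p * (2 ^ (p - 1) * ∑' k : ℕ, (2⁻¹ : ℝ≥0∞) ^ k *
          ENNReal.ofReal (2 ^ p * D * δ ^ (γ * p))) := by
        gcongr with k
        have h2 : ((2⁻¹ : ℝ≥0∞) ^ k) ^ p = ENNReal.ofReal (((2⁻¹ : ℝ) ^ k) ^ p) := by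
          rw [← ENNReal.ofReal_rpow_of_pos (by positivity), ENNReal.ofReal_pow (by norm_num),
            ENNReal.ofReal_inv_of_pos (by norm_num)]
          simp
        refine (mul_le_mul_right (hL _ (by positivity)) _).trans ?_
        rw [h2, ← ENNReal.ofReal_mul (by positivity)]
        apply ENNReal.ofReal_le_ofReal
        have h3 : (2 * (2 ^ k * δ)) ^ (γ * p) ≤ 2 ^ p * ((2 : ℝ) ^ k) ^ p * δ ^ (γ * p) := by
          rw [Real.mul_rpow (by norm_num) (by positivity), Real.mul_rpow (by positivity) h0.le,
            ← mul_assoc]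
          have hgp : γ * p ≤ p := by nlinarith
          gcongr
          · norm_num
          · exact one_le_pow₀ (by norm_num)
        calc _ ≤ ((2⁻¹ : ℝ) ^ k) ^ p * (D * (2 ^ p * ((2 : ℝ) ^ k) ^ p * δ ^ (γ * p))) := by gcongr
          _ = (((2⁻¹ : ℝ) ^ k) ^ p * ((2 : ℝ) ^ k) ^ p) * (2 ^ p * D * δ ^ (γ * p)) := by ring
          _ = _ := by
            rw [← Real.mul_rpow (by positivity) (by positivity), ← mul_pow]
            norm_num
    _ ≤ _ := by
        rw [ENNReal.tsum_mul_right, ENNReal.tsum_geometric_two,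
          ENNReal.ofReal_rpow_of_pos (by positivity)]
        have h4 : (2 : ℝ≥0∞) ^ (p - 1) = ENNReal.ofReal (2 ^ (p - 1)) := by
          rw [← ENNReal.ofReal_rpow_of_pos (by norm_num)]; simp
        have h5 : (2 : ℝ≥0∞) = ENNReal.ofReal 2 := by simp
        rw [h4]
        conv_lhs => rw [h5]
        rw [← ENNReal.ofReal_mul (by norm_num), ← ENNReal.ofReal_mul (by positivity),
          ← ENNReal.ofReal_mul (by positivity)]
        apply ENNReal.ofReal_le_ofReal
        have h6 : δ ^ ((γ - 1) * p) = δ ^ (γ * p) / δ ^ p := by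
          rw [← Real.rpow_sub h0]; congr 1; ring
        have h7 : (32 : ℝ) ^ p = 8 ^ p * 2 ^ p * 2 ^ p := by
          rw [← Real.mul_rpow (by norm_num) (by norm_num), ← Real.mul_rpow (by norm_num) (by norm_num)]
          norm_num
        have h8 : (2 : ℝ) ^ (p - 1) ≤ 2 ^ p := Real.rpow_le_rpow_of_exponent_le (by norm_num) (by linarith)
        rw [h6, h7, Real.div_rpow (by norm_num) h0.le]
        calc _ = 8 ^ p * 2 ^ p * 2 ^ (p - 1) * 2 * D * (δ ^ (γ * p) / δ ^ p) := by ring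
          _ ≤ _ := by gcongr


/-- the explicit constant in the upper estimate -/
noncomputable def upc (p C D : ℝ) : ℝ :=
  3 ^ p * ((2 * p) ^ p * 200 * (16 / 3) ^ p * (15 ^ p * D) + 4 ^ p * (32 ^ p * 2 * D)
    + |C| ^ p * (2 * Real.pi))

lemma upc_nonneg {p C D : ℝ} (hp : 1 < p) (hD : 0 ≤ D) : 0 ≤ upc p C D := by
  have := Real.pi_pos
  unfold upc; positivity

lemma upper_total {p γ : ℝ} (hp : 1 < p) (hγ1 : γ ≤ 1) (C : ℝ)
    (m lam : Measure ℂ) [SFinite m] [IsFiniteMeasure lam]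
    (hm : ∀ᵐ ζ ∂m, ‖ζ‖ < 1)
    (hml : m.withDensity (fun ζ => ENNReal.ofReal (1 - ‖ζ‖)) ≤ lam)
    (hl : ∀ᵐ ζ ∂lam, ‖ζ‖ ≤ 1) {D : ℝ} (hD : 0 ≤ D)
    (hL : ∀ s : ℝ, 0 < s → ∫⁻ φ in Set.Ioc 0 (2 * Real.pi), lam (carlesonBox φ s) ^ p
      ≤ ENNReal.ofReal (D * s ^ (γ * p)))
    {δ : ℝ} (h0 : 0 < δ) (h1 : δ ≤ 1 / 30) (F : ℝ → ℝ≥0∞)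
    (hF : ∀ φ, F φ ≤ ∫⁻ ζ, Nk (1 - δ) φ ζ ∂m + 4 * ∫⁻ ζ, Kk (1 - δ) φ ζ ∂lam + ‖C‖ₑ) :
    ∫⁻ φ in Set.Ioc 0 (2 * Real.pi), F φ ^ p ≤ ENNReal.ofReal (upc p C D * δ ^ ((γ - 1) * p)) := by
  have hp0 : 0 < p := by linarith
  have hpi := Real.pi_pos
  have mN : Measurable fun φ => ∫⁻ ζ, Nk (1 - δ) φ ζ ∂m := (measurable_Nk _).lintegral_prod_right'
  have mK : Measurable fun φ => ∫⁻ ζ, Kk (1 - δ) φ ζ ∂lam := (measurable_Kk _).lintegral_prod_right'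
  have hN := near_total hp m lam hm hml h0 h1
  have hK := far_total hp hγ1 lam hl hD hL h0 (by linarith)
  have h6 : δ ^ ((γ - 1) * p) = δ ^ (γ * p) / δ ^ p := by
    rw [← Real.rpow_sub h0]; congr 1; ring
  have hN' : ∫⁻ φ in Set.Ioc 0 (2 * Real.pi), (∫⁻ ζ, Nk (1 - δ) φ ζ ∂m) ^ p ≤
      ENNReal.ofReal ((2 * p) ^ p * 200 * (16 / 3) ^ p * (15 ^ p * D) * δ ^ ((γ - 1) * p)) := by
    refine hN.trans ((mul_le_mul_right (hL _ (by positivity)) _).trans ?_)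
    rw [← ENNReal.ofReal_mul (by positivity)]
    apply ENNReal.ofReal_le_ofReal
    have e1 : (16 / (3 * δ)) ^ p = (16 / 3) ^ p / δ ^ p := by
      rw [← Real.div_rpow (by norm_num) h0.le]; congr 1; field_simp
    have e2 : (15 * δ) ^ (γ * p) ≤ 15 ^ p * δ ^ (γ * p) := by
      rw [Real.mul_rpow (by norm_num) h0.le]
      have hgp : γ * p ≤ p := by nlinarith
      gcongr
      norm_num
    rw [e1, h6]
    calc _ ≤ (2 * p) ^ p * 200 * ((16 / 3) ^ p / δ ^ p) * (D * (15 ^ p * δ ^ (γ * p))) := by gcongr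
      _ = _ := by ring
  have hC' : ‖C‖ₑ ^ p * ENNReal.ofReal (2 * Real.pi) ≤
      ENNReal.ofReal (|C| ^ p * (2 * Real.pi) * δ ^ ((γ - 1) * p)) := by
    rw [Real.enorm_eq_ofReal_abs, ENNReal.ofReal_rpow_of_nonneg (abs_nonneg _) hp0.le,
      ← ENNReal.ofReal_mul (by positivity)]
    apply ENNReal.ofReal_le_ofReal
    apply le_mul_of_one_le_right (by positivity)
    exact Real.one_le_rpow_of_pos_of_le_one_of_nonpos h0 (by linarith)
      (mul_nonpos_of_nonpos_of_nonneg (by linarith) hp0.le)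
  calc _ ≤ ∫⁻ φ in Set.Ioc 0 (2 * Real.pi), 3 ^ p * ((∫⁻ ζ, Nk (1 - δ) φ ζ ∂m) ^ p
        + 4 ^ p * (∫⁻ ζ, Kk (1 - δ) φ ζ ∂lam) ^ p + ‖C‖ₑ ^ p) := by
        apply lintegral_mono
        intro φ
        refine (ENNReal.rpow_le_rpow (hF φ) hp0.le).trans ?_
        refine (add3_rpow hp0.le _ _ _).trans ?_
        rw [ENNReal.mul_rpow_of_nonneg _ _ hp0.le]
    _ = 3 ^ p * ((∫⁻ φ in Set.Ioc 0 (2 * Real.pi), (∫⁻ ζ, Nk (1 - δ) φ ζ ∂m) ^ p)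
        + 4 ^ p * (∫⁻ φ in Set.Ioc 0 (2 * Real.pi), (∫⁻ ζ, Kk (1 - δ) φ ζ ∂lam) ^ p)
        + ‖C‖ₑ ^ p * ENNReal.ofReal (2 * Real.pi)) := by
        rw [lintegral_const_mul' _ _ (ENNReal.rpow_ne_top_of_nonneg hp0.le (by simp)),
          lintegral_add_right _ measurable_const, lintegral_add_left (mN.pow_const p),
          lintegral_const_mul' _ _ (ENNReal.rpow_ne_top_of_nonneg hp0.le (by simp)),
          setLIntegral_const, Real.volume_Ioc, sub_zero]
    _ ≤ 3 ^ p * (ENNReal.ofReal ((2 * p) ^ p * 200 * (16 / 3) ^ p * (15 ^ p * D) * δ ^ ((γ - 1) * p))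
        + 4 ^ p * ENNReal.ofReal (32 ^ p * 2 * D * δ ^ ((γ - 1) * p))
        + ENNReal.ofReal (|C| ^ p * (2 * Real.pi) * δ ^ ((γ - 1) * p))) := by gcongr
    _ = _ := by
        have e3 : (3 : ℝ≥0∞) ^ p = ENNReal.ofReal (3 ^ p) := by
          rw [← ENNReal.ofReal_rpow_of_pos (by norm_num)]; simp
        have e4 : (4 : ℝ≥0∞) ^ p = ENNReal.ofReal (4 ^ p) := by
          rw [← ENNReal.ofReal_rpow_of_pos (by norm_num)]; simp
        rw [e3, e4, ← ENNReal.ofReal_mul (by positivity),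
          ← ENNReal.ofReal_add (by positivity) (by positivity),
          ← ENNReal.ofReal_add (by positivity) (by positivity), ← ENNReal.ofReal_mul (by positivity)]
        congr 1
        unfold upc; ring

/-- the unit circle parametrisation -/
noncomputable def ecirc (θ : ℝ) : ℂ := Complex.exp (θ * I)

lemma measurable_ecirc : Measurable ecirc := by unfold ecirc; fun_prop

lemma lintegral_lam (m lam : Measure ℂ) (ψ : Measure ℝ)
    (hlam : lam = m.withDensity (fun ζ => ENNReal.ofReal (1 - ‖ζ‖)) + ψ.map ecirc)
    {g : ℂ → ℝ≥0∞} (hg : Measurable g) :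
    ∫⁻ ζ, g ζ ∂lam = ∫⁻ ζ, ENNReal.ofReal (1 - ‖ζ‖) * g ζ ∂m + ∫⁻ θ, g (ecirc θ) ∂ψ := by
  rw [hlam, lintegral_add_measure, lintegral_map hg measurable_ecirc,
    lintegral_withDensity_eq_lintegral_mul _ (by fun_prop) hg]
  rfl

lemma Kk_meas (r φ : ℝ) : Measurable (Kk r φ) := by
  have h : Measurable ((fun q : ℝ × ℂ => Kk r q.1 q.2) ∘ (fun ζ => (φ, ζ))) :=
    (measurable_Kk r).comp measurable_prodMk_left
  exact h

lemma Nk_meas (r φ : ℝ) : Measurable (Nk r φ) := by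
  have h : Measurable ((fun q : ℝ × ℂ => Nk r q.1 q.2) ∘ (fun ζ => (φ, ζ))) :=
    (measurable_Nk r).comp measurable_prodMk_left
  exact h

lemma lb_meas (r φ : ℝ) : Measurable (lb r φ) := by
  have h : Measurable ((fun q : ℝ × ℂ => lb r q.1 q.2) ∘ (fun ζ => (φ, ζ))) :=
    (measurable_lb r).comp measurable_prodMk_left
  exact h

lemma den_meas (r φ : ℝ) : Measurable (den r φ) := by
  have h : Measurable ((fun q : ℝ × ℂ => den r q.1 q.2) ∘ (fun ζ => (φ, ζ))) :=
    (measurable_den r).comp measurable_prodMk_left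
  exact h


lemma norm_ecirc (θ : ℝ) : ‖ecirc θ‖ = 1 := norm_exp_ofReal_mul_I θ

/-- upper bound for the logarithmic potential -/
lemma lb_total_upper (m lam : Measure ℂ) (ψ : Measure ℝ) (hm : ∀ᵐ ζ ∂m, ‖ζ‖ < 1)
    (hlam : lam = m.withDensity (fun ζ => ENNReal.ofReal (1 - ‖ζ‖)) + ψ.map ecirc)
    {r : ℝ} (hr0 : 0 < r) (hr1 : r < 1) (φ : ℝ) :
    ∫⁻ ζ, ‖lb r φ ζ‖ₑ ∂m + ∫⁻ θ, Kk r φ (ecirc θ) ∂ψ ≤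
      ∫⁻ ζ, Nk r φ ζ ∂m + 4 * ∫⁻ ζ, Kk r φ ζ ∂lam := by
  rw [lintegral_lam m lam ψ hlam (Kk_meas r φ)]
  calc _ ≤ (∫⁻ ζ, (4 * (ENNReal.ofReal (1 - ‖ζ‖) * Kk r φ ζ) + Nk r φ ζ) ∂m)
        + 4 * ∫⁻ θ, Kk r φ (ecirc θ) ∂ψ := by
        gcongr ?_ + ?_
        · apply lintegral_mono_ae
          filter_upwards [hm] with ζ hζ
          exact lb_upper hr0 hr1 φ hζ
        · conv_lhs => rw [← one_mul (∫⁻ θ, Kk r φ (ecirc θ) ∂ψ)]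
          gcongr
          norm_num
    _ = _ := by
        rw [lintegral_add_right _ (Nk_meas r φ), lintegral_const_mul' _ _ (by simp)]
        ring

lemma log_upper (m lam : Measure ℂ) (ψ : Measure ℝ) (hm : ∀ᵐ ζ ∂m, ‖ζ‖ < 1)
    (hlam : lam = m.withDensity (fun ζ => ENNReal.ofReal (1 - ‖ζ‖)) + ψ.map ecirc)
    {r : ℝ} (hr0 : 0 < r) (hr1 : r < 1) (φ C L : ℝ)
    (hrep : L = (∫ ζ, lb r φ ζ ∂m) - (1 / (2 * Real.pi)) *
      (∫ θ, (1 - r ^ 2) / den r φ (ecirc θ) ^ 2 ∂ψ) + C) :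
    ‖L‖ₑ ≤ ∫⁻ ζ, Nk r φ ζ ∂m + 4 * ∫⁻ ζ, Kk r φ ζ ∂lam + ‖C‖ₑ := by
  refine le_trans ?_ (add_le_add_left (lb_total_upper m lam ψ hm hlam hr0 hr1 φ) _)
  rw [hrep]
  refine (enorm_add_le _ _).trans ?_
  gcongr
  refine (enorm_sub_le).trans ?_
  gcongr
  · exact enorm_integral_le_lintegral_enorm _
  · rw [enorm_mul]
    calc _ ≤ 1 * ‖∫ θ, (1 - r ^ 2) / den r φ (ecirc θ) ^ 2 ∂ψ‖ₑ := by
          gcongr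
          rw [Real.enorm_eq_ofReal_abs, ← ENNReal.ofReal_one]
          apply ENNReal.ofReal_le_ofReal
          rw [abs_of_nonneg (by positivity), div_le_one (by positivity)]
          linarith [Real.pi_gt_three]
      _ ≤ _ := by
          rw [one_mul]
          refine (enorm_integral_le_lintegral_enorm _).trans_eq ?_
          apply lintegral_congr
          intro θ
          rw [Real.enorm_eq_ofReal_abs, abs_of_nonneg]
          · rfl
          · exact div_nonneg (by nlinarith) (by positivity)

lemma box_lower (lam : Measure ℂ) {δ : ℝ} (h0 : 0 < δ) (h1 : δ < 1) (φ : ℝ) :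
    lam (carlesonBox φ δ) ≤ ENNReal.ofReal (36 * δ) * ∫⁻ ζ, Kk (1 - δ) φ ζ ∂lam := by
  rw [← lintegral_indicator_one (measurableSet_box _ _),
    ← lintegral_const_mul' _ _ ENNReal.ofReal_ne_top]
  apply lintegral_mono
  intro ζ
  by_cases hζ : ζ ∈ carlesonBox φ δ
  · simp only [Kk]
    rw [Set.indicator_of_mem hζ, Pi.one_apply, ← ENNReal.ofReal_mul (by positivity),
      ← ENNReal.ofReal_one]
    apply ENNReal.ofReal_le_ofReal
    have hd := kernel_le_of_mem_box h0 h1 hζ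
    have hd1 := den_ge1 (show 0 < 1 - δ by linarith) φ hζ.1
    change den (1 - δ) φ ζ ≤ 6 * δ at hd
    set d := den (1 - δ) φ ζ
    have hd0 : 0 < d := by linarith
    rw [← mul_div_assoc, one_le_div (by positivity)]
    nlinarith [mul_self_le_mul_self hd0.le hd, mul_nonneg (mul_nonneg h0.le h0.le) (sub_nonneg.2 h1.le)]
  · rw [Set.indicator_of_notMem hζ]; exact zero_le

lemma log_lower (m lam : Measure ℂ) (ψ : Measure ℝ) [IsFiniteMeasure ψ]
    (hm : ∀ᵐ ζ ∂m, ‖ζ‖ < 1)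
    (hlam : lam = m.withDensity (fun ζ => ENNReal.ofReal (1 - ‖ζ‖)) + ψ.map ecirc)
    {δ : ℝ} (h0 : 0 < δ) (h1 : δ < 1) (φ C L : ℝ)
    (hz : ∀ᵐ ζ ∂m, ζ ≠ (1 - δ : ℝ) * Complex.exp (φ * I))
    (hfin : ∫⁻ ζ, ‖lb (1 - δ) φ ζ‖ₑ ∂m < ⊤)
    (hrep : L = (∫ ζ, lb (1 - δ) φ ζ ∂m) - (1 / (2 * Real.pi)) *
      (∫ θ, (1 - (1 - δ) ^ 2) / den (1 - δ) φ (ecirc θ) ^ 2 ∂ψ) + C) :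
    lam (carlesonBox φ δ) ≤ ENNReal.ofReal (72 * Real.pi * δ) * (‖L‖ₑ + 0 + ‖C‖ₑ) := by
  have hr0 : 0 < 1 - δ := by linarith
  have hr1 : 1 - δ < 1 := by linarith
  have hpi := Real.pi_gt_three
  refine (box_lower lam h0 h1 φ).trans ?_
  rw [lintegral_lam m lam ψ hlam (Kk_meas _ φ)]
  have hlbInt : Integrable (lb (1 - δ) φ) m := ⟨(lb_meas _ φ).aestronglyMeasurable, hfin⟩
  have hPnn : ∀ θ, 0 ≤ (1 - (1 - δ) ^ 2) / den (1 - δ) φ (ecirc θ) ^ 2 := fun θ =>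
    div_nonneg (by nlinarith) (by positivity)
  have hPint : Integrable (fun θ => (1 - (1 - δ) ^ 2) / den (1 - δ) φ (ecirc θ) ^ 2) ψ := by
    apply Integrable.of_bound (C := 2 / δ)
    · have := (den_meas (1 - δ) φ).comp measurable_ecirc
      exact (Measurable.div measurable_const (this.pow_const 2)).aestronglyMeasurable
    · refine Filter.Eventually.of_forall fun θ => ?_
      rw [Real.norm_of_nonneg (hPnn θ)]
      have hd1 := den_ge1 hr0 φ (norm_ecirc θ).le
      set d := den (1 - δ) φ (ecirc θ)
      have hd0 : 0 < d := by linarith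
      rw [div_le_div_iff₀ (by positivity) h0]
      have hdδ : δ ≤ d := by linarith
      nlinarith [mul_self_le_mul_self h0.le hdδ, mul_pos h0 (mul_pos h0 h0)]
  have eA : ∫⁻ ζ, ENNReal.ofReal (1 - ‖ζ‖) * Kk (1 - δ) φ ζ ∂m ≤
      ENNReal.ofReal (2 * -∫ ζ, lb (1 - δ) φ ζ ∂m) := by
    rw [ENNReal.ofReal_mul (by norm_num), ← integral_neg,
      ofReal_integral_eq_lintegral_ofReal (f := fun a => -lb (1 - δ) φ a) hlbInt.neg]
    · rw [← lintegral_const_mul' _ _ (by simp)]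
      apply lintegral_mono_ae
      filter_upwards [hm, hz] with ζ h2 h3
      have := lb_lower hr0 hr1 φ h2 h3
      simpa using this
    · filter_upwards [hm] with ζ h2
      simpa using lb_nonpos hr0 hr1 φ h2
  have eB : ∫⁻ θ, Kk (1 - δ) φ (ecirc θ) ∂ψ =
      ENNReal.ofReal (∫ θ, (1 - (1 - δ) ^ 2) / den (1 - δ) φ (ecirc θ) ^ 2 ∂ψ) := by
    rw [ofReal_integral_eq_lintegral_ofReal hPint (Filter.Eventually.of_forall hPnn)]
    rfl
  have hB0 : 0 ≤ ∫ θ, (1 - (1 - δ) ^ 2) / den (1 - δ) φ (ecirc θ) ^ 2 ∂ψ := integral_nonneg hPnn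
  have hA0 : 0 ≤ -∫ ζ, lb (1 - δ) φ ζ ∂m := by
    rw [← integral_neg]
    apply integral_nonneg_of_ae
    filter_upwards [hm] with ζ h2
    simpa using lb_nonpos hr0 hr1 φ h2
  rw [eB, add_zero]
  refine (mul_le_mul_right (add_le_add_left eA _) _).trans ?_
  rw [← ENNReal.ofReal_add (by positivity) hB0, ← ENNReal.ofReal_mul (by positivity),
    Real.enorm_eq_ofReal_abs, Real.enorm_eq_ofReal_abs,
    ← ENNReal.ofReal_add (abs_nonneg _) (abs_nonneg _), ← ENNReal.ofReal_mul (by positivity)]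
  apply ENNReal.ofReal_le_ofReal
  set A := -∫ ζ, lb (1 - δ) φ ζ ∂m with hA
  set B := ∫ θ, (1 - (1 - δ) ^ 2) / den (1 - δ) φ (ecirc θ) ^ 2 ∂ψ
  have hlbInt' : ∫ ζ, lb (1 - δ) φ ζ ∂m = -A := by rw [hA, neg_neg]
  rw [hlbInt'] at hrep
  have key : 2 * A + B ≤ 2 * Real.pi * (|L| + |C|) := by
    have e : 2 * Real.pi * (C - L) = 2 * Real.pi * A + B := by
      rw [hrep]; field_simp; ring
    have : C - L ≤ |L| + |C| := by linarith [le_abs_self C, neg_abs_le L]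
    nlinarith
  nlinarith


lemma ae_m (μ : Measure ℂ) : ∀ᵐ ζ ∂(μ.restrict (Metric.ball (0 : ℂ) 1)), ‖ζ‖ < 1 := by
  filter_upwards [ae_restrict_mem Metric.isOpen_ball.measurableSet] with ζ hζ
  simpa using hζ

lemma finite_mw (μ : Measure ℂ)
    (hμfin : ∫⁻ ζ in Metric.ball (0 : ℂ) 1, ENNReal.ofReal (1 - ‖ζ‖) ∂μ < ⊤) :
    IsFiniteMeasure ((μ.restrict (Metric.ball (0 : ℂ) 1)).withDensity
      (fun ζ => ENNReal.ofReal (1 - ‖ζ‖))) := isFiniteMeasure_withDensity hμfin.ne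

lemma sfinite_m (μ : Measure ℂ)
    (hμfin : ∫⁻ ζ in Metric.ball (0 : ℂ) 1, ENNReal.ofReal (1 - ‖ζ‖) ∂μ < ⊤) :
    SFinite (μ.restrict (Metric.ball (0 : ℂ) 1)) := by
  have := finite_mw μ hμfin
  have h := withDensity_inv_same (μ := μ.restrict (Metric.ball (0 : ℂ) 1))
    (f := fun ζ => ENNReal.ofReal (1 - ‖ζ‖)) (by fun_prop) (by
      filter_upwards [ae_m μ] with ζ hζ
      simpa using hζ) (by simp)
  rw [← h]
  infer_instance

lemma lam_eq (μ : Measure ℂ) (ψ : Measure ℝ) (lam : Measure ℂ)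
    (hlam : ∀ M : Set ℂ, MeasurableSet M →
      lam M = (∫⁻ ζ in Metric.ball (0 : ℂ) 1 ∩ M, ENNReal.ofReal (1 - ‖ζ‖) ∂μ) +
        ψ ((fun θ : ℝ => Complex.exp (θ * Complex.I)) ⁻¹' (M ∩ Metric.sphere (0 : ℂ) 1))) :
    lam = (μ.restrict (Metric.ball (0 : ℂ) 1)).withDensity (fun ζ => ENNReal.ofReal (1 - ‖ζ‖))
      + ψ.map ecirc := by
  ext M hM
  rw [hlam M hM, Measure.add_apply, withDensity_apply _ hM, Measure.restrict_restrict hM,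
    Set.inter_comm, Measure.map_apply measurable_ecirc hM]
  congr 2
  ext θ
  simp [ecirc, norm_exp_ofReal_mul_I]

lemma lam_norm_le (m : Measure ℂ) (ψ : Measure ℝ) (lam : Measure ℂ) (hm : ∀ᵐ ζ ∂m, ‖ζ‖ < 1)
    (hlam : lam = m.withDensity (fun ζ => ENNReal.ofReal (1 - ‖ζ‖)) + ψ.map ecirc) :
    ∀ᵐ ζ ∂lam, ‖ζ‖ ≤ 1 := by
  rw [hlam, ae_add_measure_iff]
  constructor
  · apply (withDensity_absolutelyContinuous m _).ae_le
    filter_upwards [hm] with ζ hζ using hζ.le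
  · rw [ae_map_iff measurable_ecirc.aemeasurable (measurableSet_le (by fun_prop) (by fun_prop))]
    exact Filter.Eventually.of_forall fun θ => (norm_ecirc θ).le

lemma den_ecirc (r φ θ : ℝ) :
    den r φ (ecirc θ) = ‖Complex.exp (θ * I) - r * Complex.exp (φ * I)‖ := by
  have h1 : (1 : ℂ) - (r * Complex.exp (φ * I)) * (starRingEnd ℂ) (ecirc θ)
      = (starRingEnd ℂ) (ecirc θ) * (Complex.exp (θ * I) - r * Complex.exp (φ * I)) := by
    have : (starRingEnd ℂ) (ecirc θ) * ecirc θ = 1 := by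
      rw [mul_comm, Complex.mul_conj, Complex.normSq_eq_norm_sq, norm_ecirc]; simp
    rw [mul_sub]
    change _ = (starRingEnd ℂ) (ecirc θ) * ecirc θ - _
    rw [this]; ring
  unfold den
  rw [h1, norm_mul, norm_conj, norm_ecirc, one_mul]

lemma box_trivial (lam : Measure ℂ) [IsFiniteMeasure lam] {p : ℝ} (hp : 1 < p) (s : ℝ) :
    ∫⁻ φ in Set.Ioc 0 (2 * Real.pi), lam (carlesonBox φ s) ^ p
      ≤ ENNReal.ofReal (2 * Real.pi * (lam Set.univ).toReal ^ p) := by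
  have hpi := Real.pi_pos
  calc _ ≤ ∫⁻ φ in Set.Ioc 0 (2 * Real.pi), lam Set.univ ^ p := by
        apply lintegral_mono
        intro φ
        exact ENNReal.rpow_le_rpow (measure_mono (Set.subset_univ _)) (by linarith)
    _ = _ := by
        rw [setLIntegral_const, Real.volume_Ioc, sub_zero, mul_comm,
          ENNReal.ofReal_mul (p := 2 * Real.pi) (by positivity),
          ← ENNReal.ofReal_rpow_of_nonneg ENNReal.toReal_nonneg (by linarith),
          ENNReal.ofReal_toReal (measure_ne_top _ _)]

lemma box_integral (lam : Measure ℂ) [IsFiniteMeasure lam] {p : ℝ} (hp : 1 < p) (s : ℝ) :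
    ∫⁻ φ in Set.Ioc 0 (2 * Real.pi), lam (carlesonBox φ s) ^ p
      = ENNReal.ofReal (∫ φ in (0 : ℝ)..(2 * Real.pi), (lam (carlesonBox φ s)).toReal ^ p) := by
  have hpi := Real.pi_pos
  rw [intervalIntegral.integral_of_le (by positivity),
    integral_eq_lintegral_of_nonneg_ae (Filter.Eventually.of_forall fun φ => by positivity)
      ((measurable_lam_box lam s).ennreal_toReal.pow_const p).aestronglyMeasurable]
  have : ∀ φ, ENNReal.ofReal ((lam (carlesonBox φ s)).toReal ^ p) = lam (carlesonBox φ s) ^ p := by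
    intro φ
    rw [← ENNReal.ofReal_rpow_of_nonneg ENNReal.toReal_nonneg (by linarith),
      ENNReal.ofReal_toReal (measure_ne_top _ _)]
  simp only [this]
  rw [ENNReal.ofReal_toReal]
  exact ((box_trivial lam hp s).trans_lt ENNReal.ofReal_lt_top).ne

lemma rpow_trans {X c p x a : ℝ} (hp : 1 < p) (hX : 0 ≤ X) (hx : 0 < x)
    (h : X ^ (1 / p) ≤ c * x ^ a) : X ≤ |c| ^ p * x ^ (a * p) := by
  have hp0 : 0 < p := by linarith
  have h1 : X ^ (1 / p) ≤ |c| * x ^ a := h.trans (by gcongr; exact le_abs_self c)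
  have h2 := Real.rpow_le_rpow (by positivity) h1 hp0.le
  rwa [← Real.rpow_mul hX, one_div_mul_cancel hp0.ne', Real.rpow_one,
    Real.mul_rpow (abs_nonneg _) (by positivity), ← Real.rpow_mul hx.le] at h2

lemma rpow_trans' {X c p x a : ℝ} (hp : 1 < p) (hX : 0 ≤ X) (hc : 0 ≤ c) (hx : 0 < x)
    (h : X ≤ c * x ^ (a * p)) : X ^ (1 / p) ≤ c ^ (1 / p) * x ^ a := by
  have hp0 : 0 < p := by linarith
  have h2 := Real.rpow_le_rpow hX h (one_div_pos.2 hp0).le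
  rwa [Real.mul_rpow hc (by positivity), ← Real.rpow_mul hx.le, mul_assoc,
    mul_one_div_cancel hp0.ne', mul_one] at h2

/-- bundled hypotheses: log representation on circles -/
lemma rep_circle (f : ℂ → ℂ) (μ : Measure ℂ) (ψ : Measure ℝ) (C : ℝ)
    (hrep : ∀ z ∈ Metric.ball (0 : ℂ) 1, f z ≠ 0 →
      Real.log (‖f z‖) =
        (∫ ζ in Metric.ball (0 : ℂ) 1,
          Real.log (‖z - ζ‖ / ‖1 - z * (starRingEnd ℂ) ζ‖) ∂μ) -
        (1 / (2 * Real.pi)) *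
          (∫ θ, (1 - ‖z‖ ^ 2) / ‖Complex.exp (θ * Complex.I) - z‖ ^ 2 ∂ψ)
        + C) {r : ℝ} (hr0 : 0 < r) (hr1 : r < 1) (φ : ℝ)
    (hz : f (r * Complex.exp (φ * I)) ≠ 0) :
    Real.log ‖f (r * Complex.exp (φ * I))‖ =
      (∫ ζ, lb r φ ζ ∂(μ.restrict (Metric.ball (0 : ℂ) 1))) - (1 / (2 * Real.pi)) *
      (∫ θ, (1 - r ^ 2) / den r φ (ecirc θ) ^ 2 ∂ψ) + C := by
  have h := hrep _ (by rw [mem_ball_zero_iff, norm_z hr0]; exact hr1) hz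
  rw [h, norm_z hr0]
  simp only [den_ecirc]
  rfl

lemma f_circle_cont (f : ℂ → ℂ) (hf : ∀ z ∈ Metric.ball (0 : ℂ) 1, AnalyticAt ℂ f z)
    {r : ℝ} (hr0 : 0 < r) (hr1 : r < 1) :
    Continuous fun φ : ℝ => f (r * Complex.exp (φ * I)) := by
  rw [continuous_iff_continuousAt]
  intro φ
  have h1 : ContinuousAt f (r * Complex.exp (φ * I)) :=
    (hf _ (by rw [mem_ball_zero_iff, norm_z hr0]; exact hr1)).continuousAt
  exact ContinuousAt.comp (f := fun φ : ℝ => (r : ℂ) * Complex.exp (φ * I)) h1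
    (by fun_prop)

lemma zeros_ae (f : ℂ → ℂ) (hf : ∀ z ∈ Metric.ball (0 : ℂ) 1, AnalyticAt ℂ f z)
    (hf0 : ∃ z ∈ Metric.ball (0 : ℂ) 1, f z ≠ 0) {r : ℝ} (hr0 : 0 < r) (hr1 : r < 1) :
    ∀ᵐ φ : ℝ, f (r * Complex.exp (φ * I)) ≠ 0 := by
  have hf' : AnalyticOnNhd ℂ f (Metric.ball (0 : ℂ) 1) := hf
  obtain ⟨z0, hz0, hfz0⟩ := hf0
  have hco := hf'.preimage_zero_mem_codiscreteWithin hfz0 hz0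
    ((convex_ball (0 : ℂ) 1).isConnected ⟨z0, hz0⟩)
  have hd : IsDiscrete ((f ⁻¹' {0}ᶜ)ᶜ ∩ Metric.ball (0 : ℂ) 1) :=
    isDiscrete_of_codiscreteWithin (by rwa [compl_compl])
  have hc : ((f ⁻¹' {0}ᶜ)ᶜ ∩ Metric.ball (0 : ℂ) 1).Countable := by
    have := hd.to_subtype
    exact Set.countable_coe_iff.1 (TopologicalSpace.separableSpace_iff_countable.1 inferInstance)
  have hp := hc.preimage_circleMap 0 hr0.ne'
  have h0 := hp.measure_zero volume
  rw [ae_iff]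
  refine measure_mono_null ?_ h0
  intro φ hφ
  simp only [ne_eq, not_not, Set.mem_ofPred_eq] at hφ
  have hcm : circleMap 0 r φ = r * Complex.exp (φ * I) := by simp [circleMap]
  refine ⟨?_, ?_⟩
  · simp [hcm, hφ]
  · rw [hcm, mem_ball_zero_iff, norm_z hr0]; exact hr1


lemma enorm_rpow_eq (x : ℝ) {p : ℝ} (hp : 1 < p) : ‖x‖ₑ ^ p = ENNReal.ofReal (|x| ^ p) := by
  rw [Real.enorm_eq_ofReal_abs, ENNReal.ofReal_rpow_of_nonneg (abs_nonneg _) (by linarith)]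

/-- upper bound for the integral mean in terms of a bound for the boxes -/
lemma mean_lintegral (f : ℂ → ℂ) (m lam : Measure ℂ) (ψ : Measure ℝ) [SFinite m]
    [IsFiniteMeasure lam] (C : ℝ) {γ p : ℝ} (hγ1 : γ ≤ 1) (hp : 1 < p)
    (hm : ∀ᵐ ζ ∂m, ‖ζ‖ < 1)
    (hlam : lam = m.withDensity (fun ζ => ENNReal.ofReal (1 - ‖ζ‖)) + ψ.map ecirc)
    (hrep : ∀ r : ℝ, 0 < r → r < 1 → ∀ φ : ℝ, f (r * Complex.exp (φ * I)) ≠ 0 →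
      Real.log ‖f (r * Complex.exp (φ * I))‖ =
      (∫ ζ, lb r φ ζ ∂m) - (1 / (2 * Real.pi)) *
      (∫ θ, (1 - r ^ 2) / den r φ (ecirc θ) ^ 2 ∂ψ) + C)
    {D : ℝ} (hD : 0 ≤ D)
    (hL : ∀ s : ℝ, 0 < s → ∫⁻ φ in Set.Ioc 0 (2 * Real.pi), lam (carlesonBox φ s) ^ p
      ≤ ENNReal.ofReal (D * s ^ (γ * p)))
    {δ : ℝ} (h0 : 0 < δ) (h1 : δ ≤ 1 / 30) :
    ∫⁻ φ in Set.Ioc 0 (2 * Real.pi),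
      ‖Real.log ‖f ((1 - δ : ℝ) * Complex.exp (φ * I))‖‖ₑ ^ p ≤
      ENNReal.ofReal (upc p C D * δ ^ ((γ - 1) * p)) := by
  apply upper_total hp hγ1 C m lam hm (by rw [hlam]; exact Measure.le_add_right le_rfl)
    (lam_norm_le m ψ lam hm hlam) hD hL h0 h1
  intro φ
  by_cases hz : f ((1 - δ : ℝ) * Complex.exp (φ * I)) = 0
  · rw [hz]; simp
  · exact log_upper m lam ψ hm hlam (by linarith) (by linarith) φ C _
      (hrep _ (by linarith) (by linarith) φ hz)

lemma lb_ae_finite (m lam : Measure ℂ) (ψ : Measure ℝ) [SFinite m]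
    [IsFiniteMeasure lam] {p : ℝ} (hp : 1 < p)
    (hm : ∀ᵐ ζ ∂m, ‖ζ‖ < 1)
    (hlam : lam = m.withDensity (fun ζ => ENNReal.ofReal (1 - ‖ζ‖)) + ψ.map ecirc)
    {D : ℝ} (hD : 0 ≤ D)
    (hL : ∀ s : ℝ, 0 < s → ∫⁻ φ in Set.Ioc 0 (2 * Real.pi), lam (carlesonBox φ s) ^ p
      ≤ ENNReal.ofReal (D * s ^ (0 * p)))
    {δ : ℝ} (h0 : 0 < δ) (h1 : δ ≤ 1 / 30) :
    ∀ᵐ φ ∂(volume.restrict (Set.Ioc 0 (2 * Real.pi))), ∫⁻ ζ, ‖lb (1 - δ) φ ζ‖ₑ ∂m < ⊤ := by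
  have hp0 : 0 < p := by linarith
  have h := upper_total hp zero_le_one 0 m lam hm
    (by rw [hlam]; exact Measure.le_add_right le_rfl)
    (lam_norm_le m ψ lam hm hlam) hD hL h0 h1 (fun φ => ∫⁻ ζ, ‖lb (1 - δ) φ ζ‖ₑ ∂m) (by
      intro φ
      refine le_trans ?_ (le_add_right le_rfl)
      exact (le_add_right le_rfl).trans
        (lb_total_upper m lam ψ hm hlam (by linarith) (by linarith) φ))
  have hme : Measurable fun φ => ∫⁻ ζ, ‖lb (1 - δ) φ ζ‖ₑ ∂m :=
    Measurable.lintegral_prod_right' (f := fun q : ℝ × ℂ => ‖lb (1 - δ) q.1 q.2‖ₑ)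
      (measurable_lb (1 - δ)).enorm
  have := ae_lt_top (hme.pow_const p) (h.trans_lt ENNReal.ofReal_lt_top).ne
  filter_upwards [this] with φ hφ
  by_contra hc
  rw [not_lt, top_le_iff] at hc
  rw [hc, ENNReal.top_rpow_of_pos hp0] at hφ
  exact lt_irrefl _ hφ

lemma box_of_mean (f : ℂ → ℂ) (m lam : Measure ℂ) (ψ : Measure ℝ) [SFinite m]
    [IsFiniteMeasure lam] [IsFiniteMeasure ψ] (C : ℝ) {γ p : ℝ} (hγ1 : γ ≤ 1) (hp : 1 < p)
    (hf : ∀ z ∈ Metric.ball (0 : ℂ) 1, AnalyticAt ℂ f z)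
    (hf0 : ∃ z ∈ Metric.ball (0 : ℂ) 1, f z ≠ 0)
    (hm : ∀ᵐ ζ ∂m, ‖ζ‖ < 1)
    (hmz : ∀ z ∈ Metric.ball (0 : ℂ) 1, f z ≠ 0 → m {z} = 0)
    (hlam : lam = m.withDensity (fun ζ => ENNReal.ofReal (1 - ‖ζ‖)) + ψ.map ecirc)
    (hrep : ∀ r : ℝ, 0 < r → r < 1 → ∀ φ : ℝ, f (r * Complex.exp (φ * I)) ≠ 0 →
      Real.log ‖f (r * Complex.exp (φ * I))‖ =
      (∫ ζ, lb r φ ζ ∂m) - (1 / (2 * Real.pi)) *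
      (∫ θ, (1 - r ^ 2) / den r φ (ecirc θ) ^ 2 ∂ψ) + C)
    {C₁ δ : ℝ} (h0 : 0 < δ) (h1 : δ ≤ 1 / 30)
    (hmean : mpMean p (1 - δ) (fun z => Real.log (‖f z‖)) ≤ C₁ * δ ^ (γ - 1)) :
    ∫⁻ φ in Set.Ioc 0 (2 * Real.pi), lam (carlesonBox φ δ) ^ p
      ≤ ENNReal.ofReal ((72 * Real.pi) ^ p * 3 ^ p *
        (2 * Real.pi * |C₁| ^ p + |C| ^ p * (2 * Real.pi)) * δ ^ (γ * p)) := by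
  have hp0 : 0 < p := by linarith
  have hpi := Real.pi_pos
  have hr0 : 0 < 1 - δ := by linarith
  have hr1 : 1 - δ < 1 := by linarith
  set L : ℝ → ℝ := fun φ => Real.log ‖f ((1 - δ : ℝ) * Complex.exp (φ * I))‖ with hLdef
  have hLm : Measurable L :=
    Real.measurable_log.comp (f_circle_cont f hf hr0 hr1).norm.measurable
  have hD0 : 0 ≤ 2 * Real.pi * (lam Set.univ).toReal ^ p := by positivity
  have hL0 : ∀ s : ℝ, 0 < s → ∫⁻ φ in Set.Ioc 0 (2 * Real.pi), lam (carlesonBox φ s) ^ p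
      ≤ ENNReal.ofReal (2 * Real.pi * (lam Set.univ).toReal ^ p * s ^ (0 * p)) := by
    intro s _
    rw [zero_mul, Real.rpow_zero, mul_one]
    exact box_trivial lam hp s
  have hX := mean_lintegral f m lam ψ C zero_le_one hp hm hlam hrep hD0 hL0 h0 h1
  -- the mean as a lower integral
  have hXeq : ∫⁻ φ in Set.Ioc 0 (2 * Real.pi), ‖L φ‖ₑ ^ p =
      ENNReal.ofReal (∫ φ in (0 : ℝ)..(2 * Real.pi), |L φ| ^ p) := by
    rw [intervalIntegral.integral_of_le (by positivity),
      integral_eq_lintegral_of_nonneg_ae (f := fun φ => |L φ| ^ p)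
        (Filter.Eventually.of_forall fun φ => Real.rpow_nonneg (abs_nonneg _) _)
        ((measurable_norm.comp hLm).pow_const p).aestronglyMeasurable]
    simp only [← enorm_rpow_eq _ hp]
    rw [ENNReal.ofReal_toReal]
    exact (hX.trans_lt ENNReal.ofReal_lt_top).ne
  have hI0 : 0 ≤ ∫ φ in (0 : ℝ)..(2 * Real.pi), |L φ| ^ p := by
    apply intervalIntegral.integral_nonneg (by positivity)
    intro φ _; positivity
  have hI : ∫ φ in (0 : ℝ)..(2 * Real.pi), |L φ| ^ p ≤
      2 * Real.pi * |C₁| ^ p * δ ^ ((γ - 1) * p) := by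
    have := rpow_trans hp (X := (1 / (2 * Real.pi)) * ∫ φ in (0 : ℝ)..(2 * Real.pi), |L φ| ^ p)
      (by positivity) h0 hmean
    rw [one_div_mul_eq_div, div_le_iff₀ (by positivity)] at this
    linarith
  have hae : ∀ᵐ φ ∂(volume.restrict (Set.Ioc 0 (2 * Real.pi))), lam (carlesonBox φ δ) ^ p ≤
      ENNReal.ofReal ((72 * Real.pi * δ) ^ p) * (3 ^ p * (‖L φ‖ₑ ^ p + ‖C‖ₑ ^ p)) := by
    filter_upwards [lb_ae_finite m lam ψ hp hm hlam hD0 hL0 h0 h1,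
      ae_restrict_of_ae (zeros_ae f hf hf0 hr0 hr1)] with φ hfin hz
    have hz' : ∀ᵐ ζ ∂m, ζ ≠ (1 - δ : ℝ) * Complex.exp (φ * I) := by
      rw [ae_iff]
      have := hmz _ (by rw [mem_ball_zero_iff, norm_z hr0]; exact hr1) hz
      refine measure_mono_null ?_ this
      intro ζ hζ
      simpa using hζ
    have h2 := log_lower m lam ψ hm hlam h0 (by linarith) φ C _ hz' hfin (hrep _ hr0 hr1 φ hz)
    have h3 := ENNReal.rpow_le_rpow h2 hp0.le
    rw [ENNReal.mul_rpow_of_nonneg _ _ hp0.le,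
      ENNReal.ofReal_rpow_of_nonneg (by positivity) hp0.le] at h3
    refine h3.trans ?_
    gcongr
    refine (add3_rpow hp0.le _ _ _).trans ?_
    rw [ENNReal.zero_rpow_of_pos hp0, add_zero]
  refine (lintegral_mono_ae hae).trans ?_
  have e3 : (3 : ℝ≥0∞) ^ p = ENNReal.ofReal (3 ^ p) := by
    rw [← ENNReal.ofReal_rpow_of_pos (by norm_num)]; simp
  rw [lintegral_const_mul' _ _ ENNReal.ofReal_ne_top, e3,
    lintegral_const_mul' _ _ ENNReal.ofReal_ne_top, lintegral_add_right _ measurable_const,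
    hXeq, setLIntegral_const, Real.volume_Ioc, sub_zero, enorm_rpow_eq _ hp,
    ← ENNReal.ofReal_mul (by positivity), ← ENNReal.ofReal_add hI0 (by positivity),
    ← ENNReal.ofReal_mul (by positivity), ← ENNReal.ofReal_mul (by positivity)]
  apply ENNReal.ofReal_le_ofReal
  have h6 : δ ^ p * δ ^ ((γ - 1) * p) = δ ^ (γ * p) := by
    rw [← Real.rpow_add h0]; congr 1; ring
  have h7 : 1 ≤ δ ^ ((γ - 1) * p) :=
    Real.one_le_rpow_of_pos_of_le_one_of_nonpos h0 (by linarith)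
      (mul_nonpos_of_nonpos_of_nonneg (by linarith) hp0.le)
  rw [Real.mul_rpow (by positivity) h0.le]
  calc _ ≤ (72 * Real.pi) ^ p * δ ^ p * (3 ^ p * (2 * Real.pi * |C₁| ^ p * δ ^ ((γ - 1) * p)
        + |C| ^ p * (2 * Real.pi) * δ ^ ((γ - 1) * p))) := by
        have h8 : |C| ^ p * (2 * Real.pi) ≤ |C| ^ p * (2 * Real.pi) * δ ^ ((γ - 1) * p) :=
          le_mul_of_one_le_right (by positivity) h7
        exact mul_le_mul_of_nonneg_left (mul_le_mul_of_nonneg_left (add_le_add hI h8)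
          (by positivity)) (by positivity)
    _ = _ := by rw [← h6]; ring

lemma mean_of_lintegral (f : ℂ → ℂ) {p r c : ℝ} (hp : 1 < p) (hc : 0 ≤ c)
    (h : ∫⁻ φ in Set.Ioc 0 (2 * Real.pi),
      ‖Real.log ‖f (r * Complex.exp (φ * I))‖‖ₑ ^ p ≤ ENNReal.ofReal c) :
    0 ≤ (1 / (2 * Real.pi)) * ∫ θ in (0 : ℝ)..(2 * Real.pi),
        |Real.log ‖f (r * Complex.exp (θ * I))‖| ^ p ∧ (1 / (2 * Real.pi)) *
      ∫ θ in (0 : ℝ)..(2 * Real.pi),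
        |Real.log ‖f (r * Complex.exp (θ * I))‖| ^ p ≤ c := by
  have hpi := Real.pi_gt_three
  have h2 : (0 : ℝ) ≤ 2 * Real.pi := by positivity
  have hI0 : 0 ≤ ∫ θ in (0 : ℝ)..(2 * Real.pi), |Real.log ‖f (r * Complex.exp (θ * I))‖| ^ p := by
    apply intervalIntegral.integral_nonneg h2
    intro φ _; positivity
  have hI : ∫ θ in (0 : ℝ)..(2 * Real.pi), |Real.log ‖f (r * Complex.exp (θ * I))‖| ^ p ≤ c := by
    rw [intervalIntegral.integral_of_le h2]
    refine (le_abs_self _).trans ?_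
    have h3 := (enorm_integral_le_lintegral_enorm
      (μ := volume.restrict (Set.Ioc 0 (2 * Real.pi)))
      (fun θ : ℝ => |Real.log ‖f (r * Complex.exp (θ * I))‖| ^ p))
    rw [← ENNReal.ofReal_le_ofReal_iff hc, ← Real.enorm_eq_ofReal_abs]
    refine h3.trans (le_trans (le_of_eq ?_) h)
    apply lintegral_congr
    intro θ
    rw [enorm_rpow_eq _ hp, Real.enorm_eq_ofReal_abs, abs_of_nonneg (by positivity)]
  refine ⟨by positivity, ?_⟩
  rw [one_div_mul_eq_div]
  exact (div_le_self hI0 (by linarith)).trans hI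


/-- For a bounded analytic `f ≢ 0` on `𝔻` whose `log|f|` has the
representation with Riesz measure `μ` (unit point masses at the zeros of `f`
counted with multiplicity) and boundary measure `ψ`, and complete measure `λ`,
one has `m_p(r, log|f|) = O((1-r)^{γ-1})` as `r ↑ 1` iff
`(∫₀^{2π} λ(C(φ,δ))^p dφ)^{1/p} = O(δ^γ)` for `0 < δ < 1`. -/
theorem stmt1 (f : ℂ → ℂ) (μ : Measure ℂ) (ψ : Measure ℝ) [IsFiniteMeasure ψ]
    (lam : Measure ℂ) (C : ℝ) (γ p : ℝ) (hγ : 0 < γ) (hγ1 : γ ≤ 1) (hp : 1 < p)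
    -- `f` is analytic and bounded on `𝔻`, not identically zero
    (hf : ∀ z ∈ Metric.ball (0 : ℂ) 1, AnalyticAt ℂ f z)
    (hfbdd : ∃ B : ℝ, ∀ z ∈ Metric.ball (0 : ℂ) 1, ‖f z‖ ≤ B)
    (hf0 : ∃ z ∈ Metric.ball (0 : ℂ) 1, f z ≠ 0)
    -- `μ` is the Riesz measure of `log|f|`: the sum of unit point masses at the
    -- zeros of `f` counted with multiplicity
    (hμ : ∀ M : Set ℂ, MeasurableSet M →
      μ M = ∑' z : ↥(M ∩ Metric.ball (0 : ℂ) 1),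
        (ENat.toENNReal (analyticOrderAt f z.1)))
    (hμfin : ∫⁻ ζ in Metric.ball (0 : ℂ) 1, ENNReal.ofReal (1 - ‖ζ‖) ∂μ < ⊤)
    -- `ψ` is a finite positive Borel measure on `[0,2π)`
    (hψ : ψ (Set.Ico (0 : ℝ) (2 * Real.pi))ᶜ = 0)
    -- representation of `log|f|` off the zero set of `f`
    (hrep : ∀ z ∈ Metric.ball (0 : ℂ) 1, f z ≠ 0 →
      Real.log (‖f z‖) =
        (∫ ζ in Metric.ball (0 : ℂ) 1,
          Real.log (‖z - ζ‖ / ‖1 - z * (starRingEnd ℂ) ζ‖) ∂μ) -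
        (1 / (2 * Real.pi)) *
          (∫ θ, (1 - ‖z‖ ^ 2) / ‖Complex.exp (θ * Complex.I) - z‖ ^ 2 ∂ψ)
        + C)
    -- `λ` is the complete measure of `log|f|`
    (hlam : ∀ M : Set ℂ, MeasurableSet M →
      lam M = (∫⁻ ζ in Metric.ball (0 : ℂ) 1 ∩ M, ENNReal.ofReal (1 - ‖ζ‖) ∂μ) +
        ψ ((fun θ : ℝ => Complex.exp (θ * Complex.I)) ⁻¹' (M ∩ Metric.sphere (0 : ℂ) 1))) :
    (∃ C₁ : ℝ, ∃ r₀ ∈ Set.Ico (0 : ℝ) 1, ∀ r ∈ Set.Ioo r₀ 1,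
        mpMean p r (fun z => Real.log (‖f z‖)) ≤ C₁ * (1 - r) ^ (γ - 1)) ↔
      (∃ C₂ : ℝ, ∀ δ ∈ Set.Ioo (0 : ℝ) 1,
        (∫ φ in (0 : ℝ)..(2 * Real.pi), (lam (carlesonBox φ δ)).toReal ^ p) ^ (1 / p) ≤
          C₂ * δ ^ γ) := by
  have hpi := Real.pi_pos
  have hp0 : 0 < p := by linarith
  have hm := ae_m μ
  have := sfinite_m μ hμfin
  have := finite_mw μ hμfin
  have hle := lam_eq μ ψ lam hlam
  have hfinlam : IsFiniteMeasure lam := by rw [hle]; infer_instance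
  have hr := fun (r : ℝ) (hr0 : 0 < r) (hr1 : r < 1) => rep_circle f μ ψ C hrep hr0 hr1
  have hmz : ∀ z ∈ Metric.ball (0 : ℂ) 1, f z ≠ 0 →
      (μ.restrict (Metric.ball (0 : ℂ) 1)) {z} = 0 := by
    intro z hz hfz
    refine le_antisymm ((Measure.restrict_le_self _).trans ?_) zero_le
    rw [hμ _ (measurableSet_singleton z)]
    refine le_of_eq (ENNReal.tsum_eq_zero.2 ?_)
    rintro ⟨y, hy, -⟩
    rw [Set.mem_singleton_iff] at hy
    subst hy
    simp [(hf y hz).analyticOrderAt_eq_zero.2 hfz]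
  set m := μ.restrict (Metric.ball (0 : ℂ) 1) with hmdef
  set T := 2 * Real.pi * (lam Set.univ).toReal ^ p with hT
  have hT0 : 0 ≤ T := by positivity
  have hB0 : ∀ s, 0 ≤ ∫ φ in (0 : ℝ)..(2 * Real.pi), (lam (carlesonBox φ s)).toReal ^ p := by
    intro s
    apply intervalIntegral.integral_nonneg (by positivity)
    intro φ _; positivity
  constructor
  · rintro ⟨C₁, r₀, ⟨hr00, hr01⟩, hC₁⟩
    set δ₀ := min (1 - r₀) (1 / 30) with hδ₀
    have hδ₀0 : 0 < δ₀ := lt_min (by linarith) (by norm_num)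
    set E := (72 * Real.pi) ^ p * 3 ^ p *
        (2 * Real.pi * |C₁| ^ p + |C| ^ p * (2 * Real.pi)) with hE
    have hE0 : 0 ≤ E := by positivity
    refine ⟨(E + T / δ₀ ^ (γ * p)) ^ (1 / p), fun δ hδ => ?_⟩
    obtain ⟨h0, h1⟩ := hδ
    apply rpow_trans' hp (hB0 δ) (by positivity) h0
    by_cases hc : δ < δ₀
    · have hc1 : δ < 1 - r₀ := hc.trans_le (min_le_left _ _)
      have hc2 : δ ≤ 1 / 30 := hc.le.trans (min_le_right _ _)
      have hmean := hC₁ (1 - δ) ⟨by linarith, by linarith⟩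
      rw [sub_sub_cancel] at hmean
      have h2 := box_of_mean f m lam ψ C hγ1 hp hf hf0 hm hmz hle hr h0 hc2 hmean
      rw [box_integral lam hp, ENNReal.ofReal_le_ofReal_iff (by positivity)] at h2
      refine h2.trans ?_
      gcongr
      exact le_add_of_nonneg_right (by positivity)
    · rw [not_lt] at hc
      have h2 := box_trivial lam hp δ
      rw [box_integral lam hp, ENNReal.ofReal_le_ofReal_iff (by positivity)] at h2
      refine h2.trans ?_
      have h3 : δ₀ ^ (γ * p) ≤ δ ^ (γ * p) := Real.rpow_le_rpow hδ₀0.le hc (by positivity)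
      have h4 : T ≤ T / δ₀ ^ (γ * p) * δ ^ (γ * p) := by
        rw [div_mul_eq_mul_div, le_div_iff₀ (by positivity)]
        gcongr
      have h5 : 0 ≤ E * δ ^ (γ * p) := by positivity
      rw [← hT]
      linarith
  · rintro ⟨C₂, hC₂⟩
    set D := |C₂| ^ p + T with hDdef
    have hD : 0 ≤ D := by positivity
    have hL : ∀ s : ℝ, 0 < s → ∫⁻ φ in Set.Ioc 0 (2 * Real.pi), lam (carlesonBox φ s) ^ p
        ≤ ENNReal.ofReal (D * s ^ (γ * p)) := by
      intro s hs
      by_cases hs1 : s < 1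
      · rw [box_integral lam hp]
        apply ENNReal.ofReal_le_ofReal
        refine (rpow_trans hp (hB0 s) hs (hC₂ s ⟨hs, hs1⟩)).trans ?_
        gcongr
        exact le_add_of_nonneg_right hT0
      · refine (box_trivial lam hp s).trans (ENNReal.ofReal_le_ofReal ?_)
        have h3 : 1 ≤ s ^ (γ * p) := Real.one_le_rpow (not_lt.1 hs1) (by positivity)
        calc T ≤ D := le_add_of_nonneg_left (by positivity)
          _ ≤ _ := le_mul_of_one_le_right hD h3
    refine ⟨(upc p C D) ^ (1 / p), 29 / 30, ⟨by norm_num, by norm_num⟩, fun r hrr => ?_⟩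
    obtain ⟨h1, h2⟩ := hrr
    have hU := upc_nonneg (C := C) hp hD
    have h3 := mean_lintegral f m lam ψ C hγ1 hp hm hle hr hD hL
      (δ := 1 - r) (by linarith) (by linarith)
    rw [sub_sub_cancel] at h3
    have hr' : 0 < 1 - r := by linarith
    obtain ⟨h4, h5⟩ := mean_of_lintegral f hp (by positivity) h3
    exact rpow_trans' hp h4 hU hr' h5
end
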